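/- Let $K$ be an algebraically closed field and let $\Gamma$ be a finite tree with a fixed cyclic ordering of the edges around each vertex (a Brauer tree of multiplicity one). Let $Q$ be the quiver whose vertices are the edges of $\Gamma$ and which has, for each edge $i$ and each end point $c$ of $i$, an arrow from $i$ to the edge that follows $i$ in the cyclic ordering around $c$ (a loop if $c$ is a leaf); thus $Q$ is a union of oriented cycles, one for each vertex of $\Gamma$, and each vertex of $Q$ lies on exactly two of them. Let $A=KQ/I$ be the basic Brauer tree algebra, where $I$ is generated by the products of two consecutive arrows belonging to different cycles and, for each vertex $i$ of $Q$, by the difference of the two paths that start at $i$ and run once around one of the two cycles through $i$. Here $ab$ denotes the path $a$ followed by $b$, modules are left modules, and $Ae_i$ is the indecomposable projective module of the vertex $i$. An $A$-cycle is a maximal ordered set of nonrepeating arrows of $Q$ such that the product in $A$ of any two neighbouring arrows is nonzero (the loops at the leaves are included); a vertex of $Q$ belongs to an $A$-cycle if it is the starting vertex of one of its arrows. A bounded complex $T$ of finitely generated projective $A$-modules is partial tilting if $\operatorname{Hom}_{D^b(A)}(T,T[k])=0$ for all $k\neq 0$. Let $T_i=(P_0\xrightarrow{f}P_1)$, in degrees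 $0$ and $1$, be the minimal projective presentation of an indecomposable nonprojective $A$-module, with $P_0=\bigoplus_{p\in I}Ae_p$ and $P_1=\bigoplus_{q\in J}Ae_q$. Its diagram on $Q$ consists of the vertices in $I$ (the sources), the vertices in $J$ (the sinks), and, for all $p\in I$, $q\in J$ such that the component $Ae_p\to Ae_q$ of $f$ is nonzero, the vertices on the directed path from $p$ to $q$ along their common $A$-cycle; these are the vertices of $T_i$. A degree-one source of $T_i$ is a source $p$ for which exactly one component $Ae_p\to Ae_q$ of $f$ is nonzero, i.e. a source that is an end point of the diagram. Let $P=Ae_j$ be the stalk complex, concentrated in degree $0$, of the indecomposable projective module of the vertex $j$, and suppose that $T_i\oplus P$ is a partial tilting complex. Then $\operatorname{Hom}_{K^b(A)}(T_i,P)\neq 0$, where $K^b(A)$ is the bounded homotopy category of finitely generated projective $A$-modules, if and only if there are an $A$-cycle $\Upsilon$ and a degree-one source $s$ of $T_i$ such that $s$ and $j$ both belong to $\Upsilon$ and $s$ is the only vertex of $T_i$ belonging to $\Upsilon$ (the case $j=s$ is included). -/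

import Mathlib

open CategoryTheory CategoryTheory.Limits

universe w v u

/-- A Brauer tree (of multiplicity one) on the finite vertex set `V`: a tree together with a cyclic
ordering of the edges around each vertex. A dart `d` is an edge `d.edge` together with one of its
end points `d.fst`; `next d` is the edge that follows `d` in the cyclic ordering around `d.fst`, and
`next_cyclic` says that the darts at a vertex form a single cycle of `next`. -/
structure BrauerTree (V : Type v) [Finite V] where
  graph : SimpleGraph V
  isTree : graph.IsTree
  next : Equiv.Perm graph.Dart
  next_fst : ∀ d, (next d).fst = d.fst
  next_cyclic : ∀ d d' : graph.Dart, d.fst = d'.fst → next.SameCycle d d'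

namespace BrauerTree

variable {V : Type v} [Finite V] (Γ : BrauerTree V)

/-- The edges of the Brauer tree, which are the vertices of its quiver. -/
def Edge : Type v := Γ.graph.edgeSet

instance : Finite Γ.Edge := inferInstanceAs (Finite Γ.graph.edgeSet)

noncomputable instance : Fintype Γ.Edge := Fintype.ofFinite _

/-- The arrows of the quiver: one arrow for each dart `d`, going from the edge of `d` to the edge of
`next d`. An edge that ends in a leaf of the tree carries a loop there, so that every vertex of
the quiver lies on exactly two of the oriented cycles. -/
abbrev Arrow : Type v := Γ.graph.Dart

/-- The edge underlying a dart; it is the starting vertex of the corresponding arrow. -/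
def edge (d : Γ.Arrow) : Γ.Edge := ⟨d.edge, d.edge_mem⟩

/-- Generators of the path algebra of the quiver: trivial paths and arrows. -/
inductive Gen : Type v
  | vertex (i : Γ.Edge) : Gen
  | arrow (d : Γ.Arrow) : Gen

variable (K : Type u) [Field K]

/-- The trivial path at `i` in the free algebra on the generators. -/
def preVertex (i : Γ.Edge) : FreeAlgebra K Γ.Gen := FreeAlgebra.ι K (Gen.vertex i)

/-- The arrow `d` in the free algebra on the generators. -/
def preArrow (d : Γ.Arrow) : FreeAlgebra K Γ.Gen := FreeAlgebra.ι K (Gen.arrow d)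

/-- The product of the arrows once around the oriented cycle through `d`, starting with `d`. -/
noncomputable def preCycle (d : Γ.Arrow) : FreeAlgebra K Γ.Gen :=
  ((List.range (Function.minimalPeriod Γ.next d)).map fun k => Γ.preArrow K (Γ.next^[k] d)).prod

/-- The defining relations of the Brauer tree algebra. The first five present the path algebra of
the quiver (the product `a * b` is the path `a` followed by `b`); `zero` says that the product of
two consecutive arrows from different cycles vanishes; `cycle` says that the two full cycles through
a vertex of the quiver coincide. -/
inductive Rel : FreeAlgebra K Γ.Gen → FreeAlgebra K Γ.Gen → Prop
  | idem (i : Γ.Edge) : Rel (Γ.preVertex K i * Γ.preVertex K i) (Γ.preVertex K i)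
  | orth (i j : Γ.Edge) (h : i ≠ j) : Rel (Γ.preVertex K i * Γ.preVertex K j) 0
  | one : Rel (∑ i : Γ.Edge, Γ.preVertex K i) 1
  | source (d : Γ.Arrow) : Rel (Γ.preVertex K (Γ.edge d) * Γ.preArrow K d) (Γ.preArrow K d)
  | target (d : Γ.Arrow) :
      Rel (Γ.preArrow K d * Γ.preVertex K (Γ.edge (Γ.next d))) (Γ.preArrow K d)
  | zero (d d' : Γ.Arrow) (h : Γ.edge d' = Γ.edge (Γ.next d)) (h' : d' ≠ Γ.next d) :
      Rel (Γ.preArrow K d * Γ.preArrow K d') 0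
  | cycle (d : Γ.Arrow) : Rel (Γ.preCycle K d) (Γ.preCycle K d.symm)

/-- The basic Brauer tree algebra `A` of `Γ` (with multiplicity one) over `K`. -/
def Alg : Type (max u v) := RingQuot (Γ.Rel K)

noncomputable instance : Ring (Γ.Alg K) := inferInstanceAs (Ring (RingQuot (Γ.Rel K)))

noncomputable instance : Algebra K (Γ.Alg K) := inferInstanceAs (Algebra K (RingQuot (Γ.Rel K)))

/-- The quotient map onto the Brauer tree algebra. -/
noncomputable def toAlg : FreeAlgebra K Γ.Gen →ₐ[K] Γ.Alg K := RingQuot.mkAlgHom K (Γ.Rel K)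

/-- The primitive idempotent `e_i` of `A`. -/
noncomputable def e (i : Γ.Edge) : Γ.Alg K := Γ.toAlg K (Γ.preVertex K i)

/-- The arrow `d` as an element of `A`. -/
noncomputable def a (d : Γ.Arrow) : Γ.Alg K := Γ.toAlg K (Γ.preArrow K d)

/-- The indecomposable projective left module `A e_i`. -/
noncomputable def Ae (i : Γ.Edge) : Submodule (Γ.Alg K) (Γ.Alg K) :=
  Submodule.span (Γ.Alg K) {Γ.e K i}

/-- An ordered set of nonrepeating arrows such that the product (in `A`) of any two neighboring
arrows is nonzero. -/
def IsNonzeroSeq (C : List Γ.Arrow) : Prop :=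
  C ≠ [] ∧ C.Nodup ∧ C.IsChain fun d d' => Γ.a K d * Γ.a K d' ≠ 0

/-- An `A`-cycle: a maximal ordered set of nonrepeating arrows such that the product of any two
neighboring arrows is nonzero. Since the arrows include the loops at the leaves of the tree, these
loops count as `A`-cycles, and every vertex of the quiver belongs to two `A`-cycles. -/
def IsACycle (C : List Γ.Arrow) : Prop :=
  Γ.IsNonzeroSeq K C ∧ ∀ C', Γ.IsNonzeroSeq K C' → C <:+: C' → C' = C

variable {Γ} in
/-- The vertex `i` of the quiver belongs to the cycle `C`. -/
def MemCycle (i : Γ.Edge) (C : List Γ.Arrow) : Prop := ∃ d ∈ C, Γ.edge d = i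

/-- `x` lies on the directed path from `i` to `j`: for `i ≠ j` with a common end point there is
exactly one dart `d` at `i` from which `j` is reached by `next`, and the path of the quiver from `i`
to `j` that is nonzero in `A` is `d, next d, …`, stopped as soon as `j` is reached. -/
def OnPath (i j x : Γ.Edge) : Prop :=
  ∃ (d : Γ.Arrow) (k : ℕ), Γ.edge d = i ∧ Γ.edge (Γ.next^[k] d) = j ∧
    (∀ m < k, Γ.edge (Γ.next^[m] d) ≠ j) ∧ ∃ l ≤ k, Γ.edge (Γ.next^[l] d) = x

/-- Left modules over `A`. -/
abbrev Mod : Type (max (u + 1) (v + 1)) := ModuleCat.{max u v} (Γ.Alg K)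

end BrauerTree

section Complexes

variable {R : Type u} [Ring R]

/-- A submodule `N` of `M` is superfluous if `N + L = M` implies `L = M`. -/
def IsSuperfluous {M : Type w} [AddCommGroup M] [Module R M] (N : Submodule R M) : Prop :=
  ∀ L : Submodule R M, N ⊔ L = ⊤ → L = ⊤

/-- A perfect complex: a bounded complex of finitely generated projective modules. -/
def IsPerfect (T : CochainComplex (ModuleCat.{u} R) ℤ) : Prop :=
  (∃ m n : ℤ, ∀ k, (k < m ∨ n < k) → IsZero (T.X k)) ∧
    ∀ k, Module.Finite R (T.X k) ∧ Module.Projective R (T.X k)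

/-- A perfect complex `T` is partial tilting if `Hom(T, T[i]) = 0` in the derived category for all
`i ≠ 0`. -/
def IsPartialTilting [HasDerivedCategory.{w} (ModuleCat.{u} R)]
    (T : CochainComplex (ModuleCat.{u} R) ℤ) : Prop :=
  IsPerfect T ∧ ∀ i : ℤ, i ≠ 0 →
    ∀ f : DerivedCategory.Q.obj T ⟶ (DerivedCategory.Q.obj T)⟦i⟧, f = 0

/-- The complex `T` (in degrees `0` and `1`) is a minimal projective presentation
`T⁰ → T¹ → M → 0` of `M`: `T¹ → M` and `T⁰ → ker (T¹ → M)` are projective covers. -/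
def IsMinimalPresentation (T : CochainComplex (ModuleCat.{u} R) ℤ) (M : ModuleCat.{u} R) : Prop :=
  IsPerfect T ∧ (∀ k : ℤ, k ≠ 0 → k ≠ 1 → IsZero (T.X k)) ∧
    ∃ π : T.X 1 ⟶ M, Function.Surjective π.hom ∧
      LinearMap.range (T.d 0 1).hom = LinearMap.ker π.hom ∧
      IsSuperfluous (LinearMap.ker π.hom) ∧ IsSuperfluous (LinearMap.ker (T.d 0 1).hom)

/-- `Hom(S, T) ≠ 0` in the homotopy category of complexes of modules. The bounded homotopy category
of finitely generated projective modules is a full subcategory of it. -/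
def HomotopyHomNonzero (S T : CochainComplex (ModuleCat.{u} R) ℤ) : Prop :=
  ∃ f : (HomotopyCategory.quotient (ModuleCat.{u} R) (ComplexShape.up ℤ)).obj S ⟶
    (HomotopyCategory.quotient (ModuleCat.{u} R) (ComplexShape.up ℤ)).obj T, f ≠ 0

end Complexes

namespace BrauerTree

variable {V : Type v} [Finite V] (Γ : BrauerTree V) (K : Type u) [Field K]

/-- `P` is (isomorphic to) the stalk complex concentrated in degree `0` of the indecomposable
projective module `A e_j` corresponding to the vertex `j`. -/
def IsStalkZero (P : CochainComplex (Γ.Mod K) ℤ) (j : Γ.Edge) : Prop :=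
  Nonempty (P ≅ (CochainComplex.singleFunctor (Γ.Mod K) 0).obj (ModuleCat.of _ (Γ.Ae K j)))

/-- Decompositions `T⁰ = ⨁ A e_i` and `T¹ = ⨁ A e_j` of the terms of a two-term complex. -/
structure Decomposition (T : CochainComplex (Γ.Mod K) ℤ) where
  m₀ : ℕ
  m₁ : ℕ
  src : Fin m₀ → Γ.Edge
  snk : Fin m₁ → Γ.Edge
  iso₀ : T.X 0 ≃ₗ[Γ.Alg K] (∀ p, Γ.Ae K (src p))
  iso₁ : T.X 1 ≃ₗ[Γ.Alg K] (∀ q, Γ.Ae K (snk q))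

namespace Decomposition

variable {Γ K} {T : CochainComplex (Γ.Mod K) ℤ} (D : Γ.Decomposition K T)

/-- The component of the differential `T⁰ → T¹` between two summands. -/
noncomputable def component (p : Fin D.m₀) (q : Fin D.m₁) :
    Γ.Ae K (D.src p) →ₗ[Γ.Alg K] Γ.Ae K (D.snk q) :=
  LinearMap.proj q ∘ₗ D.iso₁.toLinearMap ∘ₗ (T.d 0 1).hom ∘ₗ D.iso₀.symm.toLinearMap ∘ₗ
    LinearMap.single (Γ.Alg K) (fun p => Γ.Ae K (D.src p)) p

/-- `x` is a vertex of the diagram of `T`: it is a source or a sink (a marked vertex), or it lies on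
the path from a source to a sink between which the differential has a nonzero component. -/
def OnDiagram (x : Γ.Edge) : Prop :=
  (∃ p, D.src p = x) ∨ (∃ q, D.snk q = x) ∨
    ∃ p q, D.component p q ≠ 0 ∧ Γ.OnPath (D.src p) (D.snk q) x

/-- `x` is a degree-one source: a source that is an end point of the diagram, that is, exactly one
of the paths of the diagram starts there. -/
def IsDegreeOneSource (x : Γ.Edge) : Prop :=
  ∃ p, D.src p = x ∧ ∃! q, D.component p q ≠ 0

end Decomposition

end BrauerTree

set_option linter.unusedSectionVars false

namespace BrauerTree

variable {V : Type v} [Finite V] (Γ : BrauerTree V)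

/-- The vertex `c` of the tree is an end point of the edge `p`. -/
def Inc (p : Γ.Edge) (c : V) : Prop := c ∈ (Subtype.val p : Sym2 V)

variable {Γ}

theorem inc_edge_iff {d : Γ.Arrow} {c : V} : Γ.Inc (Γ.edge d) c ↔ c = d.fst ∨ c = d.snd := by
  rcases d with ⟨⟨x, y⟩, h⟩
  exact Sym2.mem_iff

theorem inc_edge_fst (d : Γ.Arrow) : Γ.Inc (Γ.edge d) d.fst := inc_edge_iff.2 (Or.inl rfl)

theorem inc_edge_snd (d : Γ.Arrow) : Γ.Inc (Γ.edge d) d.snd := inc_edge_iff.2 (Or.inr rfl)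

theorem edge_symm (d : Γ.Arrow) : Γ.edge d.symm = Γ.edge d :=
  Subtype.ext d.edge_symm

theorem exists_dart_edge (p : Γ.Edge) : ∃ d : Γ.Arrow, Γ.edge d = p := by
  obtain ⟨p, hp⟩ := p
  induction p using Sym2.ind with
  | _ x y => exact ⟨⟨(x, y), hp⟩, rfl⟩

theorem Inc.exists_dart {p : Γ.Edge} {c : V} (h : Γ.Inc p c) :
    ∃ d : Γ.Arrow, d.fst = c ∧ Γ.edge d = p := by
  obtain ⟨d, rfl⟩ := exists_dart_edge p
  rcases inc_edge_iff.1 h with h | h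
  · exact ⟨d, h.symm, rfl⟩
  · exact ⟨d.symm, h.symm, edge_symm d⟩

theorem edge_eq_iff {d d' : Γ.Arrow} : Γ.edge d = Γ.edge d' ↔ d = d' ∨ d = d'.symm := by
  rw [← SimpleGraph.dart_edge_eq_iff]
  exact Subtype.ext_iff

theorem dart_eq_of_fst_eq {d d' : Γ.Arrow} (h : d.fst = d'.fst) (he : Γ.edge d = Γ.edge d') :
    d = d' := by
  rcases edge_eq_iff.1 he with h' | h'
  · exact h'
  · subst h'
    exact absurd h d'.snd_ne_fst

variable (Γ) in
/-- A sign on the vertices of the tree which alternates along edges. -/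
noncomputable def sgn (c : V) : ℤ := if Γ.isTree.isBipartite.some c = 0 then 1 else -1

theorem sgn_mul_self (c : V) : Γ.sgn c * Γ.sgn c = 1 := by
  unfold sgn; split_ifs <;> rfl

theorem sgn_fst (d : Γ.Arrow) : Γ.sgn d.fst = - Γ.sgn d.snd := by
  have h := Γ.isTree.isBipartite.some.valid d.adj
  unfold sgn
  have h2 : ∀ a b : Fin 2, a ≠ b → (if a = 0 then (1 : ℤ) else -1) = -(if b = 0 then 1 else -1) := by
    decide
  exact h2 _ _ h

theorem sgn_eq_neg {p : Γ.Edge} {c c' : V} (hcc : c ≠ c') (hc : Γ.Inc p c) (hc' : Γ.Inc p c') :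
    Γ.sgn c = - Γ.sgn c' := by
  obtain ⟨d, rfl, rfl⟩ := hc.exists_dart
  rcases inc_edge_iff.1 hc' with h | h
  · exact absurd h.symm hcc
  · rw [h, sgn_fst]

variable (Γ) in
/-- The number of edges around the first vertex of a dart. -/
noncomputable def len (d : Γ.Arrow) : ℕ := Function.minimalPeriod Γ.next d

instance : Finite Γ.Arrow := Finite.of_injective _ SimpleGraph.Dart.toProd_injective

theorem mem_periodicPts (d : Γ.Arrow) : d ∈ Function.periodicPts Γ.next :=
  Γ.next.injective.mem_periodicPts d

theorem len_pos (d : Γ.Arrow) : 0 < Γ.len d :=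
  Function.minimalPeriod_pos_of_mem_periodicPts (mem_periodicPts d)

theorem iterate_len (d : Γ.Arrow) : Γ.next^[Γ.len d] d = d :=
  Function.iterate_minimalPeriod

theorem iterate_fst (d : Γ.Arrow) (k : ℕ) : (Γ.next^[k] d).fst = d.fst := by
  induction k with
  | zero => rfl
  | succ k ih => rw [Function.iterate_succ_apply', Γ.next_fst, ih]

theorem exists_iterate_eq {d d' : Γ.Arrow} (h : d.fst = d'.fst) :
    ∃ k < Γ.len d, Γ.next^[k] d = d' := by
  obtain ⟨i, -, hi⟩ := (Γ.next_cyclic d d' h).exists_pow_eq'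
  refine ⟨i % Γ.len d, Nat.mod_lt _ (len_pos d), ?_⟩
  rw [len, Function.iterate_mod_minimalPeriod_eq, Equiv.Perm.iterate_eq_pow, hi]

theorem len_iterate (d : Γ.Arrow) (k : ℕ) : Γ.len (Γ.next^[k] d) = Γ.len d :=
  Function.minimalPeriod_apply_iterate (mem_periodicPts d) k

theorem len_eq {d d' : Γ.Arrow} (h : d.fst = d'.fst) : Γ.len d = Γ.len d' := by
  obtain ⟨k, -, rfl⟩ := exists_iterate_eq h
  rw [len_iterate]

theorem iterate_inj {d : Γ.Arrow} {k l : ℕ} (hk : k < Γ.len d) (hl : l < Γ.len d)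
    (h : Γ.next^[k] d = Γ.next^[l] d) : k = l :=
  (Function.iterate_injOn_Iio_minimalPeriod) hk hl h

variable (Γ) in
/-- A chosen dart at the first vertex of `d`. -/
noncomputable def root (d : Γ.Arrow) : Γ.Arrow :=
  (⟨d, rfl⟩ : ∃ d' : Γ.Arrow, d'.fst = d.fst).choose

theorem root_fst (d : Γ.Arrow) : (Γ.root d).fst = d.fst :=
  (⟨d, rfl⟩ : ∃ d' : Γ.Arrow, d'.fst = d.fst).choose_spec

theorem root_eq {d d' : Γ.Arrow} (h : d.fst = d'.fst) : Γ.root d = Γ.root d' := by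
  unfold root
  congr 1
  rw [h]

variable (Γ) in
/-- The position of a dart in the cyclic ordering, counted from the chosen dart. -/
noncomputable def pos (d : Γ.Arrow) : ℕ := (exists_iterate_eq (root_fst d)).choose

theorem pos_lt (d : Γ.Arrow) : Γ.pos d < Γ.len d :=
  (exists_iterate_eq (root_fst d)).choose_spec.1.trans_eq (len_eq (root_fst d))

theorem iterate_pos (d : Γ.Arrow) : Γ.next^[Γ.pos d] (Γ.root d) = d :=
  (exists_iterate_eq (root_fst d)).choose_spec.2

theorem pos_iterate_root (d : Γ.Arrow) {k : ℕ} (hk : k < Γ.len d) :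
    Γ.pos (Γ.next^[k] (Γ.root d)) = k := by
  have hf : (Γ.next^[k] (Γ.root d)).fst = d.fst := by rw [iterate_fst, root_fst]
  have h1 := iterate_pos (Γ.next^[k] (Γ.root d))
  rw [root_eq hf] at h1
  refine iterate_inj ?_ ?_ h1
  · exact (pos_lt _).trans_eq (len_eq (hf.trans (root_fst d).symm))
  · exact hk.trans_eq (len_eq (root_fst d).symm)

theorem pos_inj {d d' : Γ.Arrow} (h : d.fst = d'.fst) (hp : Γ.pos d = Γ.pos d') : d = d' := by
  rw [← iterate_pos d, ← iterate_pos d', root_eq h, hp]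

theorem pos_next (d : Γ.Arrow) (h : Γ.pos d + 1 < Γ.len d) : Γ.pos (Γ.next d) = Γ.pos d + 1 := by
  conv_lhs => rw [← iterate_pos d, ← Function.iterate_succ_apply' Γ.next]
  exact pos_iterate_root d h

theorem pos_next_last (d : Γ.Arrow) (h : Γ.pos d + 1 = Γ.len d) : Γ.pos (Γ.next d) = 0 := by
  conv_lhs => rw [← iterate_pos d, ← Function.iterate_succ_apply' Γ.next]
  rw [Nat.succ_eq_add_one, h, ← len_eq (root_fst d), iterate_len]
  exact pos_iterate_root (k := 0) d (len_pos d)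

variable (Γ) in
open Classical in
/-- The position of an edge in the ordering around one of its end points. -/
noncomputable def rk (c : V) (p : Γ.Edge) : ℕ :=
  if h : ∃ d : Γ.Arrow, d.fst = c ∧ Γ.edge d = p then Γ.pos h.choose else 0

theorem rk_edge (d : Γ.Arrow) : Γ.rk d.fst (Γ.edge d) = Γ.pos d := by
  have h : ∃ d' : Γ.Arrow, d'.fst = d.fst ∧ Γ.edge d' = Γ.edge d := ⟨d, rfl, rfl⟩
  rw [rk, dif_pos h, dart_eq_of_fst_eq h.choose_spec.1 h.choose_spec.2]

theorem rk_inj {c : V} {p q : Γ.Edge} (hp : Γ.Inc p c) (hq : Γ.Inc q c)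
    (h : Γ.rk c p = Γ.rk c q) : p = q := by
  obtain ⟨d, rfl, rfl⟩ := hp.exists_dart
  obtain ⟨d', h', rfl⟩ := hq.exists_dart
  rw [rk_edge, ← h', rk_edge] at h
  rw [pos_inj h'.symm h]

end BrauerTree

namespace BrauerTree

open PowerSeries Classical

variable {V : Type v} [Finite V] (Γ : BrauerTree V) (K : Type u) [Field K]

noncomputable instance : Fintype Γ.Arrow := Fintype.ofFinite _

/-- An order over `K⟦X⟧` whose reduction modulo `X` is the Brauer tree algebra: matrices over
`K⟦X⟧`, indexed by the darts and block diagonal with one block for each vertex of the tree. The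
entries below the diagonal of a block are divisible by `X`, and the two diagonal entries that belong
to the same edge are congruent modulo `X`. -/
noncomputable def order : Subalgebra K (Matrix Γ.Arrow Γ.Arrow K⟦X⟧) where
  carrier := {Y | (∀ d d', d.fst ≠ d'.fst → Y d d' = 0) ∧
    (∀ d d', Γ.pos d' < Γ.pos d → (X : K⟦X⟧) ∣ Y d d') ∧
    ∀ d : Γ.Arrow, (X : K⟦X⟧) ∣ Y d d - Y d.symm d.symm}
  add_mem' := by
    rintro Y Z ⟨h1, h2, h3⟩ ⟨k1, k2, k3⟩
    refine ⟨fun d d' h => ?_, fun d d' h => ?_, fun d => ?_⟩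
    · rw [Matrix.add_apply, h1 d d' h, k1 d d' h, add_zero]
    · exact dvd_add (h2 d d' h) (k2 d d' h)
    · simpa only [Matrix.add_apply, add_sub_add_comm] using dvd_add (h3 d) (k3 d)
  mul_mem' := by
    rintro Y Z ⟨h1, h2, h3⟩ ⟨k1, k2, k3⟩
    have key : ∀ d d', (X : K⟦X⟧) ∣ if d' = d then 0 else Y d d' * Z d' d := by
      intro d d'
      split_ifs with h
      · exact dvd_zero _
      · by_cases hf : d.fst = d'.fst
        · rcases lt_or_gt_of_ne (fun h' => h (pos_inj hf h').symm) with hlt | hlt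
          · exact Dvd.dvd.mul_left (k2 _ _ hlt) _
          · exact Dvd.dvd.mul_right (h2 _ _ hlt) _
        · rw [h1 _ _ hf, zero_mul]
          exact dvd_zero _
    have key2 : ∀ d, (X : K⟦X⟧) ∣ (Y * Z) d d - Y d d * Z d d := by
      intro d
      have h : (Y * Z) d d - Y d d * Z d d = ∑ d', if d' = d then 0 else Y d d' * Z d' d := by
        rw [Matrix.mul_apply, ← Finset.add_sum_erase _ _ (Finset.mem_univ d), add_sub_cancel_left,
          ← Finset.sum_erase (s := Finset.univ) (a := d) (f := fun d' => if d' = d then 0 else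
            Y d d' * Z d' d) (if_pos rfl)]
        exact Finset.sum_congr rfl fun x hx => (if_neg (Finset.ne_of_mem_erase hx)).symm
      rw [h]
      exact Finset.dvd_sum fun d' _ => key d d'
    refine ⟨fun d d' h => ?_, fun d d' h => ?_, fun d => ?_⟩
    · rw [Matrix.mul_apply]
      refine Finset.sum_eq_zero fun x _ => ?_
      by_cases hx : d.fst = x.fst
      · rw [k1 x d' (fun h' => h (hx.trans h')), mul_zero]
      · rw [h1 d x hx, zero_mul]
    · rw [Matrix.mul_apply]
      refine Finset.dvd_sum fun x _ => ?_
      rcases lt_or_ge (Γ.pos x) (Γ.pos d) with hx | hx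
      · exact Dvd.dvd.mul_right (h2 _ _ hx) _
      · exact Dvd.dvd.mul_left (k2 _ _ (h.trans_le hx)) _
    · have e : (Y * Z) d d - (Y * Z) d.symm d.symm = ((Y * Z) d d - Y d d * Z d d) -
          ((Y * Z) d.symm d.symm - Y d.symm d.symm * Z d.symm d.symm) +
          ((Y d d - Y d.symm d.symm) * Z d d + Y d.symm d.symm * (Z d d - Z d.symm d.symm)) := by
        ring
      rw [e]
      exact dvd_add (dvd_sub (key2 d) (key2 _))
        (dvd_add (Dvd.dvd.mul_right (h3 d) _) (Dvd.dvd.mul_left (k3 d) _))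
  algebraMap_mem' := by
    intro r
    refine ⟨fun d d' h => ?_, fun d d' h => ?_, fun d => ?_⟩
    · rw [Matrix.algebraMap_matrix_apply, if_neg (fun h' => h (by rw [h']))]
    · rw [Matrix.algebraMap_matrix_apply, if_neg (fun h' => h.ne (by rw [h']))]
      exact dvd_zero _
    · simp [Matrix.algebraMap_matrix_apply]

variable {Γ K}

theorem X_smul_mem_order {Y : Matrix Γ.Arrow Γ.Arrow K⟦X⟧} (hY : Y ∈ Γ.order K) :
    (X : K⟦X⟧) • Y ∈ Γ.order K := by
  obtain ⟨h1, h2, h3⟩ := hY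
  refine ⟨fun d d' h => ?_, fun d d' h => ?_, fun d => ?_⟩
  · rw [Matrix.smul_apply, h1 d d' h, smul_zero]
  · exact Dvd.intro _ rfl
  · rw [Matrix.smul_apply, Matrix.smul_apply, ← smul_sub]
    exact Dvd.intro _ rfl

variable (Γ K) in
/-- The ideal of the order that is generated by `X`. -/
noncomputable def orderIdeal : Ideal (Γ.order K) where
  carrier := {Y | ∃ Z ∈ Γ.order K, (Y : Matrix Γ.Arrow Γ.Arrow K⟦X⟧) = (X : K⟦X⟧) • Z}
  add_mem' := by
    rintro _ _ ⟨Z, hZ, h⟩ ⟨Z', hZ', h'⟩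
    refine ⟨Z + Z', add_mem hZ hZ', ?_⟩
    rw [smul_add, ← h, ← h']; rfl
  zero_mem' := ⟨0, zero_mem _, by simp⟩
  smul_mem' := by
    rintro c _ ⟨Z, hZ, h⟩
    refine ⟨c * Z, mul_mem c.2 hZ, ?_⟩
    rw [← Matrix.mul_smul, ← h]; rfl

instance : (Γ.orderIdeal K).IsTwoSided where
  mul_mem_of_left := by
    rintro _ c ⟨Z, hZ, h⟩
    refine ⟨Z * c, mul_mem hZ c.2, ?_⟩
    rw [← Matrix.smul_mul, ← h]; rfl

variable (Γ K) in
/-- The coefficient with which an arrow acts: the arrow that closes the cycle carries `X`. -/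
noncomputable def arrowCoeff (d : Γ.Arrow) : K⟦X⟧ :=
  if Γ.pos d + 1 = Γ.len d then (Γ.sgn d.fst : K⟦X⟧) * X else 1

theorem single_mem_order {d d' : Γ.Arrow} {y : K⟦X⟧} (hf : d.fst = d'.fst)
    (hp : Γ.pos d' ≤ Γ.pos d → X ∣ y) : Matrix.single d d' y ∈ Γ.order K := by
  have hdiag : ∀ x : Γ.Arrow, X ∣ Matrix.single d d' y x x := by
    intro x
    rw [Matrix.single_apply]
    split_ifs with h
    · exact hp (by rw [h.1, h.2])
    · exact dvd_zero _
  refine ⟨fun x x' h => ?_, fun x x' h => ?_, fun x => dvd_sub (hdiag _) (hdiag _)⟩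
  · rw [Matrix.single_apply, if_neg]
    rintro ⟨rfl, rfl⟩
    exact h hf
  · rw [Matrix.single_apply]
    split_ifs with h'
    · obtain ⟨rfl, rfl⟩ := h'
      exact hp h.le
    · exact dvd_zero _

theorem X_dvd_arrowCoeff {d : Γ.Arrow} (h : Γ.pos (Γ.next d) ≤ Γ.pos d) :
    X ∣ Γ.arrowCoeff K d := by
  unfold arrowCoeff
  split_ifs with h'
  · exact Dvd.intro_left _ rfl
  · have := pos_next d (lt_of_le_of_ne (pos_lt d) h')
    omega

variable (Γ K) in
/-- The arrow `d` in the order. -/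
noncomputable def orderArrow (d : Γ.Arrow) : Γ.order K :=
  ⟨Matrix.single d (Γ.next d) (Γ.arrowCoeff K d),
    single_mem_order (Γ.next_fst d).symm X_dvd_arrowCoeff⟩

theorem diagonal_mem_order (i : Γ.Edge) :
    Matrix.diagonal (fun d => if Γ.edge d = i then (1 : K⟦X⟧) else 0) ∈ Γ.order K := by
  refine ⟨fun x x' h => ?_, fun x x' h => ?_, fun x => ?_⟩
  · rw [Matrix.diagonal_apply_ne _ (fun h' => h (by rw [h']))]
  · rw [Matrix.diagonal_apply_ne _ (fun h' => h.ne (by rw [h']))]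
    exact dvd_zero _
  · simp [edge_symm]

variable (Γ K) in
/-- The idempotent of the edge `i` in the order. -/
noncomputable def orderVertex (i : Γ.Edge) : Γ.order K :=
  ⟨Matrix.diagonal (fun d => if Γ.edge d = i then 1 else 0), diagonal_mem_order i⟩

variable (Γ K) in
/-- The map from the free algebra to the order. -/
noncomputable def preOrder : FreeAlgebra K Γ.Gen →ₐ[K] Γ.order K :=
  FreeAlgebra.lift K fun
    | Gen.vertex i => Γ.orderVertex K i
    | Gen.arrow d => Γ.orderArrow K d

@[simp] theorem preOrder_vertex (i : Γ.Edge) :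
    Γ.preOrder K (Γ.preVertex K i) = Γ.orderVertex K i := by
  simp [preOrder, preVertex]

@[simp] theorem preOrder_arrow (d : Γ.Arrow) :
    Γ.preOrder K (Γ.preArrow K d) = Γ.orderArrow K d := by
  simp [preOrder, preArrow]

variable (Γ K) in
/-- The coefficient of the path of length `k` that starts with `d`. -/
noncomputable def pathCoeff (d : Γ.Arrow) (k : ℕ) : K⟦X⟧ :=
  ∏ m ∈ Finset.range k, Γ.arrowCoeff K (Γ.next^[m] d)

theorem pathCoeff_succ (d : Γ.Arrow) (k : ℕ) :
    Γ.pathCoeff K d (k + 1) = Γ.pathCoeff K d k * Γ.arrowCoeff K (Γ.next^[k] d) :=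
  Finset.prod_range_succ _ _

theorem pathCoeff_eq (d : Γ.Arrow) {k : ℕ} (hk : k ≤ Γ.len d) :
    (Γ.pos d + k < Γ.len d → Γ.pathCoeff K d k = 1 ∧ Γ.pos (Γ.next^[k] d) = Γ.pos d + k) ∧
    (Γ.len d ≤ Γ.pos d + k → Γ.pathCoeff K d k = (Γ.sgn d.fst : K⟦X⟧) * X ∧
      Γ.pos (Γ.next^[k] d) + Γ.len d = Γ.pos d + k) := by
  induction k with
  | zero =>
    have := pos_lt d
    exact ⟨fun _ => ⟨rfl, rfl⟩, fun h => by omega⟩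
  | succ k ih =>
    obtain ⟨h1, h2⟩ := ih (by omega)
    have hlen := len_iterate d k
    have hfst := iterate_fst d k
    have hpos := pos_lt d
    rw [pathCoeff_succ, Function.iterate_succ_apply']
    constructor
    · intro h
      obtain ⟨h3, h4⟩ := h1 (by omega)
      rw [h3, arrowCoeff, if_neg (by omega), pos_next _ (by omega)]
      exact ⟨one_mul _, by omega⟩
    · intro h
      rcases lt_or_ge (Γ.pos d + k) (Γ.len d) with h' | h'
      · obtain ⟨h3, h4⟩ := h1 h'
        rw [h3, arrowCoeff, if_pos (by omega), pos_next_last _ (by omega), hfst]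
        exact ⟨one_mul _, by omega⟩
      · obtain ⟨h3, h4⟩ := h2 h'
        rw [h3, arrowCoeff, if_neg (by omega), pos_next _ (by omega)]
        exact ⟨mul_one _, by omega⟩

variable (Γ K) in
/-- The path of length `k` that starts with `d`, as an element of the free algebra. -/
noncomputable def prePath (d : Γ.Arrow) (k : ℕ) : FreeAlgebra K Γ.Gen :=
  ((List.range k).map fun m => Γ.preArrow K (Γ.next^[m] d)).prod

theorem prePath_succ (d : Γ.Arrow) (k : ℕ) :
    Γ.prePath K d (k + 1) = Γ.prePath K d k * Γ.preArrow K (Γ.next^[k] d) := by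
  simp [prePath, List.range_succ]

theorem preOrder_path (d : Γ.Arrow) {k : ℕ} (hk : 0 < k) :
    (Γ.preOrder K (Γ.prePath K d k) : Matrix Γ.Arrow Γ.Arrow K⟦X⟧) =
      Matrix.single d (Γ.next^[k] d) (Γ.pathCoeff K d k) := by
  induction k, hk using Nat.le_induction with
  | base => simp [prePath, pathCoeff, orderArrow]
  | succ k hk ih =>
    rw [prePath_succ, map_mul, preOrder_arrow, Subalgebra.coe_mul, ih, pathCoeff_succ,
      Function.iterate_succ_apply']
    exact Matrix.single_mul_single_same _ _ _ _ _

theorem preOrder_rel {x y : FreeAlgebra K Γ.Gen} (h : Γ.Rel K x y) :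
    Γ.preOrder K x - Γ.preOrder K y ∈ Γ.orderIdeal K := by
  have aux : ∀ {a b : Γ.order K}, a = b → a - b ∈ Γ.orderIdeal K := by
    rintro a _ rfl
    rw [sub_self]
    exact zero_mem _
  cases h with
  | idem i =>
    apply aux
    rw [map_mul]
    ext1
    simp [orderVertex]
  | orth i j h =>
    apply aux
    rw [map_mul, map_zero]
    ext1
    simp only [preOrder_vertex, orderVertex, Subalgebra.coe_mul, Matrix.diagonal_mul_diagonal,
      ZeroMemClass.coe_zero, Matrix.diagonal_eq_zero]
    funext d
    by_cases hd : Γ.edge d = i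
    · simp [hd, h]
    · simp [hd]
  | one =>
    apply aux
    rw [map_sum, map_one]
    ext1
    simp only [preOrder_vertex, orderVertex, AddSubmonoidClass.coe_finsetSum, OneMemClass.coe_one]
    ext d d'
    rw [Matrix.sum_apply]
    by_cases h : d = d'
    · subst h
      simp
    · simp [h]
  | source d =>
    apply aux
    rw [map_mul]
    ext1
    ext x x'
    by_cases hx : d = x
    · subst hx
      simp [orderVertex, orderArrow]
    · simp [orderVertex, orderArrow, hx]
  | target d =>
    apply aux
    rw [map_mul]
    ext1
    ext x x'
    by_cases hx : Γ.next d = x'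
    · subst hx
      simp [orderVertex, orderArrow]
    · simp [orderVertex, orderArrow, hx]
  | zero d d' h h' =>
    apply aux
    rw [map_mul, map_zero]
    ext1
    simp [orderArrow, Ne.symm h']
  | cycle d =>
    refine ⟨(Γ.sgn d.fst : K⟦X⟧) • Γ.orderVertex K (Γ.edge d), ?_, ?_⟩
    · rw [Int.cast_smul_eq_zsmul]
      exact zsmul_mem (Γ.orderVertex K (Γ.edge d)).2 _
    · have key : ∀ d : Γ.Arrow, (Γ.preOrder K (Γ.preCycle K d) : Matrix Γ.Arrow Γ.Arrow K⟦X⟧) =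
          Matrix.single d d ((Γ.sgn d.fst : K⟦X⟧) * X) := by
        intro d
        have h1 := preOrder_path (K := K) d (len_pos d)
        rw [iterate_len, ((pathCoeff_eq d le_rfl).2 (by omega)).1] at h1
        exact h1
      rw [Subalgebra.coe_sub, key, key]
      have hs : Γ.sgn d.symm.fst = - Γ.sgn d.fst := by
        rw [sgn_fst d, neg_neg]; rfl
      rw [hs, orderVertex]
      ext x x'
      have hsymm := d.symm_ne
      by_cases hx : x = x'
      · subst hx
        by_cases h1 : x = d
        · subst h1
          simp [hsymm, mul_comm]
        · by_cases h2 : x = d.symm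
          · subst h2
            simp [hsymm.symm, mul_comm, edge_symm]
          · simp [Ne.symm h1, Ne.symm h2, edge_eq_iff, h1, h2]
      · have h1 : ∀ y : Γ.Arrow, ¬ (y = x ∧ y = x') := fun y h => hx (h.1.symm.trans h.2)
        simp [h1, hx]

variable (Γ K) in
/-- The reduction modulo `X` of the order receives a map from the Brauer tree algebra. -/
noncomputable def toOrder : Γ.Alg K →ₐ[K] Γ.order K ⧸ Γ.orderIdeal K :=
  RingQuot.liftAlgHom K ⟨(Ideal.Quotient.mkₐ K (Γ.orderIdeal K)).comp (Γ.preOrder K),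
    fun _ _ h => Ideal.Quotient.eq.2 (preOrder_rel h)⟩

theorem toOrder_toAlg (x : FreeAlgebra K Γ.Gen) :
    Γ.toOrder K (Γ.toAlg K x) = Ideal.Quotient.mk _ (Γ.preOrder K x) :=
  RingQuot.liftAlgHom_mkAlgHom_apply _ _ _ _

end BrauerTree

namespace BrauerTree

open PowerSeries Classical

variable {V : Type v} [Finite V] {Γ : BrauerTree V} {K : Type u} [Field K]

theorem toAlg_surjective : Function.Surjective (Γ.toAlg K) :=
  RingQuot.mkAlgHom_surjective K (Γ.Rel K)

theorem toAlg_rel {x y : FreeAlgebra K Γ.Gen} (h : Γ.Rel K x y) : Γ.toAlg K x = Γ.toAlg K y :=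
  RingQuot.mkAlgHom_rel K h

theorem e_mul_self (i : Γ.Edge) : Γ.e K i * Γ.e K i = Γ.e K i := by
  rw [e, ← map_mul, toAlg_rel (Rel.idem i)]

theorem e_mul_ne {i j : Γ.Edge} (h : i ≠ j) : Γ.e K i * Γ.e K j = 0 := by
  rw [e, e, ← map_mul, toAlg_rel (Rel.orth i j h), map_zero]

theorem sum_e : ∑ i : Γ.Edge, Γ.e K i = 1 := by
  simp only [e]
  rw [← map_sum, toAlg_rel Rel.one, map_one]

theorem e_mul_a (d : Γ.Arrow) : Γ.e K (Γ.edge d) * Γ.a K d = Γ.a K d := by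
  rw [e, a, ← map_mul, toAlg_rel (Rel.source d)]

theorem a_mul_e (d : Γ.Arrow) : Γ.a K d * Γ.e K (Γ.edge (Γ.next d)) = Γ.a K d := by
  rw [e, a, ← map_mul, toAlg_rel (Rel.target d)]

theorem a_mul_a_eq_zero {d d' : Γ.Arrow} (h : d' ≠ Γ.next d) : Γ.a K d * Γ.a K d' = 0 := by
  by_cases he : Γ.edge d' = Γ.edge (Γ.next d)
  · rw [a, a, ← map_mul, toAlg_rel (Rel.zero d d' he h), map_zero]
  · rw [← a_mul_e d, ← e_mul_a d', mul_assoc, ← mul_assoc (Γ.e K _) (Γ.e K _),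
      e_mul_ne (Ne.symm he), zero_mul, mul_zero]

variable (Γ K) in
/-- The path of length `k` that starts with `d`, as an element of `A`. -/
noncomputable def path (d : Γ.Arrow) (k : ℕ) : Γ.Alg K := Γ.toAlg K (Γ.prePath K d k)

theorem path_zero (d : Γ.Arrow) : Γ.path K d 0 = 1 := by
  simp [path, prePath]

theorem path_succ (d : Γ.Arrow) (k : ℕ) :
    Γ.path K d (k + 1) = Γ.path K d k * Γ.a K (Γ.next^[k] d) := by
  rw [path, prePath_succ, map_mul]; rfl

theorem path_one (d : Γ.Arrow) : Γ.path K d 1 = Γ.a K d := by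
  rw [path_succ, path_zero, one_mul]; rfl

theorem path_len (d : Γ.Arrow) : Γ.path K d (Γ.len d) = Γ.path K d.symm (Γ.len d.symm) :=
  toAlg_rel (Rel.cycle d)

theorem path_mul_e {d : Γ.Arrow} {k : ℕ} (hk : 0 < k) :
    Γ.path K d k * Γ.e K (Γ.edge (Γ.next^[k] d)) = Γ.path K d k := by
  obtain ⟨k, rfl⟩ := Nat.exists_eq_succ_of_ne_zero hk.ne'
  rw [path_succ, mul_assoc, Function.iterate_succ_apply', a_mul_e]

theorem path_mul_a {d d' : Γ.Arrow} {k : ℕ} (hk : 0 < k) (h : d' ≠ Γ.next^[k] d) :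
    Γ.path K d k * Γ.a K d' = 0 := by
  obtain ⟨k, rfl⟩ := Nat.exists_eq_succ_of_ne_zero hk.ne'
  rw [Function.iterate_succ_apply'] at h
  rw [path_succ, mul_assoc, a_mul_a_eq_zero h, mul_zero]

theorem path_len_mul_a (d : Γ.Arrow) : Γ.path K d (Γ.len d) * Γ.a K d = 0 := by
  rw [path_len]
  refine path_mul_a (len_pos _) ?_
  rw [iterate_len]
  exact d.symm_ne.symm

variable (Γ K) in
/-- The trivial paths and the paths that run at most once around a cycle span `A`. -/
noncomputable def pathSpan : Submodule K (Γ.Alg K) :=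
  Submodule.span K (Set.range (Γ.e K) ∪ {z | ∃ d k, 0 < k ∧ k ≤ Γ.len d ∧ z = Γ.path K d k})

theorem e_mem_pathSpan (i : Γ.Edge) : Γ.e K i ∈ Γ.pathSpan K :=
  Submodule.subset_span (Or.inl ⟨i, rfl⟩)

theorem path_mem_pathSpan {d : Γ.Arrow} {k : ℕ} (hk : 0 < k) (hk' : k ≤ Γ.len d) :
    Γ.path K d k ∈ Γ.pathSpan K :=
  Submodule.subset_span (Or.inr ⟨d, k, hk, hk', rfl⟩)

theorem mul_gen_mem_pathSpan (g : Γ.Gen) {z : Γ.Alg K} (hz : z ∈ Γ.pathSpan K) :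
    z * Γ.toAlg K (FreeAlgebra.ι K g) ∈ Γ.pathSpan K := by
  refine Submodule.span_induction (p := fun z _ => z * Γ.toAlg K (FreeAlgebra.ι K g) ∈ Γ.pathSpan K)
    ?_ ?_ ?_ ?_ hz
  · rintro z (⟨i, rfl⟩ | ⟨d, k, hk, hk', rfl⟩)
    · cases g with
      | vertex j =>
        change Γ.e K i * Γ.e K j ∈ _
        by_cases h : i = j
        · rw [h, e_mul_self]; exact e_mem_pathSpan j
        · rw [e_mul_ne h]; exact zero_mem _
      | arrow d =>
        change Γ.e K i * Γ.a K d ∈ _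
        rw [← e_mul_a, ← mul_assoc]
        by_cases h : i = Γ.edge d
        · rw [h, e_mul_self, e_mul_a, ← path_one]
          exact path_mem_pathSpan one_pos (len_pos d)
        · rw [e_mul_ne h, zero_mul]; exact zero_mem _
    · cases g with
      | vertex j =>
        change Γ.path K d k * Γ.e K j ∈ _
        rw [← path_mul_e hk, mul_assoc]
        by_cases h : Γ.edge (Γ.next^[k] d) = j
        · rw [h, e_mul_self, ← h, path_mul_e hk]; exact path_mem_pathSpan hk hk'
        · rw [e_mul_ne h, mul_zero]; exact zero_mem _
      | arrow d' =>
        change Γ.path K d k * Γ.a K d' ∈ _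
        by_cases h : d' = Γ.next^[k] d
        · rcases hk'.lt_or_eq with h' | h'
          · rw [h, ← path_succ]
            exact path_mem_pathSpan k.succ_pos h'
          · rw [h, h', iterate_len, path_len_mul_a]
            exact zero_mem _
        · rw [path_mul_a hk h]; exact zero_mem _
  · rw [zero_mul]; exact zero_mem _
  · intro x y _ _ hx hy
    rw [add_mul]; exact add_mem hx hy
  · intro r x _ hx
    rw [smul_mul_assoc]; exact Submodule.smul_mem _ _ hx

theorem pathSpan_eq_top : Γ.pathSpan K = ⊤ := by
  rw [eq_top_iff]
  rintro z -
  obtain ⟨x, rfl⟩ := toAlg_surjective z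
  have key : ∀ x : FreeAlgebra K Γ.Gen, ∀ z ∈ Γ.pathSpan K, z * Γ.toAlg K x ∈ Γ.pathSpan K := by
    intro x
    induction x using FreeAlgebra.induction with
    | grade0 r =>
      intro z hz
      rw [AlgHom.commutes, ← Algebra.commutes, ← Algebra.smul_def]
      exact Submodule.smul_mem _ _ hz
    | grade1 g => exact fun z hz => mul_gen_mem_pathSpan g hz
    | mul x y hx hy =>
      intro z hz
      rw [map_mul, ← mul_assoc]
      exact hy _ (hx _ hz)
    | add x y hx hy =>
      intro z hz
      rw [map_add, mul_add]
      exact add_mem (hx _ hz) (hy _ hz)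
  have h1 : (1 : Γ.Alg K) ∈ Γ.pathSpan K := by
    rw [← sum_e]
    exact sum_mem fun i _ => e_mem_pathSpan i
  simpa using key x 1 h1

theorem iterate_inj_of_pos {d : Γ.Arrow} {k l : ℕ} (hk : 0 < k) (hk' : k ≤ Γ.len d) (hl : 0 < l)
    (hl' : l ≤ Γ.len d) (h : Γ.next^[k] d = Γ.next^[l] d) : k = l := by
  obtain ⟨k, rfl⟩ := Nat.exists_eq_succ_of_ne_zero hk.ne'
  obtain ⟨l, rfl⟩ := Nat.exists_eq_succ_of_ne_zero hl.ne'
  rw [Function.iterate_succ_apply', Function.iterate_succ_apply'] at h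
  rw [iterate_inj hk' hl' (Γ.next.injective h)]

theorem exists_iterate_eq_of_pos {d d' : Γ.Arrow} (h : d.fst = d'.fst) :
    ∃ k, 0 < k ∧ k ≤ Γ.len d ∧ Γ.next^[k] d = d' := by
  obtain ⟨k, hk, rfl⟩ := exists_iterate_eq h
  rcases k.eq_zero_or_pos with rfl | h0
  · exact ⟨_, len_pos d, le_rfl, iterate_len d⟩
  · exact ⟨k, h0, hk.le, rfl⟩

variable (Γ) in
/-- The exponent of `X` in the coefficient of a path. -/
noncomputable def pathExp (d : Γ.Arrow) (k : ℕ) : ℕ := if Γ.pos d + k < Γ.len d then 0 else 1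

theorem pathCoeff_eq_pow {d : Γ.Arrow} {k : ℕ} (hk : k ≤ Γ.len d) :
    Γ.pathCoeff K d k = ((Γ.sgn d.fst : K⟦X⟧) * X) ^ Γ.pathExp d k := by
  unfold pathExp
  split_ifs with h
  · rw [((pathCoeff_eq d hk).1 h).1, pow_zero]
  · rw [((pathCoeff_eq d hk).2 (not_lt.1 h)).1, pow_one]

theorem pathExp_eq_one {d : Γ.Arrow} {k : ℕ} (hk : k ≤ Γ.len d) (h : Γ.pathExp d k = 1) :
    Γ.pos (Γ.next^[k] d) + Γ.len d = Γ.pos d + k := by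
  unfold pathExp at h
  split_ifs at h with h'
  exact ((pathCoeff_eq (K := ℚ) d hk).2 (not_lt.1 h')).2

theorem pathExp_eq (d : Γ.Arrow) (k : ℕ) : Γ.pathExp d k = 0 ∨ Γ.pathExp d k = 1 := by
  unfold pathExp
  split_ifs <;> simp

theorem pathExp_len (d : Γ.Arrow) : Γ.pathExp d (Γ.len d) = 1 := by
  unfold pathExp
  rw [if_neg (by omega)]

variable (Γ K) in
/-- A linear map from the order to `A` that inverts `toOrder`. -/
noncomputable def fromOrder : Γ.order K →ₗ[K] Γ.Alg K :=
  (∑ p : Γ.Edge, ((PowerSeries.coeff (R := K) 0).comp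
      ((Matrix.entryLinearMap K K⟦X⟧ (exists_dart_edge p).choose (exists_dart_edge p).choose).comp
        (Γ.order K).val.toLinearMap)).smulRight (Γ.e K p)) +
  ∑ d : Γ.Arrow, ∑ k ∈ Finset.Icc 1 (Γ.len d), ((Γ.sgn d.fst : K) ^ Γ.pathExp d k) •
    ((PowerSeries.coeff (R := K) (Γ.pathExp d k)).comp
      ((Matrix.entryLinearMap K K⟦X⟧ d (Γ.next^[k] d)).comp
        (Γ.order K).val.toLinearMap)).smulRight (Γ.path K d k)

theorem fromOrder_apply (Y : Γ.order K) : Γ.fromOrder K Y =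
    (∑ p : Γ.Edge, (PowerSeries.coeff (R := K) 0 (Y.1 (exists_dart_edge p).choose
      (exists_dart_edge p).choose)) • Γ.e K p) +
    ∑ d : Γ.Arrow, ∑ k ∈ Finset.Icc 1 (Γ.len d), ((Γ.sgn d.fst : K) ^ Γ.pathExp d k) •
      (PowerSeries.coeff (R := K) (Γ.pathExp d k) (Y.1 d (Γ.next^[k] d))) • Γ.path K d k := by
  simp [fromOrder]

theorem sgn_cast_mul_self (c : V) (R : Type*) [Ring R] : (Γ.sgn c : R) * (Γ.sgn c : R) = 1 := by
  rw [← Int.cast_mul, sgn_mul_self, Int.cast_one]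

theorem intCast_eq_C (n : ℤ) : (n : K⟦X⟧) = PowerSeries.C (n : K) := by simp

theorem fromOrder_vertex (i : Γ.Edge) : Γ.fromOrder K (Γ.orderVertex K i) = Γ.e K i := by
  rw [fromOrder_apply]
  have h2 : ∀ d : Γ.Arrow, ∀ k ∈ Finset.Icc 1 (Γ.len d), PowerSeries.coeff (R := K) (Γ.pathExp d k)
      ((Γ.orderVertex K i).1 d (Γ.next^[k] d)) = 0 := by
    intro d k hk
    rw [Finset.mem_Icc] at hk
    simp only [orderVertex, Matrix.diagonal_apply]
    split_ifs with h1 h2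
    · have : k = Γ.len d := iterate_inj_of_pos hk.1 hk.2 (len_pos d) le_rfl
        (h1.symm.trans (iterate_len d).symm)
      subst this
      rw [pathExp_len]
      simp [PowerSeries.coeff_one]
    · simp
    · simp
  rw [Finset.sum_eq_zero (fun d _ => Finset.sum_eq_zero fun k hk => by
    rw [h2 d k hk, zero_smul, smul_zero]), add_zero, Finset.sum_eq_single i]
  · simp [orderVertex, (exists_dart_edge i).choose_spec]
  · intro p _ hp
    simp [orderVertex, (exists_dart_edge p).choose_spec, hp]
  · simp

theorem fromOrder_path {d : Γ.Arrow} {k : ℕ} (hk : 0 < k) (hk' : k ≤ Γ.len d) :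
    Γ.fromOrder K (Γ.preOrder K (Γ.prePath K d k)) = Γ.path K d k := by
  rw [fromOrder_apply, preOrder_path d hk, pathCoeff_eq_pow hk']
  rw [Finset.sum_eq_zero, zero_add, Finset.sum_eq_single d, Finset.sum_eq_single k]
  · rw [Matrix.single_apply_same, smul_smul, intCast_eq_C, mul_pow, ← map_pow,
      PowerSeries.coeff_C_mul, PowerSeries.coeff_X_pow_self, mul_one, ← mul_pow,
      sgn_cast_mul_self, one_pow, one_smul]
  · intro l hl hlk
    rw [Finset.mem_Icc] at hl
    rw [Matrix.single_apply_of_ne, map_zero, zero_smul, smul_zero]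
    rintro ⟨-, h⟩
    exact hlk (iterate_inj_of_pos hl.1 hl.2 hk hk' h.symm)
  · intro h
    exact absurd (Finset.mem_Icc.2 ⟨hk, hk'⟩) h
  · intro d' _ hd'
    refine Finset.sum_eq_zero fun l _ => ?_
    rw [Matrix.single_apply_of_ne, map_zero, zero_smul, smul_zero]
    rintro ⟨h, -⟩
    exact hd' h.symm
  · simp
  · intro p _
    rw [Matrix.single_apply]
    split_ifs with h
    · have : k = Γ.len d := iterate_inj_of_pos hk hk' (len_pos d) le_rfl
        (h.2.trans (h.1.symm.trans (iterate_len d).symm))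
      subst this
      rw [pathExp_len]
      simp
    · simp

theorem fromOrder_ideal {Y : Γ.order K} (hY : Y ∈ Γ.orderIdeal K) : Γ.fromOrder K Y = 0 := by
  obtain ⟨Z, ⟨hZ1, hZ2, hZ3⟩, h⟩ := hY
  rw [fromOrder_apply, h, Finset.sum_eq_zero (by simp), zero_add]
  refine Finset.sum_involution (fun d _ => d.symm) ?_ ?_ (fun _ _ => Finset.mem_univ _)
    (fun d _ => d.symm_symm)
  · have key : ∀ d : Γ.Arrow, ∑ k ∈ Finset.Icc 1 (Γ.len d), ((Γ.sgn d.fst : K) ^ Γ.pathExp d k) •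
        (PowerSeries.coeff (R := K) (Γ.pathExp d k) (((X : K⟦X⟧) • Z) d (Γ.next^[k] d))) •
          Γ.path K d k =
        (Γ.sgn d.fst : K) • (PowerSeries.coeff (R := K) 0 (Z d d)) • Γ.path K d (Γ.len d) := by
      intro d
      rw [Finset.sum_eq_single (Γ.len d)]
      · rw [pathExp_len, iterate_len, Matrix.smul_apply, smul_eq_mul, pow_one]
        congr 2
        exact PowerSeries.coeff_succ_X_mul 0 _
      · intro k hk hkl
        rw [Finset.mem_Icc] at hk
        rw [Matrix.smul_apply, smul_eq_mul]
        rcases pathExp_eq d k with h0 | h1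
        · rw [h0, PowerSeries.coeff_zero_X_mul, zero_smul, smul_zero]
        · have h2 := pathExp_eq_one hk.2 h1
          obtain ⟨y, hy⟩ := hZ2 d (Γ.next^[k] d) (by omega)
          rw [h1, hy, PowerSeries.coeff_succ_X_mul 0, PowerSeries.coeff_zero_X_mul, zero_smul,
            smul_zero]
      · intro h
        exact absurd (Finset.mem_Icc.2 ⟨len_pos d, le_rfl⟩) h
    intro d _
    rw [key, key, ← path_len]
    have hs : (Γ.sgn d.fst : K) = - (Γ.sgn d.symm.fst : K) := by
      rw [sgn_fst d, Int.cast_neg]; rfl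
    have hc : PowerSeries.coeff (R := K) 0 (Z d d) =
        PowerSeries.coeff (R := K) 0 (Z d.symm d.symm) := by
      obtain ⟨y, hy⟩ := hZ3 d
      rw [← sub_eq_zero, ← map_sub, hy, PowerSeries.coeff_zero_X_mul]
    rw [hs, hc, neg_smul, neg_add_cancel]
  · intro d _ _
    exact d.symm_ne

theorem toOrder_injective : Function.Injective (Γ.toOrder K) := by
  have key : ∀ z : Γ.Alg K, ∃ Y : Γ.order K, Γ.toOrder K z = Ideal.Quotient.mk _ Y ∧
      Γ.fromOrder K Y = z := by
    intro z
    have hz : z ∈ Γ.pathSpan K := by rw [pathSpan_eq_top]; trivial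
    refine Submodule.span_induction (p := fun z _ => ∃ Y : Γ.order K,
      Γ.toOrder K z = Ideal.Quotient.mk _ Y ∧ Γ.fromOrder K Y = z) ?_ ?_ ?_ ?_ hz
    · rintro z (⟨i, rfl⟩ | ⟨d, k, hk, hk', rfl⟩)
      · exact ⟨_, (toOrder_toAlg _).trans (by rw [preOrder_vertex]), fromOrder_vertex i⟩
      · exact ⟨_, toOrder_toAlg _, fromOrder_path hk hk'⟩
    · exact ⟨0, by simp, by simp⟩
    · rintro _ _ _ _ ⟨Y, h1, h2⟩ ⟨Y', h1', h2'⟩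
      exact ⟨Y + Y', by rw [map_add, map_add, h1, h1'], by rw [map_add, h2, h2']⟩
    · rintro r _ _ ⟨Y, h1, h2⟩
      refine ⟨r • Y, ?_, by rw [map_smul, h2]⟩
      rw [map_smul, h1]; rfl
  rw [injective_iff_map_eq_zero]
  intro z hz
  obtain ⟨Y, h1, h2⟩ := key z
  rw [hz, eq_comm, Ideal.Quotient.eq_zero_iff_mem] at h1
  rw [← h2, fromOrder_ideal h1]

theorem toOrder_surjective : Function.Surjective (Γ.toOrder K) := by
  let S : Submodule K (Γ.order K) :=
    (LinearMap.range (Γ.toOrder K).toLinearMap).comap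
      (Ideal.Quotient.mkₐ K (Γ.orderIdeal K)).toLinearMap
  have hS : ∀ {Y : Γ.order K}, Y ∈ S ↔ ∃ z, Γ.toOrder K z = Ideal.Quotient.mk _ Y := Iff.rfl
  have hI : ∀ Y ∈ Γ.orderIdeal K, Y ∈ S := fun Y hY =>
    hS.2 ⟨0, by rw [map_zero, eq_comm, Ideal.Quotient.eq_zero_iff_mem]; exact hY⟩
  let S' : Submodule K (Matrix Γ.Arrow Γ.Arrow K⟦X⟧) := S.map (Γ.order K).val.toLinearMap
  have hS' : ∀ {Y} (hY : Y ∈ Γ.order K), Y ∈ S' ↔ ⟨Y, hY⟩ ∈ S := by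
    intro Y hY
    constructor
    · rintro ⟨Z, hZ, rfl⟩
      exact hZ
    · exact fun h => ⟨_, h, rfl⟩
  have hpath : ∀ (d : Γ.Arrow) (k : ℕ), 0 < k →
      Matrix.single d (Γ.next^[k] d) (Γ.pathCoeff K d k) ∈ S' := by
    intro d k hk
    rw [← preOrder_path d hk, hS' (Subtype.prop _)]
    exact hS.2 ⟨_, toOrder_toAlg _⟩
  have hsingle : ∀ (d d' : Γ.Arrow) (y : K⟦X⟧), d.fst = d'.fst →
      (Γ.pos d' ≤ Γ.pos d → X ∣ y) → Matrix.single d d' y ∈ S' := by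
    intro d d' y hf hp
    obtain ⟨k, hk, hk', rfl⟩ := exists_iterate_eq_of_pos hf
    have hdvd : X ^ Γ.pathExp d k ∣ y := by
      rcases pathExp_eq d k with h0 | h1
      · rw [h0, pow_zero]; exact one_dvd _
      · rw [h1, pow_one]
        have := pathExp_eq_one hk' h1
        exact hp (by omega)
    obtain ⟨y, rfl⟩ := hdvd
    obtain ⟨y', hy'⟩ : X ∣ y - PowerSeries.C (PowerSeries.constantCoeff (R := K) y) := by
      rw [PowerSeries.X_dvd_iff]; simp
    have e1 : Matrix.single d (Γ.next^[k] d) (X ^ Γ.pathExp d k * y) =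
        ((Γ.sgn d.fst : K) ^ Γ.pathExp d k * PowerSeries.constantCoeff (R := K) y) •
          Matrix.single d (Γ.next^[k] d) (Γ.pathCoeff K d k) +
        (X : K⟦X⟧) • Matrix.single d (Γ.next^[k] d) (X ^ Γ.pathExp d k * y') := by
      rw [Matrix.smul_single, Matrix.smul_single, ← Matrix.single_add, pathCoeff_eq_pow hk']
      congr 1
      rw [PowerSeries.smul_eq_C_mul, map_mul, map_pow, ← intCast_eq_C,
        smul_eq_mul]
      have := sgn_cast_mul_self (Γ := Γ) d.fst K⟦X⟧
      have h2 : (Γ.sgn d.fst : K⟦X⟧) ^ Γ.pathExp d k * (Γ.sgn d.fst : K⟦X⟧) ^ Γ.pathExp d k = 1 := by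
        rw [← mul_pow, this, one_pow]
      rw [mul_pow]
      linear_combination (- PowerSeries.C (PowerSeries.constantCoeff (R := K) y) *
        X ^ Γ.pathExp d k) * h2 + X ^ Γ.pathExp d k * hy'
    rw [e1]
    refine add_mem (Submodule.smul_mem _ _ (hpath d k hk)) ?_
    have hmem : Matrix.single d (Γ.next^[k] d) (X ^ Γ.pathExp d k * y') ∈ Γ.order K := by
      refine single_mem_order hf fun h => ?_
      rcases pathExp_eq d k with h0 | h1
      · exfalso
        unfold pathExp at h0
        split_ifs at h0 with h'
        have := ((pathCoeff_eq (K := K) d hk').1 h').2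
        omega
      · rw [h1, pow_one]
        exact Dvd.intro _ rfl
    rw [hS' (X_smul_mem_order hmem)]
    exact hI _ ⟨_, hmem, rfl⟩
  intro y
  obtain ⟨Y, rfl⟩ := Ideal.Quotient.mk_surjective y
  change Y ∈ S
  let s : Γ.order K := ∑ p : Γ.Edge, (PowerSeries.coeff (R := K) 0 (Y.1 (exists_dart_edge p).choose
      (exists_dart_edge p).choose)) • Γ.orderVertex K p
  have hs : s ∈ S := by
    refine sum_mem fun p _ => Submodule.smul_mem _ _ ?_
    exact hS.2 ⟨Γ.e K p, (toOrder_toAlg _).trans (by rw [preOrder_vertex])⟩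
  have hss : ∀ d, s.1 d d = PowerSeries.C (PowerSeries.coeff (R := K) 0
      (Y.1 (exists_dart_edge (Γ.edge d)).choose (exists_dart_edge (Γ.edge d)).choose)) := by
    intro d
    simp only [s, AddSubmonoidClass.coe_finsetSum, Matrix.sum_apply]
    rw [Finset.sum_eq_single (Γ.edge d)]
    · simp [orderVertex, PowerSeries.smul_eq_C_mul]
    · intro p _ hp
      simp [orderVertex, hp.symm]
    · simp
  have hdiag : ∀ d, X ∣ (Y - s).1 d d := by
    intro d
    rw [Subalgebra.coe_sub, Matrix.sub_apply, hss, PowerSeries.X_dvd_iff]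
    rcases edge_eq_iff.1 (exists_dart_edge (Γ.edge d)).choose_spec with h | h
    · rw [h]; simp
    · rw [h]
      have := Y.2.2.2 d
      rw [PowerSeries.X_dvd_iff] at this
      simpa using this
  have hYs : Y - s ∈ S := by
    have : ((Y - s : Γ.order K) : Matrix Γ.Arrow Γ.Arrow K⟦X⟧) ∈ S' := by
      rw [Matrix.matrix_eq_sum_single ((Y - s : Γ.order K) : Matrix Γ.Arrow Γ.Arrow K⟦X⟧)]
      refine sum_mem fun d _ => sum_mem fun d' _ => ?_
      by_cases hf : d.fst = d'.fst
      · refine hsingle _ _ _ hf fun h => ?_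
        rcases h.lt_or_eq with h | h
        · exact (Y - s).2.2.1 _ _ h
        · rw [pos_inj hf h.symm]; exact hdiag _
      · rw [(Y - s).2.1 _ _ hf, Matrix.single_zero]
        exact zero_mem _
    exact (hS' (Y - s).2).1 this
  simpa using add_mem hYs hs

end BrauerTree

namespace BrauerTree

open PowerSeries Classical

variable {V : Type v} [Finite V] {Γ : BrauerTree V} {K : Type u} [Field K]

variable (Γ K) in
/-- The morphisms from `p` to `q` in the order, as families of power series indexed by the vertices
of the tree. Composition of morphisms is the pointwise product. -/
def Lam (p q : Γ.Edge) : Submodule K⟦X⟧ (V → K⟦X⟧) where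
  carrier := {x | (∀ c, ¬ (Γ.Inc p c ∧ Γ.Inc q c) → x c = 0) ∧
    (∀ c, Γ.rk c q < Γ.rk c p → X ∣ x c) ∧
    (p = q → ∀ c c', Γ.Inc p c → Γ.Inc p c' → X ∣ x c - x c')}
  add_mem' := by
    rintro x y ⟨h1, h2, h3⟩ ⟨k1, k2, k3⟩
    refine ⟨fun c h => ?_, fun c h => dvd_add (h2 c h) (k2 c h), fun h c c' hc hc' => ?_⟩
    · rw [Pi.add_apply, h1 c h, k1 c h, add_zero]
    · simpa only [Pi.add_apply, add_sub_add_comm] using dvd_add (h3 h c c' hc hc') (k3 h c c' hc hc')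
  zero_mem' := by simp
  smul_mem' := by
    rintro r x ⟨h1, h2, h3⟩
    refine ⟨fun c h => ?_, fun c h => Dvd.dvd.mul_left (h2 c h) _, fun h c c' hc hc' => ?_⟩
    · rw [Pi.smul_apply, h1 c h, smul_zero]
    · rw [Pi.smul_apply, Pi.smul_apply, ← smul_sub]
      exact Dvd.dvd.mul_left (h3 h c c' hc hc') _

theorem X_dvd_mul_of_ne {p q : Γ.Edge} (hpq : p ≠ q) {x y : V → K⟦X⟧} (hx : x ∈ Γ.Lam K p q)
    (hy : y ∈ Γ.Lam K q p) (c : V) : X ∣ x c * y c := by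
  by_cases h : Γ.Inc p c ∧ Γ.Inc q c
  · rcases lt_or_gt_of_ne (fun h' => hpq (rk_inj h.1 h.2 h')) with h' | h'
    · exact Dvd.dvd.mul_left (hy.2.1 c h') _
    · exact Dvd.dvd.mul_right (hx.2.1 c h') _
  · rw [hx.1 c h, zero_mul]
    exact dvd_zero _

theorem mul_mem_Lam {p q r : Γ.Edge} {x y : V → K⟦X⟧} (hx : x ∈ Γ.Lam K p q)
    (hy : y ∈ Γ.Lam K q r) : x * y ∈ Γ.Lam K p r := by
  refine ⟨fun c h => ?_, fun c h => ?_, ?_⟩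
  · rw [Pi.mul_apply]
    by_cases hp : Γ.Inc p c
    · rw [hy.1 c (fun h' => h ⟨hp, h'.2⟩), mul_zero]
    · rw [hx.1 c (fun h' => hp h'.1), zero_mul]
  · rcases lt_or_ge (Γ.rk c q) (Γ.rk c p) with h' | h'
    · exact Dvd.dvd.mul_right (hx.2.1 c h') _
    · exact Dvd.dvd.mul_left (hy.2.1 c (h.trans_le h')) _
  · rintro rfl c c' hc hc'
    by_cases hpq : p = q
    · subst hpq
      have e : (x * y) c - (x * y) c' = (x c - x c') * y c + x c' * (y c - y c') := by
        simp only [Pi.mul_apply]; ring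
      rw [e]
      exact dvd_add (Dvd.dvd.mul_right (hx.2.2 rfl c c' hc hc') _)
        (Dvd.dvd.mul_left (hy.2.2 rfl c c' hc hc') _)
    · exact dvd_sub (X_dvd_mul_of_ne hpq hx hy c) (X_dvd_mul_of_ne hpq hx hy c')

variable (Γ K) in
/-- The identity morphism of `p` in the order. -/
noncomputable def oneAt (p : Γ.Edge) : V → K⟦X⟧ := fun c => if Γ.Inc p c then 1 else 0

theorem oneAt_mem (p : Γ.Edge) : Γ.oneAt K p ∈ Γ.Lam K p p := by
  refine ⟨fun c h => ?_, fun c h => absurd h (lt_irrefl _), fun _ c c' hc hc' => ?_⟩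
  · rw [oneAt, if_neg (fun h' => h ⟨h', h'⟩)]
  · rw [oneAt, oneAt, if_pos hc, if_pos hc', sub_self]
    exact dvd_zero _

theorem oneAt_mul {p q : Γ.Edge} {x : V → K⟦X⟧} (hx : x ∈ Γ.Lam K p q) : Γ.oneAt K p * x = x := by
  funext c
  rw [Pi.mul_apply, oneAt]
  split_ifs with h
  · exact one_mul _
  · rw [hx.1 c (fun h' => h h'.1), mul_zero]

theorem mul_oneAt {p q : Γ.Edge} {x : V → K⟦X⟧} (hx : x ∈ Γ.Lam K p q) : x * Γ.oneAt K q = x := by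
  funext c
  rw [Pi.mul_apply, oneAt]
  split_ifs with h
  · exact mul_one _
  · rw [hx.1 c (fun h' => h h'.2), zero_mul]

theorem exists_X_smul_iff {p q : Γ.Edge} {x : V → K⟦X⟧} (hx : x ∈ Γ.Lam K p q) :
    (∃ y ∈ Γ.Lam K p q, x = (X : K⟦X⟧) • y) ↔ (∀ c, X ∣ x c) ∧
      (∀ c, Γ.rk c q < Γ.rk c p → X ^ 2 ∣ x c) ∧
      (p = q → ∀ c c', Γ.Inc p c → Γ.Inc p c' → X ^ 2 ∣ x c - x c') := by
  have hX : (X : K⟦X⟧) ≠ 0 := PowerSeries.X_ne_zero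
  constructor
  · rintro ⟨y, hy, rfl⟩
    refine ⟨fun c => Dvd.intro _ rfl, fun c h => ?_, fun h c c' hc hc' => ?_⟩
    · rw [pow_two]
      exact mul_dvd_mul_left X (hy.2.1 c h)
    · rw [pow_two, Pi.smul_apply, Pi.smul_apply, ← smul_sub]
      exact mul_dvd_mul_left X (hy.2.2 h c c' hc hc')
  · rintro ⟨h1, h2, h3⟩
    choose y hy using h1
    refine ⟨y, ⟨fun c h => ?_, fun c h => ?_, fun h c c' hc hc' => ?_⟩, funext hy⟩
    · have := hx.1 c h
      rw [hy c] at this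
      exact (mul_eq_zero.1 this).resolve_left hX
    · have := h2 c h
      rw [hy c, pow_two] at this
      exact (mul_dvd_mul_iff_left hX).1 this
    · have := h3 h c c' hc hc'
      rw [hy c, hy c', pow_two, ← mul_sub] at this
      exact (mul_dvd_mul_iff_left hX).1 this

variable (Γ K) in
/-- A morphism from `p` to `q`, as a matrix in the order. -/
noncomputable def emb (p q : Γ.Edge) : (V → K⟦X⟧) →ₗ[K] Matrix Γ.Arrow Γ.Arrow K⟦X⟧ where
  toFun x := Matrix.of fun d d' =>
    if Γ.edge d = p ∧ Γ.edge d' = q ∧ d.fst = d'.fst then x d.fst else 0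
  map_add' x y := by
    ext1 d d'
    simp only [Matrix.add_apply, Matrix.of_apply, Pi.add_apply]
    split_ifs <;> simp
  map_smul' r x := by
    ext1 d d'
    simp only [Matrix.smul_apply, Matrix.of_apply, Pi.smul_apply, RingHom.id_apply]
    split_ifs <;> simp

theorem emb_apply (p q : Γ.Edge) (x : V → K⟦X⟧) (d d' : Γ.Arrow) : Γ.emb K p q x d d' =
    if Γ.edge d = p ∧ Γ.edge d' = q ∧ d.fst = d'.fst then x d.fst else 0 := rfl

theorem emb_mem {p q : Γ.Edge} {x : V → K⟦X⟧} (hx : x ∈ Γ.Lam K p q) :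
    Γ.emb K p q x ∈ Γ.order K := by
  refine ⟨fun d d' h => ?_, fun d d' h => ?_, fun d => ?_⟩
  · rw [emb_apply, if_neg (fun h' => h h'.2.2)]
  · rw [emb_apply]
    split_ifs with h'
    · obtain ⟨rfl, rfl, hf⟩ := h'
      refine hx.2.1 _ ?_
      rw [rk_edge, hf, rk_edge]
      exact h
    · exact dvd_zero _
  · simp only [emb_apply, edge_symm, and_true]
    split_ifs with h
    · obtain ⟨rfl, rfl⟩ := h
      exact hx.2.2 rfl _ _ (inc_edge_fst d) (inc_edge_snd d)
    · simp

theorem emb_mul {p q r : Γ.Edge} {x y : V → K⟦X⟧} (hx : x ∈ Γ.Lam K p q) :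
    Γ.emb K p q x * Γ.emb K q r y = Γ.emb K p r (x * y) := by
  ext1 d d'
  rw [Matrix.mul_apply, emb_apply p r]
  by_cases hq : Γ.Inc q d.fst
  · obtain ⟨d₀, h₀, hq₀⟩ := hq.exists_dart
    rw [Finset.sum_eq_single d₀]
    · simp only [emb_apply, hq₀, h₀, true_and, and_true]
      by_cases h1 : Γ.edge d = p
      · by_cases h2 : Γ.edge d' = r ∧ d.fst = d'.fst
        · simp [h1, h2]
        · simp [h1, h2]
      · simp [h1]
    · intro d₁ _ h
      rw [emb_apply, if_neg, zero_mul]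
      rintro ⟨-, h1, h2⟩
      exact h (dart_eq_of_fst_eq (h2.symm.trans h₀.symm) (h1.trans hq₀.symm))
    · simp
  · rw [Finset.sum_eq_zero, Pi.mul_apply, hx.1 _ (fun h => hq h.2), zero_mul, ite_self]
    intro d₁ _
    rw [emb_apply, if_neg, zero_mul]
    rintro ⟨-, rfl, h⟩
    exact hq (h ▸ inc_edge_fst d₁)

theorem emb_oneAt (p : Γ.Edge) : Γ.emb K p p (Γ.oneAt K p) = Γ.orderVertex K p := by
  ext1 d d'
  rw [emb_apply]
  change _ = Matrix.diagonal _ d d'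
  rw [Matrix.diagonal_apply]
  by_cases h : d = d'
  · subst h
    by_cases h' : Γ.edge d = p
    · subst h'
      simp [oneAt, inc_edge_fst]
    · simp [h']
  · rw [if_neg, if_neg h]
    rintro ⟨h1, h2, h3⟩
    exact h (dart_eq_of_fst_eq h3 (h1.trans h2.symm))

theorem emb_mem_ideal_iff {p q : Γ.Edge} {x : V → K⟦X⟧} (hx : x ∈ Γ.Lam K p q) :
    (⟨_, emb_mem hx⟩ : Γ.order K) ∈ Γ.orderIdeal K ↔ ∃ y ∈ Γ.Lam K p q, x = (X : K⟦X⟧) • y := by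
  constructor
  · rintro ⟨Z, ⟨h1, h2, h3⟩, h⟩
    have key : ∀ d d', Γ.edge d = p → Γ.edge d' = q → d.fst = d'.fst → x d.fst = X * Z d d' := by
      intro d d' hd hd' hf
      have := congrFun (congrFun h d) d'
      simp only [emb_apply] at this
      rw [if_pos ⟨hd, hd', hf⟩] at this
      exact this
    rw [exists_X_smul_iff hx]
    refine ⟨fun c => ?_, fun c hc => ?_, ?_⟩
    · by_cases hc : Γ.Inc p c ∧ Γ.Inc q c
      · obtain ⟨d, rfl, hd⟩ := hc.1.exists_dart
        obtain ⟨d', hf, hd'⟩ := hc.2.exists_dart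
        rw [key d d' hd hd' hf.symm]
        exact Dvd.intro _ rfl
      · rw [hx.1 c hc]; exact dvd_zero _
    · by_cases hc' : Γ.Inc p c ∧ Γ.Inc q c
      · obtain ⟨d, rfl, hd⟩ := hc'.1.exists_dart
        obtain ⟨d', hf, hd'⟩ := hc'.2.exists_dart
        rw [key d d' hd hd' hf.symm, pow_two]
        refine mul_dvd_mul_left X (h2 d d' ?_)
        rw [← rk_edge, ← rk_edge, hd, hd', hf]
        exact hc
      · rw [hx.1 c hc']; exact dvd_zero _
    · rintro rfl c c' hc hc'
      obtain ⟨d, rfl, rfl⟩ := hc.exists_dart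
      rcases inc_edge_iff.1 hc' with h' | h'
      · rw [h', sub_self]; exact dvd_zero _
      · have e1 := key d d rfl rfl rfl
        have e2 := key d.symm d.symm (edge_symm d) (edge_symm d) rfl
        rw [h', e1, show x d.snd = X * Z d.symm d.symm from e2, ← mul_sub, pow_two]
        exact mul_dvd_mul_left X (h3 d)
  · rintro ⟨y, hy, rfl⟩
    refine ⟨Γ.emb K p q y, emb_mem hy, ?_⟩
    ext1 d d'
    simp only [emb_apply, Matrix.smul_apply]
    split_ifs <;> simp

variable (Γ K) in
/-- The Brauer tree algebra is the reduction of the order modulo `X`. -/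
noncomputable def algEquiv : Γ.Alg K ≃ₐ[K] Γ.order K ⧸ Γ.orderIdeal K :=
  AlgEquiv.ofBijective (Γ.toOrder K) ⟨toOrder_injective, toOrder_surjective⟩

variable (Γ K) in
/-- The reduction of morphisms of the order: a surjection onto `e_p A e_q`. -/
noncomputable def theta (p q : Γ.Edge) : Γ.Lam K p q →ₗ[K] Γ.Alg K where
  toFun x := (Γ.algEquiv K).symm (Ideal.Quotient.mk _ ⟨_, emb_mem x.2⟩)
  map_add' x y := by
    rw [← map_add, ← map_add]
    congr 3
    exact map_add (Γ.emb K p q) _ _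
  map_smul' r x := by
    rw [RingHom.id_apply, ← map_smul]
    congr 1
    have h : (⟨_, emb_mem (r • x).2⟩ : Γ.order K) = r • ⟨_, emb_mem x.2⟩ :=
      Subtype.ext (map_smul (Γ.emb K p q) r _)
    rw [h]
    rfl

theorem algEquiv_theta {p q : Γ.Edge} (x : Γ.Lam K p q) :
    Γ.algEquiv K (Γ.theta K p q x) = Ideal.Quotient.mk _ ⟨_, emb_mem x.2⟩ :=
  AlgEquiv.apply_symm_apply _ _

theorem theta_mul {p q r : Γ.Edge} (x : Γ.Lam K p q) (y : Γ.Lam K q r) :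
    Γ.theta K p r ⟨_, mul_mem_Lam x.2 y.2⟩ = Γ.theta K p q x * Γ.theta K q r y := by
  apply (Γ.algEquiv K).injective
  rw [map_mul, algEquiv_theta, algEquiv_theta, algEquiv_theta, ← map_mul]
  congr 1
  exact Subtype.ext (emb_mul x.2).symm

theorem algEquiv_e (p : Γ.Edge) :
    Γ.algEquiv K (Γ.e K p) = Ideal.Quotient.mk _ (Γ.orderVertex K p) :=
  (toOrder_toAlg _).trans (by rw [preOrder_vertex])

theorem theta_one (p : Γ.Edge) : Γ.theta K p p ⟨_, oneAt_mem p⟩ = Γ.e K p := by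
  apply (Γ.algEquiv K).injective
  rw [algEquiv_theta, algEquiv_e]
  congr 1
  exact Subtype.ext (emb_oneAt p)

theorem theta_eq_zero_iff {p q : Γ.Edge} (x : Γ.Lam K p q) :
    Γ.theta K p q x = 0 ↔ ∃ y ∈ Γ.Lam K p q, (x : V → K⟦X⟧) = (X : K⟦X⟧) • y := by
  rw [← map_eq_zero_iff (Γ.algEquiv K) (Γ.algEquiv K).injective, algEquiv_theta, Ideal.Quotient.eq_zero_iff_mem,
    emb_mem_ideal_iff x.2]

theorem e_mul_theta {p q : Γ.Edge} (x : Γ.Lam K p q) :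
    Γ.e K p * Γ.theta K p q x = Γ.theta K p q x := by
  rw [← theta_one, ← theta_mul]
  congr 1
  exact Subtype.ext (oneAt_mul x.2)

theorem theta_mul_e {p q : Γ.Edge} (x : Γ.Lam K p q) :
    Γ.theta K p q x * Γ.e K q = Γ.theta K p q x := by
  rw [← theta_one, ← theta_mul]
  congr 1
  exact Subtype.ext (mul_oneAt x.2)

theorem exists_theta_eq {p q : Γ.Edge} {z : Γ.Alg K} (h1 : Γ.e K p * z = z)
    (h2 : z * Γ.e K q = z) : ∃ x, Γ.theta K p q x = z := by
  obtain ⟨Y, hY⟩ := Ideal.Quotient.mk_surjective (Γ.algEquiv K z)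
  let x : V → K⟦X⟧ := fun c =>
    if h : ∃ dd : Γ.Arrow × Γ.Arrow, dd.1.fst = c ∧ dd.2.fst = c ∧ Γ.edge dd.1 = p ∧
      Γ.edge dd.2 = q then Y.1 h.choose.1 h.choose.2 else 0
  have hxd : ∀ d d' : Γ.Arrow, Γ.edge d = p → Γ.edge d' = q → d.fst = d'.fst →
      x d.fst = Y.1 d d' := by
    intro d d' hd hd' hf
    have h : ∃ dd : Γ.Arrow × Γ.Arrow, dd.1.fst = d.fst ∧ dd.2.fst = d.fst ∧ Γ.edge dd.1 = p ∧
      Γ.edge dd.2 = q := ⟨(d, d'), rfl, hf.symm, hd, hd'⟩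
    simp only [x]
    rw [dif_pos h]
    obtain ⟨k1, k2, k3, k4⟩ := h.choose_spec
    rw [dart_eq_of_fst_eq k1 (k3.trans hd.symm),
      dart_eq_of_fst_eq (k2.trans hf) (k4.trans hd'.symm)]
  have hx : x ∈ Γ.Lam K p q := by
    refine ⟨fun c hc => ?_, fun c hc => ?_, ?_⟩
    · simp only [x]
      rw [dif_neg]
      rintro ⟨⟨d, d'⟩, rfl, hf, rfl, rfl⟩
      exact hc ⟨inc_edge_fst d, hf ▸ inc_edge_fst d'⟩
    · simp only [x]
      split_ifs with h
      · obtain ⟨k1, k2, k3, k4⟩ := h.choose_spec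
        refine Y.2.2.1 _ _ ?_
        rw [← rk_edge, ← rk_edge, k1, k2, k3, k4]
        exact hc
      · exact dvd_zero _
    · rintro rfl c c' hc hc'
      obtain ⟨d, rfl, rfl⟩ := hc.exists_dart
      rcases inc_edge_iff.1 hc' with h' | h'
      · rw [h', sub_self]; exact dvd_zero _
      · rw [hxd d d rfl rfl rfl, h', show x d.snd = _ from
          hxd d.symm d.symm (edge_symm d) (edge_symm d) rfl]
        exact Y.2.2.2 d
  refine ⟨⟨x, hx⟩, ?_⟩
  apply (Γ.algEquiv K).injective
  rw [algEquiv_theta, ← h2, ← h1, map_mul, map_mul, algEquiv_e, algEquiv_e, ← hY, ← map_mul,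
    ← map_mul]
  congr 1
  apply Subtype.ext
  ext1 d d'
  simp only [emb_apply, orderVertex, Subalgebra.coe_mul]
  rw [Matrix.mul_diagonal, Matrix.diagonal_mul]
  by_cases hf : d.fst = d'.fst
  · by_cases hd : Γ.edge d = p
    · by_cases hd' : Γ.edge d' = q
      · simp [hd, hd', hf, ← hxd d d' hd hd' hf]
      · simp [hd']
    · simp [hd]
  · simp [hf, Y.2.1 _ _ hf]

theorem path_ne_zero {d : Γ.Arrow} {k : ℕ} (hk : 0 < k) (hk' : k ≤ Γ.len d) :
    Γ.path K d k ≠ 0 := by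
  intro h
  have h0 := toOrder_toAlg (Γ.prePath K d k)
  rw [← path, h, map_zero, eq_comm, Ideal.Quotient.eq_zero_iff_mem] at h0
  obtain ⟨Z, ⟨-, h2, h3⟩, hZ⟩ := h0
  rw [preOrder_path d hk, pathCoeff_eq_pow hk'] at hZ
  have hX : (X : K⟦X⟧) ≠ 0 := PowerSeries.X_ne_zero
  have hdd : ((Γ.sgn d.fst : K⟦X⟧) * X) ^ Γ.pathExp d k = X * Z d (Γ.next^[k] d) := by
    simpa using congrFun (congrFun hZ d) (Γ.next^[k] d)
  have hu : ¬ (X : K⟦X⟧) ∣ (Γ.sgn d.fst : K⟦X⟧) := by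
    rw [intCast_eq_C, PowerSeries.X_dvd_iff, PowerSeries.constantCoeff_C]
    intro h'
    have := sgn_cast_mul_self (Γ := Γ) d.fst K
    rw [h', zero_mul] at this
    exact zero_ne_one this
  rcases pathExp_eq d k with he | he
  · rw [he, pow_zero] at hdd
    exact PowerSeries.X_prime.not_isUnit (IsUnit.of_mul_eq_one _ hdd.symm)
  · rw [he, pow_one, mul_comm, mul_right_inj' hX] at hdd
    have hp := pathExp_eq_one hk' he
    rcases hk'.lt_or_eq with hlt | heq
    · exact hu (hdd ▸ h2 _ _ (by omega))
    · rw [heq, iterate_len] at hdd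
      have hs : X * Z d.symm d.symm = 0 := by
        have := congrFun (congrFun hZ d.symm) d.symm
        rw [Matrix.single_apply_of_ne _ _ _ _ _ (fun h => d.symm_ne h.1.symm)] at this
        exact this.symm
      have h4 := h3 d
      rw [(mul_eq_zero.1 hs).resolve_left hX, sub_zero, ← hdd] at h4
      exact hu h4

theorem a_mul_a_ne_zero {d : Γ.Arrow} (h : 2 ≤ Γ.len d) : Γ.a K d * Γ.a K (Γ.next d) ≠ 0 := by
  have := path_ne_zero (K := K) (k := 1 + 1) two_pos h
  rwa [path_succ d 1, path_one] at this

variable (Γ) in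
/-- The arrows of the cycle through `d`, starting with `d`. -/
noncomputable def cycleList (d : Γ.Arrow) : List Γ.Arrow :=
  (List.range (Γ.len d)).map fun k => Γ.next^[k] d

theorem mem_cycleList {d d' : Γ.Arrow} : d' ∈ Γ.cycleList d ↔ d'.fst = d.fst := by
  simp only [cycleList, List.mem_map, List.mem_range]
  constructor
  · rintro ⟨k, -, rfl⟩
    exact iterate_fst d k
  · intro h
    exact exists_iterate_eq h.symm

theorem memCycle_cycleList {d : Γ.Arrow} {i : Γ.Edge} :
    MemCycle i (Γ.cycleList d) ↔ Γ.Inc i d.fst := by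
  constructor
  · rintro ⟨d', h, rfl⟩
    rw [← mem_cycleList.1 h]
    exact inc_edge_fst d'
  · intro h
    obtain ⟨d', hf, rfl⟩ := h.exists_dart
    exact ⟨d', mem_cycleList.2 hf, rfl⟩

theorem isNonzeroSeq_cycleList (d : Γ.Arrow) : Γ.IsNonzeroSeq K (Γ.cycleList d) := by
  refine ⟨?_, ?_, ?_⟩
  · have := len_pos d
    simp [cycleList, this.ne']
  · refine List.Nodup.map_on ?_ List.nodup_range
    intro k hk l hl h
    exact iterate_inj (List.mem_range.1 hk) (List.mem_range.1 hl) h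
  · rw [List.isChain_iff_getElem]
    intro i hi
    simp only [cycleList, List.length_map, List.length_range] at hi
    simp only [cycleList, List.getElem_map, List.getElem_range, Function.iterate_succ_apply']
    refine a_mul_a_ne_zero ?_
    rw [len_iterate]
    omega

theorem IsNonzeroSeq.exists_eq {C : List Γ.Arrow} (hC : Γ.IsNonzeroSeq K C) :
    ∃ d, C = (List.range C.length).map (fun k => Γ.next^[k] d) ∧ C.length ≤ Γ.len d := by
  obtain ⟨hne, hnd, hch⟩ := hC
  have hpos : 0 < C.length := List.length_pos_iff.2 hne
  rw [List.isChain_iff_getElem] at hch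
  have key : ∀ k (hk : k < C.length), C[k] = Γ.next^[k] C[0] := by
    intro k
    induction k with
    | zero => intro _; rfl
    | succ k ih =>
      intro hk
      rw [Function.iterate_succ_apply', ← ih (by omega)]
      by_contra h
      exact hch k hk (a_mul_a_eq_zero h)
  refine ⟨C[0], ?_, ?_⟩
  · apply List.ext_getElem
    · simp
    · intro n h1 h2
      simp [key n h1]
  · by_contra h
    push Not at h
    have h1 : C[Γ.len C[0]] = C[0] := by rw [key _ h, iterate_len]
    have := (List.Nodup.getElem_inj_iff hnd).1 h1
    exact (len_pos C[0]).ne' this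

theorem isACycle_cycleList (d : Γ.Arrow) : Γ.IsACycle K (Γ.cycleList d) := by
  refine ⟨isNonzeroSeq_cycleList d, fun C hC h => ?_⟩
  obtain ⟨d', h1, h2⟩ := hC.exists_eq
  have hd : d ∈ C := h.subset (mem_cycleList.2 rfl)
  rw [h1] at hd
  obtain ⟨k, -, rfl⟩ := List.mem_map.1 hd
  refine (h.eq_of_length_le ?_).symm
  simpa [cycleList, len_iterate] using h2

theorem IsACycle.exists_eq {C : List Γ.Arrow} (hC : Γ.IsACycle K C) :
    ∃ d, C = Γ.cycleList d := by
  obtain ⟨d, h1, h2⟩ := hC.1.exists_eq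
  refine ⟨d, (hC.2 _ (isNonzeroSeq_cycleList d) ?_).symm⟩
  apply List.IsPrefix.isInfix
  rw [h1]
  apply List.IsPrefix.map
  rw [List.prefix_iff_eq_take]
  simp [List.take_range, h2]

end BrauerTree

section LinearAlgebra

open PowerSeries Matrix

/-- A subalgebra of `End U` all of whose elements have only one eigenvalue has a common
eigenvector. -/
theorem exists_common_eigenvector {K U : Type*} [Field K] [AddCommGroup U] [Module K U]
    [FiniteDimensional K U] [Nontrivial U] (Z : Subalgebra K (Module.End K U))
    (hZ : ∀ z ∈ Z, ∃ r : K, IsNilpotent (z - algebraMap K _ r)) :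
    ∃ w : U, w ≠ 0 ∧ ∀ z ∈ Z, ∀ r : K, IsNilpotent (z - algebraMap K _ r) → z w = r • w := by
  let orb : U → Submodule K U := fun w =>
    (Subalgebra.toSubmodule Z).map (LinearMap.applyₗ (R := K) (M := U) (M₂ := U) w)
  have horb : ∀ {w v}, v ∈ orb w ↔ ∃ z ∈ Z, z w = v := fun {w v} => Iff.rfl
  obtain ⟨_, ⟨w, hw, rfl⟩, hmin⟩ := WellFounded.has_min
    (wellFounded_lt (α := Submodule K U)) {W | ∃ w : U, w ≠ 0 ∧ W = orb w}
    (by obtain ⟨w, hw⟩ := exists_ne (0 : U); exact ⟨_, w, hw, rfl⟩)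
  have hnil : ∀ z ∈ Z, IsNilpotent z → z w = 0 := by
    intro z hz hzn
    by_contra h
    have hle : orb (z w) ≤ orb w := by
      rintro _ ⟨z', hz', rfl⟩
      exact horb.2 ⟨z' * z, mul_mem hz' hz, rfl⟩
    have heq : orb (z w) = orb w := by
      by_contra hne
      exact hmin _ ⟨_, h, rfl⟩ (lt_of_le_of_ne hle hne)
    have hmem : w ∈ orb (z w) := heq ▸ horb.2 ⟨1, one_mem _, rfl⟩
    obtain ⟨z', hz', hfix⟩ := horb.1 hmem
    obtain ⟨r, hr⟩ := hZ (z' * z) (mul_mem hz' hz)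
    by_cases hr0 : r = 0
    · rw [hr0, map_zero, sub_zero] at hr
      obtain ⟨n, hn⟩ := hr
      have hfixn : ∀ n : ℕ, ((z' * z) ^ n) w = w := by
        intro n
        induction n with
        | zero => rfl
        | succ n ih => rw [pow_succ, Module.End.mul_apply, Module.End.mul_apply, hfix, ih]
      apply hw
      rw [← hfixn n, hn, LinearMap.zero_apply]
    · have hu : IsUnit (z' * z) := by
        have h1 : IsUnit (algebraMap K (Module.End K U) r) := (IsUnit.mk0 r hr0).map _
        have := hr.isUnit_add_left_of_commute h1 (Algebra.commutes r _).symm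
        rwa [add_sub_cancel] at this
      have hinj : Function.Injective z := by
        have h2 := ((Module.End.isUnit_iff _).1 hu).injective
        exact Function.Injective.of_comp (f := z') h2
      obtain ⟨n, hn⟩ := hzn
      have : Function.Injective (z ^ n) := by
        rw [Module.End.coe_pow]
        exact hinj.iterate n
      rw [hn] at this
      exact hw (this rfl)
  refine ⟨w, hw, fun z hz r hr => ?_⟩
  have := hnil _ (sub_mem hz (Subalgebra.algebraMap_mem Z r)) hr
  rwa [LinearMap.sub_apply, Module.algebraMap_end_apply, sub_eq_zero] at this

variable {K : Type*} [Field K]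

theorem exists_X_pow_smul {ι : Type*} [Finite ι] {u : ι → K⟦X⟧} (hu : u ≠ 0) :
    ∃ (n : ℕ) (v : ι → K⟦X⟧), u = (X : K⟦X⟧) ^ n • v ∧ ∃ i, ¬ X ∣ v i := by
  classical
  obtain ⟨i, hi⟩ := Function.ne_iff.1 hu
  have hex : ∃ n : ℕ, ¬ ∀ j, (X : K⟦X⟧) ^ n ∣ u j := by
    obtain ⟨n, hn⟩ := PowerSeries.exists_coeff_ne_zero_iff_ne_zero.2 hi
    refine ⟨n + 1, fun h => hn ?_⟩
    exact PowerSeries.X_pow_dvd_iff.1 (h i) n n.lt_succ_self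
  have h0 : Nat.find hex ≠ 0 := by
    intro h
    apply Nat.find_spec hex
    intro j
    rw [h, pow_zero]
    exact one_dvd _
  obtain ⟨n, hn⟩ := Nat.exists_eq_succ_of_ne_zero h0
  have h1 := Nat.find_min hex (m := n) (by omega)
  push Not at h1
  choose v hv using h1
  refine ⟨n, v, funext hv, ?_⟩
  have h2 := Nat.find_spec hex
  rw [hn] at h2
  push Not at h2
  obtain ⟨j, hj⟩ := h2
  refine ⟨j, fun h => hj ?_⟩
  rw [hv j, pow_succ]
  exact mul_dvd_mul_left _ h

theorem exists_vecMul_eq_zero {R ι κ : Type*} [CommRing R] [IsDomain R] [Fintype ι] [Fintype κ]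
    (S : Finset ι) (Q : Finset κ) (F : Matrix ι κ R) (hF : ∀ p q, q ∉ Q → F p q = 0)
    (hSQ : Q.card < S.card) :
    ∃ u : ι → R, u ≠ 0 ∧ (∀ p ∉ S, u p = 0) ∧ u ᵥ* F = 0 := by
  classical
  let G : (S → R) →ₗ[R] (Q → R) := (F.submatrix (Subtype.val : S → ι) (Subtype.val : Q → κ)).vecMulLinear
  have hker : LinearMap.ker G ≠ ⊥ := by
    intro h
    have := LinearMap.finrank_le_finrank_of_injective (LinearMap.ker_eq_bot.1 h)
    simp only [Module.finrank_fintype_fun_eq_card, Fintype.card_coe] at this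
    omega
  obtain ⟨x, hx, hx0⟩ := (Submodule.ne_bot_iff _).1 hker
  refine ⟨fun p => if h : p ∈ S then x ⟨p, h⟩ else 0, ?_, fun p hp => dif_neg hp, ?_⟩
  · intro h
    apply hx0
    funext p
    have := congrFun h p.1
    simpa using this
  · funext q
    by_cases hq : q ∈ Q
    · have h1 : G x ⟨q, hq⟩ = 0 := by rw [LinearMap.mem_ker.1 hx]; rfl
      have h2 : G x ⟨q, hq⟩ = ∑ p : S, x p * F p q := rfl
      rw [h2] at h1
      refine Eq.trans ?_ h1
      simp only [Matrix.vecMul, dotProduct]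
      rw [← Finset.sum_subset (Finset.subset_univ S), ← Finset.sum_coe_sort S]
      · exact Finset.sum_congr rfl fun p _ => by rw [dif_pos p.2]
      · intro p _ hp
        rw [dif_neg hp, zero_mul]
    · simp [Matrix.vecMul, dotProduct, hF _ q hq]

universe k

variable {ι Z : Type*} {κ : Type k} [Fintype ι] [Fintype κ] [DecidableEq ι]

/-- The local contribution of a vertex of the tree. The left kernel of `F` is a nonzero module over
the algebra `Z`, all of whose elements have a single eigenvalue `lam z` modulo `X`; it contains a
common eigenvector `w` modulo `X`. -/
theorem exists_eigenvector_of_card_lt (S : Finset ι) (Q : Finset κ) (F : Matrix ι κ K⟦X⟧)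
    (hF : ∀ p q, q ∉ Q → F p q = 0) (hSQ : Q.card < S.card)
    (α : Z → Matrix ι ι K⟦X⟧) (β : Z → Matrix κ κ K⟦X⟧) (hαβ : ∀ z, α z * F = F * β z)
    (hS : ∀ z p p', p' ∉ S → α z p p' = 0)
    (hadd : ∀ z z', ∃ z'', α z'' = α z + α z') (hmul : ∀ z z', ∃ z'', α z'' = α z * α z')
    (hsmul : ∀ (r : K) z, ∃ z', α z' = PowerSeries.C r • α z)
    (hone : ∃ z, α z = diagonal fun p => if p ∈ S then 1 else 0)
    (lam : Z → K) (hnil : ∀ z, ∃ n : ℕ, ∀ i j, X ∣ ((α z - PowerSeries.C (lam z) •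
      (diagonal fun p => if p ∈ S then 1 else 0 : Matrix ι ι K⟦X⟧)) ^ n : Matrix ι ι K⟦X⟧) i j) :
    ∃ w ξ : ι → K⟦X⟧, (∀ p ∉ S, w p = 0) ∧ (∀ p ∉ S, ξ p = 0) ∧ w ᵥ* F = 0 ∧ w ⬝ᵥ ξ = 1 ∧
      (∀ z, PowerSeries.constantCoeff (R := K) ((w ᵥ* α z) ⬝ᵥ ξ) = lam z) ∧
      ∀ (x : Z) (r : K) (s : Matrix κ ι K⟦X⟧),
        (X : K⟦X⟧) • α x = (PowerSeries.C r * X) • vecMulVec ξ w + F * s →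
          lam x = r ∧ (Q.card + 2 ≤ S.card → lam x = 0) := by
  classical
  have hX : (X : K⟦X⟧) ≠ 0 := PowerSeries.X_ne_zero
  set cc : K⟦X⟧ →+* K := PowerSeries.constantCoeff (R := K) with hcc
  set E : Matrix ι ι K⟦X⟧ := diagonal fun p => if p ∈ S then 1 else 0 with hE
  have hEu : ∀ u : ι → K⟦X⟧, (∀ p ∉ S, u p = 0) → u ᵥ* E = u := by
    intro u hu
    funext p
    rw [hE, vecMul_diagonal]
    split_ifs with h
    · exact mul_one _
    · rw [hu p h, mul_zero]
  let L : Submodule K (ι → K⟦X⟧) :=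
    { carrier := {u | (∀ p ∉ S, u p = 0) ∧ u ᵥ* F = 0}
      add_mem' := fun {u v} hu hv => ⟨fun p hp => by rw [Pi.add_apply, hu.1 p hp, hv.1 p hp, add_zero],
        by rw [add_vecMul, hu.2, hv.2, add_zero]⟩
      zero_mem' := ⟨fun _ _ => rfl, zero_vecMul _⟩
      smul_mem' := fun r u hu => ⟨fun p hp => by rw [Pi.smul_apply, hu.1 p hp, smul_zero],
        by rw [smul_vecMul, hu.2, smul_zero]⟩ }
  have hL : ∀ {u}, u ∈ L ↔ (∀ p ∉ S, u p = 0) ∧ u ᵥ* F = 0 := Iff.rfl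
  have hsat : ∀ {u : ι → K⟦X⟧}, u ≠ 0 → (∀ p ∉ S, u p = 0) → ∀ {κ' : Type k} [Fintype κ']
      (F' : Matrix ι κ' K⟦X⟧), u ᵥ* F' = 0 →
      ∃ v, (∀ p ∉ S, v p = 0) ∧ v ᵥ* F' = 0 ∧ ∃ i, ¬ X ∣ v i := by
    intro u hu hus κ' _ F' huF
    obtain ⟨n, v, rfl, hv⟩ := exists_X_pow_smul hu
    have hn : (X : K⟦X⟧) ^ n ≠ 0 := pow_ne_zero _ hX
    refine ⟨v, fun p hp => ?_, ?_, hv⟩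
    · have := hus p hp
      rw [Pi.smul_apply, smul_eq_mul] at this
      exact (mul_eq_zero.1 this).resolve_left hn
    · rw [smul_vecMul] at huF
      exact (smul_eq_zero.1 huF).resolve_left hn
  have hαL : ∀ z, ∀ u ∈ L, u ᵥ* α z ∈ L := by
    intro z u hu
    refine hL.2 ⟨fun p hp => ?_, ?_⟩
    · simp [vecMul, dotProduct, hS z _ p hp]
    · rw [vecMul_vecMul, hαβ, ← vecMul_vecMul, hu.2, zero_vecMul]
  let red : (ι → K⟦X⟧) →ₗ[K] (ι → K) :=
    LinearMap.pi fun i => (PowerSeries.coeff (R := K) 0).comp (LinearMap.proj i)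
  have hred : ∀ u i, red u i = cc (u i) := fun u i => by simp [red, hcc]
  have hred_mul : ∀ u (A : Matrix ι ι K⟦X⟧), red (u ᵥ* A) = red u ᵥ* A.map cc := by
    intro u A
    funext i
    have h : (cc ∘ u : ι → K) = red u := funext fun j => (hred u j).symm
    rw [hred, RingHom.map_vecMul, h]
  have hred_C : ∀ u (r : K), red (PowerSeries.C r • u) = r • red u := by
    intro u r
    funext i
    simp [hred, hcc]
  have hred_ne : ∀ {v : ι → K⟦X⟧}, (∃ i, ¬ X ∣ v i) → red v ≠ 0 := by
    rintro v ⟨i, hi⟩ h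
    apply hi
    rw [PowerSeries.X_dvd_iff, ← hcc, ← hred, h, Pi.zero_apply]
  let W := L.map red
  have hnilW : ∀ z, ∃ n : ℕ, ((α z).map cc - lam z • E.map cc) ^ n = 0 := by
    intro z
    obtain ⟨n, hn⟩ := hnil z
    refine ⟨n, ?_⟩
    have h1 : (α z).map cc - lam z • E.map cc = cc.mapMatrix (α z - PowerSeries.C (lam z) • E) := by
      ext i j
      simp [hcc]
    rw [h1, ← map_pow]
    ext i j
    exact PowerSeries.X_dvd_iff.1 (hn i j)
  have hWE : ∀ x ∈ W, x ᵥ* E.map cc = x := by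
    rintro _ ⟨u, hu, rfl⟩
    rw [← hred_mul, hEu u hu.1]
  have hWα : ∀ z, ∀ x ∈ W, x ᵥ* (α z).map cc ∈ W := by
    rintro z _ ⟨u, hu, rfl⟩
    exact ⟨_, hαL z u hu, hred_mul _ _⟩
  have hpow : ∀ z (x : W) (T : Module.End K W), (∀ x : W, (T x : ι → K) = x.1 ᵥ* (α z).map cc) →
      ∀ n : ℕ, (((T - algebraMap K _ (lam z)) ^ n) x : ι → K) =
        x.1 ᵥ* (((α z).map cc - lam z • E.map cc) ^ n) := by
    intro z x T hT n
    induction n generalizing x with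
    | zero => simp
    | succ n ih =>
      rw [pow_succ, Module.End.mul_apply, ih, pow_succ' (_ - _), ← vecMul_vecMul]
      congr 1
      rw [LinearMap.sub_apply, Module.algebraMap_end_apply, Submodule.coe_sub, hT, vecMul_sub,
        vecMul_smul, hWE _ x.2]
      rfl
  let Zs : Subalgebra K (Module.End K W) :=
    { carrier := {T | ∃ z, ∀ x : W, (T x : ι → K) = x.1 ᵥ* (α z).map cc}
      mul_mem' := by
        rintro T T' ⟨z, hz⟩ ⟨z', hz'⟩
        obtain ⟨z'', h⟩ := hmul z' z
        refine ⟨z'', fun x => ?_⟩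
        rw [Module.End.mul_apply, hz, hz', vecMul_vecMul, h, Matrix.map_mul]
      add_mem' := by
        rintro T T' ⟨z, hz⟩ ⟨z', hz'⟩
        obtain ⟨z'', h⟩ := hadd z z'
        refine ⟨z'', fun x => ?_⟩
        rw [LinearMap.add_apply, Submodule.coe_add, hz, hz', h,
          Matrix.map_add _ (map_add cc), vecMul_add]
      algebraMap_mem' := by
        intro r
        obtain ⟨z, hz⟩ := hone
        obtain ⟨z', hz'⟩ := hsmul r z
        refine ⟨z', fun x => ?_⟩
        have h1 : (α z').map cc = r • E.map cc := by
          rw [hz', hz]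
          ext i j
          simp [hcc]
        rw [Module.algebraMap_end_apply, h1, vecMul_smul, hWE _ x.2]
        rfl }
  have hT : ∀ z, ∃ T ∈ Zs, ∀ x : W, (T x : ι → K) = x.1 ᵥ* (α z).map cc := by
    intro z
    let T : Module.End K W := ((α z).map cc).vecMulLinear.restrict (hWα z)
    exact ⟨T, ⟨z, fun x => rfl⟩, fun x => rfl⟩
  obtain ⟨u₀, hu₀, hu₀S, hu₀F⟩ := exists_vecMul_eq_zero S Q F hF hSQ
  obtain ⟨v₀, hv₀S, hv₀F, hv₀⟩ := hsat hu₀ hu₀S F hu₀F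
  have : Nontrivial W :=
    ⟨⟨⟨red v₀, v₀, ⟨hv₀S, hv₀F⟩, rfl⟩, 0, fun h => hred_ne hv₀ (congrArg Subtype.val h)⟩⟩
  have hnilT : ∀ z (T : Module.End K W), (∀ x : W, (T x : ι → K) = x.1 ᵥ* (α z).map cc) →
      IsNilpotent (T - algebraMap K _ (lam z)) := by
    intro z T hT
    obtain ⟨n, hn⟩ := hnilW z
    refine ⟨n, ?_⟩
    ext1 x
    apply Subtype.ext
    rw [hpow z x T hT, hn, vecMul_zero]
    rfl
  have hZs : ∀ T ∈ Zs, ∃ r : K, IsNilpotent (T - algebraMap K _ r) := by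
    rintro T ⟨z, hz⟩
    exact ⟨lam z, hnilT z T hz⟩
  obtain ⟨x, hw0, heig⟩ := exists_common_eigenvector Zs hZs
  obtain ⟨w, hw, hwx⟩ := x.2
  have hw0' : red w ≠ 0 := fun h => hw0 (Subtype.ext (hwx.symm.trans h))
  have heig' : ∀ z, red w ᵥ* (α z).map cc = lam z • red w := by
    intro z
    obtain ⟨T, hTZ, hT⟩ := hT z
    rw [hwx, ← hT x, heig T hTZ _ (hnilT z T hT)]
    rfl
  obtain ⟨i₀, hi₀⟩ := Function.ne_iff.1 hw0'
  have hunit : IsUnit (w i₀) := by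
    rw [PowerSeries.isUnit_iff_constantCoeff, isUnit_iff_ne_zero, ← hcc, ← hred]
    exact hi₀
  obtain ⟨b, hb⟩ := hunit.exists_right_inv
  have hi₀S : i₀ ∈ S := by
    by_contra h
    rw [hred, hw.1 i₀ h] at hi₀
    exact hi₀ (map_zero cc)
  have hξ : w ⬝ᵥ Pi.single i₀ b = 1 := by rw [dotProduct_single, hb]
  refine ⟨w, Pi.single i₀ b, hw.1, fun p hp => Pi.single_eq_of_ne (fun h => hp (by rwa [h])) _,
    hw.2, hξ, ?_, ?_⟩
  · intro z
    rw [dotProduct_single, map_mul, ← hred, hred_mul, heig', Pi.smul_apply, hred, smul_eq_mul,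
      mul_assoc, ← map_mul, hb, map_one, mul_one]
  · intro x r s h
    have hact : ∀ u ∈ L, u ᵥ* α x = (PowerSeries.C r * (u ⬝ᵥ Pi.single i₀ b)) • w := by
      intro u hu
      have h1 : (X : K⟦X⟧) • (u ᵥ* α x) =
          (X : K⟦X⟧) • ((PowerSeries.C r * (u ⬝ᵥ Pi.single i₀ b)) • w) := by
        rw [← vecMul_smul, h, vecMul_add, vecMul_smul, ← vecMul_vecMul, hu.2, zero_vecMul, add_zero,
          vecMul_vecMulVec, smul_smul, smul_smul]
        congr 1
        ring
      exact smul_right_injective _ hX h1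
    have hlam : lam x = r := by
      have h1 := hact w hw
      rw [hξ, mul_one] at h1
      have h2 := heig' x
      rw [← hred_mul, h1, hred_C] at h2
      have h3 := congrFun h2 i₀
      simp only [Pi.smul_apply, smul_eq_mul] at h3
      exact (mul_right_cancel₀ hi₀ h3).symm
    refine ⟨hlam, fun hcard => ?_⟩
    let F' : Matrix ι (Option κ) K⟦X⟧ := Matrix.of fun p q => q.elim ((Pi.single i₀ b : ι → K⟦X⟧) p) (F p)
    obtain ⟨u, hu0, huS, huF⟩ := exists_vecMul_eq_zero S (Finset.insertNone Q) F' (by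
      intro p q hq
      cases q with
      | none => simp at hq
      | some q => exact hF p q (by simpa using hq)) (by rw [Finset.card_insertNone]; omega)
    obtain ⟨v, hvS, hvF, hv⟩ := hsat hu0 huS F' huF
    have hvL : v ∈ L := ⟨hvS, funext fun q => congrFun hvF (some q)⟩
    have hvξ : v ⬝ᵥ Pi.single i₀ b = 0 := congrFun hvF none
    have h1 := hact v hvL
    rw [hvξ, mul_zero, zero_smul] at h1
    obtain ⟨n, hn⟩ := hnilW x
    have h2 : ∀ n : ℕ, red v ᵥ* (((α x).map cc - lam x • E.map cc) ^ n) = (-lam x) ^ n • red v := by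
      intro n
      induction n with
      | zero => simp
      | succ n ih =>
        rw [pow_succ', ← vecMul_vecMul, vecMul_sub, ← hred_mul, h1, map_zero, zero_sub, vecMul_smul,
          hWE _ ⟨v, hvL, rfl⟩, ← neg_smul, smul_vecMul, ih, smul_smul, pow_succ']
    have h3 := h2 n
    rw [hn, vecMul_zero, eq_comm, smul_eq_zero] at h3
    have h4 := h3.resolve_right (hred_ne hv)
    exact neg_eq_zero.1 (eq_zero_of_pow_eq_zero h4)

end LinearAlgebra

namespace BrauerTree

open PowerSeries Classical Matrix

variable {V : Type v} [Finite V] {Γ : BrauerTree V} {K : Type u} [Field K]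
variable {ι κ μ : Type} [Fintype ι] [Fintype κ] [Fintype μ]

variable (Γ K) in
/-- Matrices of morphisms of the order. -/
def matLam (src : ι → Γ.Edge) (snk : κ → Γ.Edge) : Submodule K⟦X⟧ (Matrix ι κ (V → K⟦X⟧)) where
  carrier := {A | ∀ p q, A p q ∈ Γ.Lam K (src p) (snk q)}
  add_mem' hA hB p q := add_mem (hA p q) (hB p q)
  zero_mem' _ _ := zero_mem _
  smul_mem' r _ hA p q := Submodule.smul_mem _ r (hA p q)

variable {src : ι → Γ.Edge} {snk : κ → Γ.Edge} {tgt : μ → Γ.Edge}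

theorem mul_mem_matLam {A : Matrix ι κ (V → K⟦X⟧)} {B : Matrix κ μ (V → K⟦X⟧)}
    (hA : A ∈ Γ.matLam K src snk) (hB : B ∈ Γ.matLam K snk tgt) : A * B ∈ Γ.matLam K src tgt := by
  intro p q
  rw [Matrix.mul_apply]
  exact sum_mem fun r _ => mul_mem_Lam (hA p r) (hB r q)

variable (K) in
/-- The identity matrix of the order. -/
noncomputable def matOne (src : ι → Γ.Edge) : Matrix ι ι (V → K⟦X⟧) :=
  Matrix.diagonal fun p => Γ.oneAt K (src p)

theorem matOne_mem : matOne K src ∈ Γ.matLam K src src := by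
  intro p q
  by_cases h : p = q
  · subst h
    rw [matOne, Matrix.diagonal_apply_eq]
    exact oneAt_mem _
  · rw [matOne, Matrix.diagonal_apply_ne _ h]
    exact zero_mem _

theorem matOne_mul {A : Matrix ι κ (V → K⟦X⟧)} (hA : A ∈ Γ.matLam K src snk) :
    matOne K src * A = A := by
  ext1 p q
  rw [matOne, Matrix.diagonal_mul, oneAt_mul (hA p q)]

theorem mul_matOne {A : Matrix ι κ (V → K⟦X⟧)} (hA : A ∈ Γ.matLam K src snk) :
    A * matOne K snk = A := by
  ext1 p q
  rw [matOne, Matrix.mul_diagonal, mul_oneAt (hA p q)]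

/-- The component of a matrix at the vertex `c` of the tree. -/
noncomputable def evM (c : V) (A : Matrix ι κ (V → K⟦X⟧)) : Matrix ι κ K⟦X⟧ :=
  A.map (Pi.evalRingHom (fun _ : V => K⟦X⟧) c)

@[simp] theorem evM_apply (c : V) (A : Matrix ι κ (V → K⟦X⟧)) (p : ι) (q : κ) :
    evM c A p q = A p q c := rfl

theorem evM_mul (c : V) (A : Matrix ι κ (V → K⟦X⟧)) (B : Matrix κ μ (V → K⟦X⟧)) :
    evM c (A * B) = evM c A * evM c B := Matrix.map_mul

theorem evM_add (c : V) (A B : Matrix ι κ (V → K⟦X⟧)) : evM c (A + B) = evM c A + evM c B := rfl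

theorem evM_sub (c : V) (A B : Matrix ι κ (V → K⟦X⟧)) : evM c (A - B) = evM c A - evM c B := rfl

theorem evM_smul (c : V) (r : K⟦X⟧) (A : Matrix ι κ (V → K⟦X⟧)) :
    evM c (r • A) = r • evM c A := rfl

theorem evM_pow (c : V) (A : Matrix ι ι (V → K⟦X⟧)) (n : ℕ) :
    evM c (A ^ n) = evM c A ^ n := Matrix.map_pow _ _ _

theorem evM_matOne (c : V) : evM c (matOne K src) =
    Matrix.diagonal fun p => if p ∈ Finset.univ.filter (fun p => Γ.Inc (src p) c) then 1 else 0 := by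
  ext1 p q
  rw [evM_apply, matOne]
  by_cases h : p = q
  · subst h
    simp [oneAt]
  · simp [h]

section Pairing

variable [Fintype V]

variable (Γ) in
/-- The symmetrizing form on square matrices over the order. -/
noncomputable def tau : Matrix ι ι (V → K⟦X⟧) →ₗ[K] K where
  toFun A := ∑ c, (Γ.sgn c : K) * PowerSeries.coeff (R := K) 1 (evM c A).trace
  map_add' A B := by
    simp only [evM_add, Matrix.trace_add, map_add, mul_add, Finset.sum_add_distrib]
  map_smul' r A := by
    have h : ∀ c, evM c (r • A) = r • evM c A := fun c => rfl
    simp only [h, Matrix.trace_smul, map_smul, smul_eq_mul, RingHom.id_apply, Finset.mul_sum]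
    exact Finset.sum_congr rfl fun c _ => by ring

theorem tau_apply (A : Matrix ι ι (V → K⟦X⟧)) :
    Γ.tau A = ∑ c, (Γ.sgn c : K) * PowerSeries.coeff (R := K) 1 (evM c A).trace := rfl

theorem tau_mul_comm (A : Matrix ι κ (V → K⟦X⟧)) (B : Matrix κ ι (V → K⟦X⟧)) :
    Γ.tau (A * B) = Γ.tau (B * A) := by
  simp only [tau_apply, evM_mul, Matrix.trace_mul_comm (evM _ A)]

theorem sum_sgn_mul {p : Γ.Edge} {x : V → K} (hx : ∀ c, ¬ Γ.Inc p c → x c = 0) (d : Γ.Arrow)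
    (hd : Γ.edge d = p) : ∑ c, (Γ.sgn c : K) * x c = Γ.sgn d.fst * (x d.fst - x d.snd) := by
  subst hd
  rw [← Finset.sum_subset (Finset.subset_univ {d.fst, d.snd}), Finset.sum_pair d.fst_ne_snd,
    sgn_fst d]
  · push_cast; ring
  · intro c _ hc
    rw [hx, mul_zero]
    intro h
    apply hc
    simpa using inc_edge_iff.1 h

theorem tau_X_smul {A : Matrix ι ι (V → K⟦X⟧)} (hA : A ∈ Γ.matLam K src src) :
    Γ.tau ((X : K⟦X⟧) • A) = 0 := by
  have h1 : ∀ c, PowerSeries.coeff (R := K) 1 (evM c ((X : K⟦X⟧) • A)).trace =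
      ∑ p, PowerSeries.constantCoeff (R := K) (A p p c) := by
    intro c
    rw [evM_smul, Matrix.trace_smul, smul_eq_mul, PowerSeries.coeff_succ_X_mul 0,
      PowerSeries.coeff_zero_eq_constantCoeff_apply, Matrix.trace, map_sum]
    rfl
  simp only [tau_apply, h1, Finset.mul_sum]
  rw [Finset.sum_comm]
  refine Finset.sum_eq_zero fun p _ => ?_
  obtain ⟨d, hd⟩ := exists_dart_edge (src p)
  rw [sum_sgn_mul (p := src p) (x := fun c => PowerSeries.constantCoeff (R := K) (A p p c)) ?_ d hd]
  · have := (hA p p).2.2 rfl d.fst d.snd (hd ▸ inc_edge_fst d) (hd ▸ inc_edge_snd d)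
    rw [PowerSeries.X_dvd_iff, map_sub] at this
    rw [this, mul_zero]
  · intro c hc
    rw [(hA p p).1 c (fun h => hc h.1), map_zero]

theorem single_X_mul_mem {p q : Γ.Edge} {c : V} (hp : Γ.Inc p c) (hq : Γ.Inc q c) (y : K⟦X⟧) :
    (Pi.single c (X * y) : V → K⟦X⟧) ∈ Γ.Lam K p q := by
  have h : ∀ c', X ∣ (Pi.single c (X * y) : V → K⟦X⟧) c' := by
    intro c'
    by_cases hc : c' = c
    · subst hc
      rw [Pi.single_eq_same]
      exact Dvd.intro _ rfl
    · rw [Pi.single_eq_of_ne hc]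
      exact dvd_zero _
  refine ⟨fun c' hc' => ?_, fun c' _ => h c', fun _ c' c'' _ _ => dvd_sub (h c') (h c'')⟩
  exact Pi.single_eq_of_ne (fun e => hc' (by rw [e]; exact ⟨hp, hq⟩)) _

theorem single_mem_of_ne {p q : Γ.Edge} (hpq : p ≠ q) {c : V} (hp : Γ.Inc p c) (hq : Γ.Inc q c)
    {y : K⟦X⟧} (hy : Γ.rk c q < Γ.rk c p → X ∣ y) :
    (Pi.single c y : V → K⟦X⟧) ∈ Γ.Lam K p q := by
  refine ⟨fun c' hc' => ?_, fun c' hc' => ?_, fun h => absurd h hpq⟩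
  · exact Pi.single_eq_of_ne (fun e => hc' (by rw [e]; exact ⟨hp, hq⟩)) _
  · by_cases hc : c' = c
    · subst hc
      rw [Pi.single_eq_same]
      exact hy hc'
    · rw [Pi.single_eq_of_ne hc]
      exact dvd_zero _

theorem exists_X_smul_of_pairing {p q : Γ.Edge} {x : V → K⟦X⟧} (hx : x ∈ Γ.Lam K p q)
    (h : ∀ y ∈ Γ.Lam K q p, ∑ c, (Γ.sgn c : K) * PowerSeries.coeff (R := K) 1 (x c * y c) = 0) :
    ∃ y ∈ Γ.Lam K p q, x = (X : K⟦X⟧) • y := by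
  have hsgn : ∀ c, (Γ.sgn c : K) ≠ 0 := fun c hc => by
    have := sgn_cast_mul_self (Γ := Γ) c K
    rw [hc, zero_mul] at this
    exact zero_ne_one this
  have hsingle : ∀ c y, (Pi.single c y : V → K⟦X⟧) ∈ Γ.Lam K q p →
      PowerSeries.coeff (R := K) 1 (x c * y) = 0 := by
    intro c y hy
    have := h _ hy
    rw [Finset.sum_eq_single c] at this
    · rw [Pi.single_eq_same] at this
      exact (mul_eq_zero.1 this).resolve_left (hsgn c)
    · intro c' _ hc'
      rw [Pi.single_eq_of_ne hc', mul_zero, map_zero, mul_zero]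
    · simp
  have h0 : ∀ c, X ∣ x c := by
    intro c
    by_cases hc : Γ.Inc p c ∧ Γ.Inc q c
    · have := hsingle c _ (single_X_mul_mem hc.2 hc.1 1)
      rw [mul_one, PowerSeries.coeff_succ_mul_X 0] at this
      rw [PowerSeries.X_dvd_iff]
      simpa using this
    · rw [hx.1 c hc]; exact dvd_zero _
  have hsq : ∀ y : K⟦X⟧, X ∣ y → PowerSeries.coeff (R := K) 1 y = 0 → X ^ 2 ∣ y := by
    intro y hy hy1
    rw [PowerSeries.X_pow_dvd_iff]
    intro m hm
    interval_cases m
    · simpa using PowerSeries.X_dvd_iff.1 hy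
    · exact hy1
  rw [exists_X_smul_iff hx]
  refine ⟨h0, fun c hlt => ?_, ?_⟩
  · by_cases hc : Γ.Inc p c ∧ Γ.Inc q c
    · refine hsq _ (h0 c) ?_
      have := hsingle c 1 (single_mem_of_ne (fun h => by rw [h] at hlt; exact lt_irrefl _ hlt)
        hc.2 hc.1 (fun h => absurd h hlt.asymm))
      rwa [mul_one] at this
    · rw [hx.1 c hc]; exact dvd_zero _
  · rintro rfl c c' hc hc'
    refine hsq _ (dvd_sub (h0 c) (h0 c')) ?_
    obtain ⟨d, rfl, rfl⟩ := hc.exists_dart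
    rcases inc_edge_iff.1 hc' with h' | h'
    · rw [h', sub_self, map_zero]
    · have h1 := h _ (oneAt_mem _)
      have h2 : ∀ c, x c * Γ.oneAt K (Γ.edge d) c = x c := fun c => congrFun (mul_oneAt hx) c
      simp only [h2] at h1
      rw [sum_sgn_mul (p := Γ.edge d) (x := fun c => PowerSeries.coeff (R := K) 1 (x c)) ?_ d rfl] at h1
      · rw [h', map_sub]
        exact (mul_eq_zero.1 h1).resolve_left (hsgn _)
      · intro c hc
        rw [hx.1 c (fun h => hc h.1), map_zero]

theorem tau_mul_single (A : Matrix ι κ (V → K⟦X⟧)) (p : ι) (q : κ) (y : V → K⟦X⟧) :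
    Γ.tau (A * Matrix.single q p y) =
      ∑ c, (Γ.sgn c : K) * PowerSeries.coeff (R := K) 1 (A p q c * y c) := by
  rw [tau_apply]
  refine Finset.sum_congr rfl fun c _ => ?_
  have h : (evM c (A * Matrix.single q p y)).trace = ((A * Matrix.single q p y).trace) c := by
    simp only [Matrix.trace, Finset.sum_apply]
    rfl
  rw [h, Matrix.trace_mul_single]
  rfl

theorem single_mem_matLam {p : ι} {q : κ} {y : V → K⟦X⟧} (hy : y ∈ Γ.Lam K (src p) (snk q)) :
    Matrix.single p q y ∈ Γ.matLam K src snk := by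
  intro p' q'
  rw [Matrix.single_apply]
  split_ifs with h
  · rw [← h.1, ← h.2]; exact hy
  · exact zero_mem _

theorem exists_X_smul_matLam {A : Matrix ι κ (V → K⟦X⟧)}
    (h : ∀ p q, ∃ y ∈ Γ.Lam K (src p) (snk q), A p q = (X : K⟦X⟧) • y) :
    ∃ B ∈ Γ.matLam K src snk, A = (X : K⟦X⟧) • B := by
  choose B hB hAB using h
  exact ⟨Matrix.of B, hB, by ext1 p q; exact hAB p q⟩

theorem exists_X_smul_of_tau {A : Matrix ι κ (V → K⟦X⟧)} (hA : A ∈ Γ.matLam K src snk)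
    (h : ∀ B ∈ Γ.matLam K snk src, Γ.tau (A * B) = 0) :
    ∃ B ∈ Γ.matLam K src snk, A = (X : K⟦X⟧) • B :=
  exists_X_smul_matLam fun p q => exists_X_smul_of_pairing (hA p q) fun y hy => by
    rw [← tau_mul_single]
    exact h _ (single_mem_matLam hy)

/-- Every functional on matrices of morphisms modulo `X` is given by the symmetrizing form. -/
theorem exists_tau_eq (hdis : ∀ p q, src p ≠ snk q) (φ : Matrix ι κ (V → K⟦X⟧) →ₗ[K] K)
    (hφ : ∀ h ∈ Γ.matLam K src snk, φ ((X : K⟦X⟧) • h) = 0) :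
    ∃ s ∈ Γ.matLam K snk src, ∀ h ∈ Γ.matLam K src snk, φ h = Γ.tau (h * s) := by
  let ε : V → ι → κ → ℕ := fun c p q => if Γ.rk c (snk q) < Γ.rk c (src p) then 1 else 0
  have hε : ∀ c p q, (ε c p q = 1 ∧ Γ.rk c (snk q) < Γ.rk c (src p)) ∨
      (ε c p q = 0 ∧ ¬ Γ.rk c (snk q) < Γ.rk c (src p)) := by
    intro c p q
    by_cases h : Γ.rk c (snk q) < Γ.rk c (src p)
    · exact Or.inl ⟨if_pos h, h⟩
    · exact Or.inr ⟨if_neg h, h⟩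
  let s : Matrix κ ι (V → K⟦X⟧) := Matrix.of fun q p c =>
    if Γ.Inc (src p) c ∧ Γ.Inc (snk q) c then
      PowerSeries.C ((Γ.sgn c : K) * φ (Matrix.single p q (Pi.single c (X ^ ε c p q)))) *
        X ^ (1 - ε c p q) else 0
  have hs : ∀ q p c, s q p c = if Γ.Inc (src p) c ∧ Γ.Inc (snk q) c then
      PowerSeries.C ((Γ.sgn c : K) * φ (Matrix.single p q (Pi.single c (X ^ ε c p q)))) *
        X ^ (1 - ε c p q) else 0 := fun _ _ _ => rfl
  have hsmem : s ∈ Γ.matLam K snk src := by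
    intro q p
    refine ⟨fun c hc => ?_, fun c hc => ?_, fun h => absurd h.symm (hdis p q)⟩
    · rw [hs, if_neg (fun h => hc h.symm)]
    · rw [hs]
      split_ifs
      · rcases hε c p q with h | h
        · exact absurd h.2 hc.asymm
        · rw [h.1]
          exact Dvd.intro_left _ (by rw [tsub_zero, pow_one])
      · exact dvd_zero _
  have hterm : ∀ h ∈ Γ.matLam K src snk, ∀ p q c,
      φ (Matrix.single p q (Pi.single c (h p q c))) =
        (Γ.sgn c : K) * PowerSeries.coeff (R := K) 1 (h p q c * s q p c) := by
    intro h hh p q c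
    rw [hs]
    split_ifs with hc
    · have hdvd : X ^ ε c p q ∣ h p q c := by
        rcases hε c p q with h' | h'
        · rw [h'.1, pow_one]; exact (hh p q).2.1 c h'.2
        · rw [h'.1, pow_zero]; exact one_dvd _
      obtain ⟨y, hy⟩ := hdvd
      obtain ⟨y', hy'⟩ : X ∣ y - PowerSeries.C (PowerSeries.constantCoeff (R := K) y) := by
        rw [PowerSeries.X_dvd_iff]; simp
      have e1 : Matrix.single p q (Pi.single c (h p q c) : V → K⟦X⟧) =
          PowerSeries.constantCoeff (R := K) y • Matrix.single p q (Pi.single c (X ^ ε c p q)) +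
          (X : K⟦X⟧) • Matrix.single p q (Pi.single c (X ^ ε c p q * y')) := by
        rw [Matrix.smul_single, Matrix.smul_single, ← Matrix.single_add, ← Pi.single_smul,
          ← Pi.single_smul, ← Pi.single_add, PowerSeries.smul_eq_C_mul, smul_eq_mul]
        congr 2
        linear_combination hy + X ^ ε c p q * hy'
      have hmem : (Pi.single c (X ^ ε c p q * y') : V → K⟦X⟧) ∈ Γ.Lam K (src p) (snk q) := by
        refine single_mem_of_ne (hdis p q) hc.1 hc.2 fun hlt => ?_
        rcases hε c p q with h' | h'
        · rw [h'.1, pow_one]; exact Dvd.intro _ rfl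
        · exact absurd hlt h'.2
      rw [e1, map_add, hφ _ (single_mem_matLam hmem), add_zero, map_smul, smul_eq_mul]
      have e2 : h p q c * (PowerSeries.C ((Γ.sgn c : K) *
          φ (Matrix.single p q (Pi.single c (X ^ ε c p q)))) * X ^ (1 - ε c p q)) =
          PowerSeries.C ((Γ.sgn c : K) * φ (Matrix.single p q (Pi.single c (X ^ ε c p q)))) *
            (y * X) := by
        have e3 : (X : K⟦X⟧) ^ ε c p q * X ^ (1 - ε c p q) = X := by
          rcases hε c p q with h' | h' <;> rw [h'.1] <;> simp
        rw [hy]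
        linear_combination (y * PowerSeries.C ((Γ.sgn c : K) *
          φ (Matrix.single p q (Pi.single c (X ^ ε c p q))))) * e3
      rw [e2, PowerSeries.coeff_C_mul, PowerSeries.coeff_succ_mul_X 0,
        PowerSeries.coeff_zero_eq_constantCoeff_apply]
      linear_combination (- PowerSeries.constantCoeff (R := K) y *
        φ (Matrix.single p q (Pi.single c (X ^ ε c p q)))) * sgn_cast_mul_self (Γ := Γ) c K
    · rw [(hh p q).1 c hc]
      simp
  refine ⟨s, hsmem, fun h hh => ?_⟩
  have e1 : h = ∑ p, ∑ q, ∑ c, Matrix.single p q (Pi.single c (h p q c)) := by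
    conv_lhs => rw [Matrix.matrix_eq_sum_single h]
    refine Finset.sum_congr rfl fun p _ => Finset.sum_congr rfl fun q _ => ?_
    have e2 : h p q = ∑ c, Pi.single c (h p q c) := (Finset.univ_sum_single (h p q)).symm
    conv_lhs => rw [e2]
    exact map_sum (Matrix.singleAddMonoidHom p q) _ _
  have e3 : ∀ c, PowerSeries.coeff (R := K) 1 (evM c (h * s)).trace =
      ∑ p, ∑ q, PowerSeries.coeff (R := K) 1 (h p q c * s q p c) := by
    intro c
    simp only [evM_mul, Matrix.trace, Matrix.diag_apply, Matrix.mul_apply, map_sum, evM_apply]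
  rw [tau_apply]
  conv_lhs => rw [e1]
  simp only [map_sum, e3, Finset.mul_sum, hterm h hh]
  rw [eq_comm, Finset.sum_comm]
  exact Finset.sum_congr rfl fun p _ => Finset.sum_comm

variable {f : Matrix ι κ (V → K⟦X⟧)}

/-- A pair of matrices that is orthogonal to all endomorphisms of the complex `f` is null-homotopic
modulo `X`. -/
theorem exists_homotopy_of_orthogonal (hf : f ∈ Γ.matLam K src snk) (hdis : ∀ p q, src p ≠ snk q)
    (hrig : ∀ h ∈ Γ.matLam K src snk, ∃ a ∈ Γ.matLam K src src, ∃ b ∈ Γ.matLam K snk snk,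
      h = a * f - f * b)
    {ya : Matrix ι ι (V → K⟦X⟧)} {yb : Matrix κ κ (V → K⟦X⟧)} (hya : ya ∈ Γ.matLam K src src)
    (hyb : yb ∈ Γ.matLam K snk snk)
    (hy : ∀ a ∈ Γ.matLam K src src, ∀ b ∈ Γ.matLam K snk snk, a * f = f * b →
      Γ.tau (ya * a) = Γ.tau (yb * b)) :
    ∃ s ∈ Γ.matLam K snk src, ∃ xa ∈ Γ.matLam K src src, ∃ xb ∈ Γ.matLam K snk snk,
      ya - f * s = (X : K⟦X⟧) • xa ∧ yb - s * f = (X : K⟦X⟧) • xb := by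
  let C := (Γ.matLam K src src).restrictScalars K
  let D := (Γ.matLam K snk snk).restrictScalars K
  let H := (Γ.matLam K src snk).restrictScalars K
  let δ : (C × D) →ₗ[K] H :=
    { toFun := fun ab => ⟨ab.1.1 * f - f * ab.2.1,
        sub_mem (mul_mem_matLam ab.1.2 hf) (mul_mem_matLam hf ab.2.2)⟩
      map_add' := fun x y => Subtype.ext (by
        simp only [Prod.fst_add, Prod.snd_add, Submodule.coe_add, Matrix.add_mul, Matrix.mul_add]
        abel)
      map_smul' := fun r x => Subtype.ext (by
        simp only [Prod.smul_fst, Prod.smul_snd, Submodule.coe_smul, Matrix.smul_mul,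
          Matrix.mul_smul, RingHom.id_apply, smul_sub]) }
  let ψ : (C × D) →ₗ[K] K :=
    { toFun := fun ab => Γ.tau (ya * ab.1.1) - Γ.tau (yb * ab.2.1)
      map_add' := fun x y => by
        simp only [Prod.fst_add, Prod.snd_add, Submodule.coe_add, Matrix.mul_add, map_add]
        ring
      map_smul' := fun r x => by
        simp only [Prod.smul_fst, Prod.smul_snd, Submodule.coe_smul,
          Matrix.mul_smul, RingHom.id_apply, map_smul, smul_sub] }
  have hδ : ∀ ab : C × D, (δ ab : Matrix ι κ (V → K⟦X⟧)) = ab.1.1 * f - f * ab.2.1 := fun _ => rfl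
  have hψ : ∀ ab : C × D, ψ ab = Γ.tau (ya * ab.1.1) - Γ.tau (yb * ab.2.1) := fun _ => rfl
  have hsurj : LinearMap.range δ = ⊤ := by
    rw [LinearMap.range_eq_top]
    rintro ⟨h, hh⟩
    obtain ⟨a, ha, b, hb, e⟩ := hrig h hh
    exact ⟨(⟨a, ha⟩, ⟨b, hb⟩), Subtype.ext e.symm⟩
  have hker : ∀ ab, ∀ h ∈ Γ.matLam K src snk, (δ ab).1 = (X : K⟦X⟧) • h → ψ ab = 0 := by
    intro ab h hh e
    obtain ⟨a, ha, b, hb, e'⟩ := hrig h hh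
    have h1 := hy (ab.1.1 - (X : K⟦X⟧) • a) (sub_mem ab.1.2 (Submodule.smul_mem _ _ ha))
      (ab.2.1 - (X : K⟦X⟧) • b) (sub_mem ab.2.2 (Submodule.smul_mem _ _ hb)) (by
        rw [hδ, e'] at e
        rw [Matrix.sub_mul, Matrix.mul_sub, Matrix.smul_mul, Matrix.mul_smul, sub_eq_sub_iff_sub_eq_sub,
          e, smul_sub])
    rw [Matrix.mul_sub, Matrix.mul_sub, Matrix.mul_smul, Matrix.mul_smul, map_sub, map_sub,
      tau_X_smul (mul_mem_matLam hya ha), tau_X_smul (mul_mem_matLam hyb hb), sub_zero,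
      sub_zero] at h1
    rw [hψ, h1, sub_self]
  obtain ⟨σ, hσ⟩ := δ.exists_rightInverse_of_surjective hsurj
  have hσ' : ∀ h, δ (σ h) = h := fun h => LinearMap.congr_fun hσ h
  obtain ⟨φ, hφ⟩ := (ψ.comp σ).exists_extend
  have hφ' : ∀ h : H, φ h.1 = ψ (σ h) := fun h => LinearMap.congr_fun hφ h
  obtain ⟨s, hs, hsφ⟩ := exists_tau_eq hdis φ (fun h hh => by
    rw [hφ' ⟨_, Submodule.smul_mem _ (X : K⟦X⟧) hh⟩]
    exact hker _ h hh (congrArg Subtype.val (hσ' _)))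
  have key : ∀ ab : C × D, ψ ab = Γ.tau ((ab.1.1 * f - f * ab.2.1) * s) := by
    intro ab
    rw [← hδ, ← hsφ _ (δ ab).2, hφ', ← sub_eq_zero, ← map_sub]
    refine hker _ 0 (zero_mem _) ?_
    rw [map_sub, hσ', sub_self, smul_zero]
    rfl
  obtain ⟨xa, hxa, ea⟩ := exists_X_smul_of_tau
    (sub_mem hya (mul_mem_matLam hf hs)) (fun a ha => by
      have := key (⟨a, ha⟩, 0)
      rw [hψ] at this
      simp only [ZeroMemClass.coe_zero, Matrix.mul_zero, map_zero, sub_zero] at this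
      rw [Matrix.sub_mul, map_sub, this, Matrix.mul_assoc, tau_mul_comm a, sub_self])
  obtain ⟨xb, hxb, eb⟩ := exists_X_smul_of_tau
    (sub_mem hyb (mul_mem_matLam hs hf)) (fun b hb => by
      have := key (0, ⟨b, hb⟩)
      rw [hψ] at this
      simp only [ZeroMemClass.coe_zero, Matrix.mul_zero, Matrix.zero_mul, map_zero, zero_sub,
        Matrix.neg_mul, map_neg, neg_inj] at this
      rw [Matrix.sub_mul, map_sub, this, Matrix.mul_assoc, Matrix.mul_assoc, tau_mul_comm f,
        Matrix.mul_assoc, ← tau_mul_comm (s * f), Matrix.mul_assoc, sub_self])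
  exact ⟨s, hs, xa, hxa, xb, hxb, ea, eb⟩

end Pairing

end BrauerTree

namespace BrauerTree

open PowerSeries Classical Matrix

variable {V : Type v} [Finite V] {Γ : BrauerTree V} {K : Type u} [Field K]
variable {ι κ : Type} [Fintype ι] [Fintype κ]
variable {src : ι → Γ.Edge} {snk : κ → Γ.Edge} {f : Matrix ι κ (V → K⟦X⟧)}

theorem ext_evM {A B : Matrix ι κ (V → K⟦X⟧)} (h : ∀ c, evM c A = evM c B) : A = B := by
  ext1 p q
  funext c
  exact congrFun (congrFun (h c) p) q

/-- The matrix that is concentrated at the vertex `c`. -/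
noncomputable def concentrated (c : V) (M : Matrix ι κ K⟦X⟧) : Matrix ι κ (V → K⟦X⟧) :=
  Matrix.of fun p q => Pi.single c (M p q)

theorem evM_concentrated (c : V) (M : Matrix ι κ K⟦X⟧) : evM c (concentrated c M) = M := by
  ext1 p q
  exact Pi.single_eq_same (M := fun _ : V => K⟦X⟧) c (M p q)

theorem evM_concentrated_of_ne {c c' : V} (h : c' ≠ c) (M : Matrix ι κ K⟦X⟧) :
    evM c' (concentrated c M) = 0 := by
  ext1 p q
  exact Pi.single_eq_of_ne (M := fun _ : V => K⟦X⟧) h (M p q)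

theorem tau_concentrated_mul [Fintype V] (c : V) (M : Matrix ι ι K⟦X⟧)
    (A : Matrix ι ι (V → K⟦X⟧)) : Γ.tau (concentrated c M * A) =
      (Γ.sgn c : K) * PowerSeries.coeff (R := K) 1 (M * evM c A).trace := by
  rw [tau_apply, Finset.sum_eq_single c]
  · rw [evM_mul, evM_concentrated]
  · intro c' _ h
    rw [evM_mul, evM_concentrated_of_ne h, Matrix.zero_mul, Matrix.trace_zero, map_zero, mul_zero]
  · simp

theorem concentrated_mem {c : V} {w ξ : ι → K⟦X⟧}
    (hw : ∀ p ∉ Finset.univ.filter (fun p => Γ.Inc (src p) c), w p = 0)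
    (hξ : ∀ p ∉ Finset.univ.filter (fun p => Γ.Inc (src p) c), ξ p = 0) :
    concentrated c ((X : K⟦X⟧) • vecMulVec ξ w) ∈ Γ.matLam K src src := by
  have := Fintype.ofFinite V
  intro p q
  change (Pi.single c (X * (ξ p * w q)) : V → K⟦X⟧) ∈ Γ.Lam K (src p) (src q)
  by_cases hp : Γ.Inc (src p) c
  · by_cases hq : Γ.Inc (src q) c
    · exact single_X_mul_mem hp hq _
    · rw [hw q (by simpa using hq), mul_zero, mul_zero, Pi.single_zero]
      exact zero_mem _
  · rw [hξ p (by simpa using hp), zero_mul, mul_zero, Pi.single_zero]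
    exact zero_mem _

theorem evM_eq_zero_left (hf : f ∈ Γ.matLam K src snk) {c : V} {p : ι}
    (hp : p ∉ Finset.univ.filter (fun p => Γ.Inc (src p) c)) (q : κ) : evM c f p q = 0 :=
  (hf p q).1 c fun h => hp (by simpa using h.1)

theorem evM_eq_zero_right (hf : f ∈ Γ.matLam K src snk) {c : V} (p : ι) {q : κ}
    (hq : q ∉ Finset.univ.filter (fun q => Γ.Inc (snk q) c)) : evM c f p q = 0 :=
  (hf p q).1 c fun h => hq (by simpa using h.2)

variable (src snk f) in
/-- The endomorphisms of the two-term complex `f`. -/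
def ChainEnd : Type (max u v) :=
  {ab : Matrix ι ι (V → K⟦X⟧) × Matrix κ κ (V → K⟦X⟧) //
    ab.1 ∈ Γ.matLam K src src ∧ ab.2 ∈ Γ.matLam K snk snk ∧ ab.1 * f = f * ab.2}

namespace ChainEnd

/-- The sum of two endomorphisms. -/
noncomputable def add (z z' : ChainEnd src snk f) : ChainEnd src snk f :=
  ⟨(z.1.1 + z'.1.1, z.1.2 + z'.1.2), add_mem z.2.1 z'.2.1, add_mem z.2.2.1 z'.2.2.1, by
    change (z.1.1 + z'.1.1) * f = f * (z.1.2 + z'.1.2)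
    rw [Matrix.add_mul, Matrix.mul_add, z.2.2.2, z'.2.2.2]⟩

/-- The composite of two endomorphisms. -/
noncomputable def mul (z z' : ChainEnd src snk f) : ChainEnd src snk f :=
  ⟨(z.1.1 * z'.1.1, z.1.2 * z'.1.2), mul_mem_matLam z.2.1 z'.2.1,
    mul_mem_matLam z.2.2.1 z'.2.2.1, by
    change z.1.1 * z'.1.1 * f = f * (z.1.2 * z'.1.2)
    rw [Matrix.mul_assoc, z'.2.2.2, ← Matrix.mul_assoc, z.2.2.2, Matrix.mul_assoc]⟩

/-- A scalar multiple of an endomorphism. -/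
noncomputable def smul (r : K⟦X⟧) (z : ChainEnd src snk f) : ChainEnd src snk f :=
  ⟨(r • z.1.1, r • z.1.2), Submodule.smul_mem _ _ z.2.1, Submodule.smul_mem _ _ z.2.2.1, by
    change (r • z.1.1) * f = f * (r • z.1.2)
    rw [Matrix.smul_mul, Matrix.mul_smul, z.2.2.2]⟩

/-- The identity endomorphism. -/
noncomputable def one (hf : f ∈ Γ.matLam K src snk) : ChainEnd src snk f :=
  ⟨(matOne K src, matOne K snk), matOne_mem, matOne_mem, (matOne_mul hf).trans (mul_matOne hf).symm⟩

end ChainEnd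

/-- `lam z` is the only eigenvalue of the endomorphism `z` modulo `X`. -/
def IsEigenvalueFunction (lam : ChainEnd src snk f → K) : Prop :=
  ∀ z, ∃ n : ℕ, (∀ c i j, X ∣ ((z.1.1 - PowerSeries.C (lam z) • matOne K src) ^ n) i j c) ∧
    ∀ c i j, X ∣ ((z.1.2 - PowerSeries.C (lam z) • matOne K snk) ^ n) i j c

/-- At a vertex `c` of the tree with different numbers of sources and sinks, there is an endomorphism
`y` of the complex that is concentrated at `c` and whose pairing with `z` is, up to a sign, the
eigenvalue of `z`. -/
theorem exists_local_endomorphism [Fintype V] (hf : f ∈ Γ.matLam K src snk)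
    (lam : ChainEnd src snk f → K) (hlam : IsEigenvalueFunction lam) (c : V)
    (hc : (Finset.univ.filter (fun p => Γ.Inc (src p) c)).card ≠
      (Finset.univ.filter (fun q => Γ.Inc (snk q) c)).card) :
    ∃ (y : ChainEnd src snk f) (σ : K), σ * σ = 1 ∧
      (∀ c' ≠ c, evM c' y.1.1 = 0 ∧ evM c' y.1.2 = 0) ∧
      (∀ z : ChainEnd src snk f, Γ.tau (y.1.1 * z.1.1) - Γ.tau (y.1.2 * z.1.2) = σ * lam z) ∧
      ∀ (x : ChainEnd src snk f) (r : K) (s : Matrix κ ι (V → K⟦X⟧)),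
        (X : K⟦X⟧) • evM c x.1.1 = PowerSeries.C r • evM c y.1.1 + evM c (f * s) →
        (X : K⟦X⟧) • evM c x.1.2 = PowerSeries.C r • evM c y.1.2 + evM c (s * f) →
        lam x = r ∧
        ((Finset.univ.filter (fun q => Γ.Inc (snk q) c)).card + 2 ≤
            (Finset.univ.filter (fun p => Γ.Inc (src p) c)).card ∨
          (Finset.univ.filter (fun p => Γ.Inc (src p) c)).card + 2 ≤
            (Finset.univ.filter (fun q => Γ.Inc (snk q) c)).card → lam x = 0) := by
  rcases lt_or_gt_of_ne hc with hlt | hlt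
  · obtain ⟨w, ξ, hw, hξ, hwF, hwξ, hpair, hx⟩ := exists_eigenvector_of_card_lt
      (Finset.univ.filter (fun q => Γ.Inc (snk q) c)) (Finset.univ.filter (fun p => Γ.Inc (src p) c))
      (evM c f)ᵀ (fun p q hq => evM_eq_zero_left hf hq p) hlt
      (fun z : ChainEnd src snk f => (evM c z.1.2)ᵀ) (fun z => (evM c z.1.1)ᵀ)
      (fun z => by rw [← Matrix.transpose_mul, ← Matrix.transpose_mul, ← evM_mul, ← evM_mul, z.2.2.2])
      (fun z p p' hp' => evM_eq_zero_left z.2.2.1 hp' p)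
      (fun z z' => ⟨z.add z', rfl⟩)
      (fun z z' => ⟨z'.mul z, by rw [← Matrix.transpose_mul, ← evM_mul]; rfl⟩)
      (fun r z => ⟨z.smul (PowerSeries.C r), rfl⟩)
      ⟨ChainEnd.one hf, by
        change (evM c (matOne K snk))ᵀ = _
        rw [evM_matOne, Matrix.diagonal_transpose]⟩
      lam (fun z => by
        obtain ⟨n, -, hn⟩ := hlam z
        refine ⟨n, fun i j => ?_⟩
        have h : X ∣ evM c ((z.1.2 - PowerSeries.C (lam z) • matOne K snk) ^ n) j i := hn c j i
        rw [evM_pow, evM_sub, evM_smul, evM_matOne] at h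
        rw [← Matrix.diagonal_transpose, ← Matrix.transpose_smul, ← Matrix.transpose_sub,
          ← Matrix.transpose_pow]
        exact h)
    have hfy : f * concentrated c ((X : K⟦X⟧) • vecMulVec w ξ) = 0 := by
      apply ext_evM
      intro c'
      rw [evM_mul]
      by_cases h : c' = c
      · subst h
        rw [evM_concentrated, Matrix.mul_smul, mul_vecMulVec]
        rw [Matrix.vecMul_transpose] at hwF
        rw [hwF, zero_vecMulVec, smul_zero]
        rfl
      · rw [evM_concentrated_of_ne h, Matrix.mul_zero]
        rfl
    refine ⟨⟨(0, concentrated c ((X : K⟦X⟧) • vecMulVec w ξ)), zero_mem _, concentrated_mem hξ hw, ?_⟩,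
      -(Γ.sgn c : K), ?_, ?_, ?_, ?_⟩
    · rw [Matrix.zero_mul, hfy]
    · rw [neg_mul_neg, sgn_cast_mul_self]
    · exact fun c' h => ⟨rfl, evM_concentrated_of_ne h _⟩
    · intro z
      rw [Matrix.zero_mul, map_zero, zero_sub, tau_concentrated_mul, Matrix.smul_mul,
        Matrix.trace_smul, smul_eq_mul, PowerSeries.coeff_succ_X_mul 0,
        PowerSeries.coeff_zero_eq_constantCoeff_apply, Matrix.trace_mul_comm, mul_vecMulVec,
        trace_vecMulVec, ← hpair z, vecMul_transpose, neg_mul]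
    · intro x r s _ h2
      have h3 := hx x r (evM c s)ᵀ (by
        rw [← Matrix.transpose_mul, ← evM_mul, ← Matrix.transpose_smul, h2, Matrix.transpose_add,
          Matrix.transpose_smul, evM_concentrated, Matrix.transpose_smul, Matrix.transpose_vecMulVec,
          smul_smul])
      exact ⟨h3.1, fun h => h3.2 (by omega)⟩
  · obtain ⟨w, ξ, hw, hξ, hwF, hwξ, hpair, hx⟩ := exists_eigenvector_of_card_lt
      (Finset.univ.filter (fun p => Γ.Inc (src p) c)) (Finset.univ.filter (fun q => Γ.Inc (snk q) c))
      (evM c f) (fun p q hq => evM_eq_zero_right hf p hq) hlt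
      (fun z : ChainEnd src snk f => evM c z.1.1) (fun z => evM c z.1.2)
      (fun z => by rw [← evM_mul, ← evM_mul, z.2.2.2])
      (fun z p p' hp' => evM_eq_zero_right z.2.1 p hp')
      (fun z z' => ⟨z.add z', rfl⟩)
      (fun z z' => ⟨z.mul z', by rw [← evM_mul]; rfl⟩)
      (fun r z => ⟨z.smul (PowerSeries.C r), rfl⟩)
      ⟨ChainEnd.one hf, evM_matOne c⟩
      lam (fun z => by
        obtain ⟨n, hn, -⟩ := hlam z
        refine ⟨n, fun i j => ?_⟩
        have h : X ∣ evM c ((z.1.1 - PowerSeries.C (lam z) • matOne K src) ^ n) i j := hn c i j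
        rw [evM_pow, evM_sub, evM_smul, evM_matOne] at h
        exact h)
    have hfy : concentrated c ((X : K⟦X⟧) • vecMulVec ξ w) * f = 0 := by
      apply ext_evM
      intro c'
      rw [evM_mul]
      by_cases h : c' = c
      · subst h
        rw [evM_concentrated, Matrix.smul_mul, vecMulVec_mul, hwF]
        ext i j
        simp [vecMulVec_apply]
      · rw [evM_concentrated_of_ne h, Matrix.zero_mul]
        rfl
    refine ⟨⟨(concentrated c ((X : K⟦X⟧) • vecMulVec ξ w), 0), concentrated_mem hw hξ, zero_mem _, ?_⟩,
      (Γ.sgn c : K), ?_, ?_, ?_, ?_⟩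
    · rw [Matrix.mul_zero, hfy]
    · rw [sgn_cast_mul_self]
    · exact fun c' h => ⟨evM_concentrated_of_ne h _, rfl⟩
    · intro z
      rw [Matrix.zero_mul, map_zero, sub_zero, tau_concentrated_mul, Matrix.smul_mul,
        Matrix.trace_smul, smul_eq_mul, PowerSeries.coeff_succ_X_mul 0,
        PowerSeries.coeff_zero_eq_constantCoeff_apply, vecMulVec_mul,
        trace_vecMulVec, ← hpair z, dotProduct_comm]
    · intro x r s h1 _
      have h3 := hx x r (evM c s) (by
        rw [h1, evM_concentrated, smul_smul, evM_mul])
      exact ⟨h3.1, fun h => h3.2 (by omega)⟩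

/-- If a rigid two-term complex has a local endomorphism ring, then at most two vertices of the tree
have different numbers of sources and sinks, and these numbers differ by at most one. -/
theorem card_le_of_rigid (hf : f ∈ Γ.matLam K src snk) (hdis : ∀ p q, src p ≠ snk q)
    (hrig : ∀ h ∈ Γ.matLam K src snk, ∃ a ∈ Γ.matLam K src src, ∃ b ∈ Γ.matLam K snk snk,
      h = a * f - f * b)
    (lam : ChainEnd src snk f → K) (hlam : IsEigenvalueFunction lam) {c c' : V} (hcc : c ≠ c')
    (hc : (Finset.univ.filter (fun p => Γ.Inc (src p) c)).card ≠
      (Finset.univ.filter (fun q => Γ.Inc (snk q) c)).card)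
    (hc' : (Finset.univ.filter (fun p => Γ.Inc (src p) c')).card ≠
      (Finset.univ.filter (fun q => Γ.Inc (snk q) c')).card) :
    ((Finset.univ.filter (fun p => Γ.Inc (src p) c)).card <
        (Finset.univ.filter (fun q => Γ.Inc (snk q) c)).card + 2 ∧
      (Finset.univ.filter (fun q => Γ.Inc (snk q) c)).card <
        (Finset.univ.filter (fun p => Γ.Inc (src p) c)).card + 2) ∧
    ∀ c'', c'' ≠ c → c'' ≠ c' → (Finset.univ.filter (fun p => Γ.Inc (src p) c'')).card =
      (Finset.univ.filter (fun q => Γ.Inc (snk q) c'')).card := by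
  have := Fintype.ofFinite V
  obtain ⟨y, σ, hσ, hy0, hyp, hyx⟩ := exists_local_endomorphism hf lam hlam c hc
  obtain ⟨y', σ', hσ', hy0', hyp', -⟩ := exists_local_endomorphism hf lam hlam c' hc'
  let t : ChainEnd src snk f := y.add (y'.smul (PowerSeries.C (-(σ * σ'))))
  obtain ⟨s, hs, xa, hxa, xb, hxb, ea, eb⟩ := exists_homotopy_of_orthogonal hf hdis hrig
    t.2.1 t.2.2.1 (fun a ha b hb hab => by
      have h1 := hyp ⟨(a, b), ha, hb, hab⟩
      have h2 := hyp' ⟨(a, b), ha, hb, hab⟩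
      change Γ.tau ((y.1.1 + PowerSeries.C (-(σ * σ')) • y'.1.1) * a) =
        Γ.tau ((y.1.2 + PowerSeries.C (-(σ * σ')) • y'.1.2) * b)
      have hC : ∀ {ι : Type} (A : Matrix ι ι (V → K⟦X⟧)), PowerSeries.C (-(σ * σ')) • A =
          (-(σ * σ')) • A := by
        intro ι A
        ext1 i j
        funext c
        exact (PowerSeries.smul_eq_C_mul _ _).symm
      rw [Matrix.add_mul, Matrix.add_mul, Matrix.smul_mul, Matrix.smul_mul, hC, hC, map_add, map_add,
        map_smul, map_smul, smul_eq_mul, smul_eq_mul]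
      linear_combination h1 - σ * σ' * h2 - σ * lam ⟨(a, b), ha, hb, hab⟩ * hσ')
  have hX : (X : K⟦X⟧) ≠ 0 := PowerSeries.X_ne_zero
  let x : ChainEnd src snk f := ⟨(xa, xb), hxa, hxb, by
    have h : (X : K⟦X⟧) • (xa * f) = (X : K⟦X⟧) • (f * xb) := by
      rw [← Matrix.smul_mul, ← ea, ← Matrix.mul_smul, ← eb, Matrix.sub_mul, Matrix.mul_sub,
        t.2.2.2, Matrix.mul_assoc]
    exact smul_right_injective _ hX h⟩
  have hEa : ∀ c'', (X : K⟦X⟧) • evM c'' x.1.1 = evM c'' y.1.1 +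
      PowerSeries.C (-(σ * σ')) • evM c'' y'.1.1 + evM c'' (f * -s) := by
    intro c''
    rw [← evM_smul, ← ea, Matrix.mul_neg, sub_eq_add_neg]
    rfl
  have hEb : ∀ c'', (X : K⟦X⟧) • evM c'' x.1.2 = evM c'' y.1.2 +
      PowerSeries.C (-(σ * σ')) • evM c'' y'.1.2 + evM c'' (-s * f) := by
    intro c''
    rw [← evM_smul, ← eb, Matrix.neg_mul, sub_eq_add_neg]
    rfl
  obtain ⟨h1, h2⟩ := hyx x 1 (-s)
    (by rw [hEa, (hy0' c hcc).1, smul_zero, add_zero, map_one, one_smul])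
    (by rw [hEb, (hy0' c hcc).2, smul_zero, add_zero, map_one, one_smul])
  constructor
  · by_contra h
    have := h2 (by omega)
    rw [h1] at this
    exact one_ne_zero this
  · intro c'' hne hne'
    by_contra h
    obtain ⟨y'', σ'', -, -, -, hyx''⟩ := exists_local_endomorphism hf lam hlam c'' h
    obtain ⟨h3, -⟩ := hyx'' x 0 (-s)
      (by rw [hEa, (hy0 c'' hne).1, (hy0' c'' hne').1, smul_zero, add_zero, map_zero, zero_smul])
      (by rw [hEb, (hy0 c'' hne).2, (hy0' c'' hne').2, smul_zero, add_zero, map_zero, zero_smul])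
    rw [h1] at h3
    exact one_ne_zero h3

end BrauerTree

namespace BrauerTree

open PowerSeries Classical Matrix

variable {V : Type v} [Finite V] {Γ : BrauerTree V} {K : Type u} [Field K]
variable {ι κ μ : Type} [Fintype ι] [Fintype κ] [Fintype μ]
variable {src : ι → Γ.Edge} {snk : κ → Γ.Edge} {tgt : μ → Γ.Edge}

theorem mem_Ae {i : Γ.Edge} {z : Γ.Alg K} : z ∈ Γ.Ae K i ↔ z * Γ.e K i = z := by
  rw [Ae, Submodule.mem_span_singleton]
  constructor
  · rintro ⟨r, rfl⟩
    rw [smul_eq_mul, mul_assoc, e_mul_self]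
  · intro h
    exact ⟨z, h⟩

theorem e_ne_zero (i : Γ.Edge) : Γ.e K i ≠ 0 := by
  rw [← theta_one, Ne, theta_eq_zero_iff]
  rintro ⟨y, -, h⟩
  obtain ⟨d, rfl⟩ := exists_dart_edge i
  have h1 := congrFun h d.fst
  change (if Γ.Inc (Γ.edge d) d.fst then (1 : K⟦X⟧) else 0) = X * y d.fst at h1
  rw [if_pos (inc_edge_fst d)] at h1
  have h2 := congrArg (PowerSeries.constantCoeff (R := K)) h1
  simp at h2

theorem e_mem_Ae (i : Γ.Edge) : Γ.e K i ∈ Γ.Ae K i := mem_Ae.2 (e_mul_self i)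

theorem mul_theta_mem {p q : Γ.Edge} (z : Γ.Alg K) (x : Γ.Lam K p q) :
    z * Γ.theta K p q x ∈ Γ.Ae K q := by
  rw [mem_Ae, mul_assoc, theta_mul_e]

/-- The homomorphism of projective modules that belongs to a matrix. -/
noncomputable def lin : Γ.matLam K src snk →+
    ((∀ p, Γ.Ae K (src p)) →ₗ[Γ.Alg K] (∀ q, Γ.Ae K (snk q))) where
  toFun A :=
    { toFun := fun x q => ⟨∑ p, (x p : Γ.Alg K) * Γ.theta K (src p) (snk q) ⟨A.1 p q, A.2 p q⟩,
        sum_mem fun _ _ => mul_theta_mem _ _⟩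
      map_add' := fun x y => by
        funext q
        apply Subtype.ext
        simp [add_mul, Finset.sum_add_distrib]
      map_smul' := fun r x => by
        funext q
        apply Subtype.ext
        simp [mul_assoc, Finset.mul_sum] }
  map_zero' := by
    refine LinearMap.ext fun x => ?_
    funext q
    apply Subtype.ext
    refine Finset.sum_eq_zero fun p _ => ?_
    have : (⟨(0 : Γ.matLam K src snk).1 p q, (0 : Γ.matLam K src snk).2 p q⟩ :
      Γ.Lam K (src p) (snk q)) = 0 := rfl
    rw [this, map_zero, mul_zero]
  map_add' A B := by
    refine LinearMap.ext fun x => ?_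
    funext q
    apply Subtype.ext
    change ∑ p, _ = ∑ p, _ + ∑ p, _
    rw [← Finset.sum_add_distrib]
    refine Finset.sum_congr rfl fun p _ => ?_
    rw [← mul_add, ← map_add]
    rfl

theorem lin_apply (A : Γ.matLam K src snk) (x : ∀ p, Γ.Ae K (src p)) (q : κ) :
    (lin A x q : Γ.Alg K) =
      ∑ p, (x p : Γ.Alg K) * Γ.theta K (src p) (snk q) ⟨A.1 p q, A.2 p q⟩ := rfl

theorem lin_single (A : Γ.matLam K src snk) (p : ι) (x : Γ.Ae K (src p)) (q : κ) :
    (lin A (Pi.single p x) q : Γ.Alg K) =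
      (x : Γ.Alg K) * Γ.theta K (src p) (snk q) ⟨A.1 p q, A.2 p q⟩ := by
  rw [lin_apply, Finset.sum_eq_single p]
  · rw [Pi.single_eq_same]
  · intro p' _ h
    rw [Pi.single_eq_of_ne h]
    exact zero_mul _
  · simp

theorem theta_congr {p q : Γ.Edge} {x y : V → K⟦X⟧} (hx : x ∈ Γ.Lam K p q) (hy : y ∈ Γ.Lam K p q)
    (h : x = y) : Γ.theta K p q ⟨x, hx⟩ = Γ.theta K p q ⟨y, hy⟩ := by
  subst h; rfl

theorem lin_mul {A : Matrix ι κ (V → K⟦X⟧)} {B : Matrix κ μ (V → K⟦X⟧)}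
    (hA : A ∈ Γ.matLam K src snk) (hB : B ∈ Γ.matLam K snk tgt) :
    lin ⟨A * B, mul_mem_matLam hA hB⟩ = lin ⟨B, hB⟩ ∘ₗ lin ⟨A, hA⟩ := by
  refine LinearMap.ext fun x => ?_
  funext r
  apply Subtype.ext
  rw [lin_apply, LinearMap.comp_apply, lin_apply]
  simp only [lin_apply, Finset.sum_mul]
  rw [Finset.sum_comm]
  refine Finset.sum_congr rfl fun p _ => ?_
  simp only [mul_assoc, ← theta_mul]
  rw [← Finset.mul_sum, ← map_sum]
  congr 1
  apply congrArg
  apply Subtype.ext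
  rw [AddSubmonoidClass.coe_finsetSum]
  exact Matrix.mul_apply

theorem theta_smul_one (p : Γ.Edge) (r : K)
    (h : PowerSeries.C r • Γ.oneAt K p ∈ Γ.Lam K p p) :
    Γ.theta K p p ⟨PowerSeries.C r • Γ.oneAt K p, h⟩ = algebraMap K (Γ.Alg K) r * Γ.e K p := by
  rw [← Algebra.smul_def, ← theta_one, ← map_smul]
  apply theta_congr
  funext c
  exact (PowerSeries.smul_eq_C_mul _ r).symm

theorem lin_smul_one (r : K) :
    ∀ x q, (lin ⟨PowerSeries.C r • matOne K src, Submodule.smul_mem _ _ matOne_mem⟩ x q : Γ.Alg K) =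
      algebraMap K (Γ.Alg K) r * (x q : Γ.Alg K) := by
  intro x q
  rw [lin_apply, Finset.sum_eq_single q]
  · rw [theta_congr _ (Submodule.smul_mem _ _ (oneAt_mem (src q)) :
      PowerSeries.C r • Γ.oneAt K (src q) ∈ _), theta_smul_one, ← mul_assoc,
      ← Algebra.commutes, mul_assoc, mem_Ae.1 (x q).2]
    change PowerSeries.C r • (matOne K src q q) = _
    rw [matOne, Matrix.diagonal_apply_eq]
  · intro p _ h
    rw [theta_congr _ (zero_mem _)]
    · change _ * Γ.theta K _ _ 0 = 0
      rw [map_zero, mul_zero]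
    · change PowerSeries.C r • (matOne K src p q) = _
      rw [matOne, Matrix.diagonal_apply_ne _ h, smul_zero]
  · simp

theorem lin_surjective (φ : (∀ p, Γ.Ae K (src p)) →ₗ[Γ.Alg K] (∀ q, Γ.Ae K (snk q))) :
    ∃ A : Γ.matLam K src snk, lin A = φ := by
  have h : ∀ p q, ∃ x, Γ.theta K (src p) (snk q) x =
      (φ (Pi.single p ⟨Γ.e K (src p), e_mem_Ae _⟩) q : Γ.Alg K) := by
    intro p q
    apply exists_theta_eq
    · have h1 : Γ.e K (src p) • (⟨Γ.e K (src p), e_mem_Ae _⟩ : Γ.Ae K (src p)) =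
          ⟨Γ.e K (src p), e_mem_Ae _⟩ := Subtype.ext (e_mul_self _)
      rw [← smul_eq_mul, ← Submodule.coe_smul, ← Pi.smul_apply, ← map_smul, ← Pi.single_smul, h1]
    · exact mem_Ae.1 (φ _ q).2
  choose A hA using h
  refine ⟨⟨Matrix.of fun p q => (A p q).1, fun p q => (A p q).2⟩, ?_⟩
  refine LinearMap.pi_ext fun p x => ?_
  funext q
  apply Subtype.ext
  rw [lin_single]
  change (x : Γ.Alg K) * Γ.theta K (src p) (snk q) (A p q) = _
  have h1 : (x : Γ.Alg K) • (⟨Γ.e K (src p), e_mem_Ae _⟩ : Γ.Ae K (src p)) = x :=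
    Subtype.ext (mem_Ae.1 x.2)
  rw [hA, ← smul_eq_mul, ← Submodule.coe_smul, ← Pi.smul_apply, ← map_smul, ← Pi.single_smul, h1]

theorem component_eq_zero_iff (A : Γ.matLam K src snk) (p : ι) (q : κ) :
    LinearMap.proj q ∘ₗ lin A ∘ₗ LinearMap.single (Γ.Alg K) (fun p => Γ.Ae K (src p)) p = 0 ↔
      Γ.theta K (src p) (snk q) ⟨A.1 p q, A.2 p q⟩ = 0 := by
  constructor
  · intro h
    have h1 := congrArg Subtype.val (LinearMap.congr_fun h ⟨Γ.e K (src p), e_mem_Ae _⟩)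
    have h2 := lin_single A p ⟨Γ.e K (src p), e_mem_Ae _⟩ q
    rw [e_mul_theta] at h2
    exact h2.symm.trans h1
  · intro h
    ext1 x
    apply Subtype.ext
    refine (lin_single A p x q).trans ?_
    rw [h, mul_zero]
    rfl

theorem lin_eq_zero_iff (A : Γ.matLam K src snk) :
    lin A = 0 ↔ ∃ B ∈ Γ.matLam K src snk, A.1 = (X : K⟦X⟧) • B := by
  constructor
  · intro h
    have := Fintype.ofFinite V
    refine exists_X_smul_matLam fun p q => ?_
    refine (theta_eq_zero_iff ⟨A.1 p q, A.2 p q⟩).1 ?_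
    rw [← component_eq_zero_iff, h, LinearMap.zero_comp, LinearMap.comp_zero]
  · rintro ⟨B, hB, h⟩
    refine LinearMap.ext fun x => ?_
    funext q
    apply Subtype.ext
    rw [lin_apply]
    refine Finset.sum_eq_zero fun p _ => ?_
    rw [(theta_eq_zero_iff ⟨A.1 p q, A.2 p q⟩).2 ⟨B p q, hB p q, ?_⟩, mul_zero]
    change A.1 p q = _
    rw [h]
    rfl

/-- An element of `Lam p p` that is a unit at one end of `p` is invertible. -/
theorem exists_mul_eq_oneAt {p : Γ.Edge} {x : V → K⟦X⟧} (hx : x ∈ Γ.Lam K p p) {c : V}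
    (hc : ¬ X ∣ x c) : ∃ u ∈ Γ.Lam K p p, u * x = Γ.oneAt K p := by
  have hpc : Γ.Inc p c := by
    by_contra h
    exact hc (by rw [hx.1 c (fun h' => h h'.1)]; exact dvd_zero _)
  have hu : ∀ c', Γ.Inc p c' → PowerSeries.constantCoeff (R := K) (x c') =
      PowerSeries.constantCoeff (R := K) (x c) := by
    intro c' hc'
    have := PowerSeries.X_dvd_iff.1 (hx.2.2 rfl c' c hc' hpc)
    rwa [map_sub, sub_eq_zero] at this
  have h0 : PowerSeries.constantCoeff (R := K) (x c) ≠ 0 := fun h => hc (PowerSeries.X_dvd_iff.2 h)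
  refine ⟨fun c' => if Γ.Inc p c' then (x c')⁻¹ else 0, ⟨fun c' h => ?_, fun c' h => ?_, ?_⟩, ?_⟩
  · exact if_neg fun h' => h ⟨h', h'⟩
  · exact absurd h (lt_irrefl _)
  · intro _ c₁ c₂ h₁ h₂
    change X ∣ (if Γ.Inc p c₁ then (x c₁)⁻¹ else 0) - if Γ.Inc p c₂ then (x c₂)⁻¹ else 0
    rw [if_pos h₁, if_pos h₂, PowerSeries.X_dvd_iff, map_sub, PowerSeries.constantCoeff_inv,
      PowerSeries.constantCoeff_inv, hu _ h₁, hu _ h₂, sub_self]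
  · funext c'
    rw [Pi.mul_apply, oneAt]
    split_ifs with h
    · exact PowerSeries.inv_mul_cancel _ (by rw [hu _ h]; exact h0)
    · exact zero_mul _

/-- A homomorphism with superfluous range is radical. -/
theorem X_dvd_of_isSuperfluous (A : Γ.matLam K src snk)
    {N : Submodule (Γ.Alg K) (∀ q, Γ.Ae K (snk q))} (hN : IsSuperfluous N)
    (hA : LinearMap.range (lin A) ≤ N) {p : ι} {q : κ} (hpq : src p = snk q) (c : V) :
    X ∣ A.1 p q c := by
  by_contra hc
  have hx : A.1 p q ∈ Γ.Lam K (snk q) (snk q) := by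
    have := A.2 p q
    rwa [hpq] at this
  obtain ⟨u, hu, hux⟩ := exists_mul_eq_oneAt hx hc
  have hu' : u ∈ Γ.Lam K (snk q) (src p) := by rwa [hpq]
  have htop : N ⊔ LinearMap.ker (LinearMap.proj (R := Γ.Alg K) (φ := fun q => Γ.Ae K (snk q)) q)
      = ⊤ := by
    rw [eq_top_iff]
    intro y _
    have key : lin A (Pi.single p ⟨(y q : Γ.Alg K) * Γ.theta K _ _ ⟨u, hu'⟩, mul_theta_mem _ _⟩) q
        = y q := by
      apply Subtype.ext
      rw [lin_single, mul_assoc, ← theta_mul, theta_congr _ (oneAt_mem (snk q)) hux, theta_one]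
      exact mem_Ae.1 (y q).2
    rw [← add_sub_cancel (lin A
      (Pi.single p ⟨(y q : Γ.Alg K) * Γ.theta K _ _ ⟨u, hu'⟩, mul_theta_mem _ _⟩)) y]
    refine Submodule.add_mem_sup (hA ⟨_, rfl⟩) ?_
    rw [LinearMap.mem_ker, LinearMap.proj_apply, Pi.sub_apply, key, sub_self]
  have h := hN _ htop
  have h1 : Pi.single q ⟨Γ.e K (snk q), e_mem_Ae _⟩ ∈
      LinearMap.ker (LinearMap.proj (R := Γ.Alg K) (φ := fun q => Γ.Ae K (snk q)) q) := by
    rw [h]; trivial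
  rw [LinearMap.mem_ker, LinearMap.proj_apply, Pi.single_eq_same] at h1
  exact e_ne_zero _ (congrArg Subtype.val h1)

end BrauerTree

section TwoTerm

open CochainComplex CochainComplex.HomComplex

variable {R : Type u} [Ring R]

theorem IsPerfect.isKProjective {T : CochainComplex (ModuleCat.{u} R) ℤ} (hT : IsPerfect T) :
    T.IsKProjective := by
  obtain ⟨⟨m, n, h⟩, hp⟩ := hT
  have : T.IsStrictlyLE n := by
    rw [isStrictlyLE_iff]
    exact fun i hi => h i (Or.inr hi)
  have : ∀ k, Projective (T.X k) := fun k => (IsProjective.iff_projective _).1 (hp k).2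
  exact isKProjective_of_projective T n

theorem IsPartialTilting.mem_coboundaries [HasDerivedCategory.{w} (ModuleCat.{u} R)]
    {W S T : CochainComplex (ModuleCat.{u} R) ℤ} (hW : IsPartialTilting W) (hS : IsPerfect S)
    (r : W ⟶ S) (i : S ⟶ W) (hi : i ≫ r = 𝟙 S) (r' : W ⟶ T) (i' : T ⟶ W) (hi' : i' ≫ r' = 𝟙 T)
    {n : ℤ} (hn : n ≠ 0) (x : Cocycle S T n) : x ∈ coboundaries S T n := by
  have := hS.isKProjective
  rw [← CohomologyClass.toHom_mk_eq_zero_iff, CohomologyClass.toHom_mk]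
  set F := Cocycle.equivHomShift.symm x
  have h1 : DerivedCategory.Q.map F = 0 := by
    have h2 := hW.2 n hn (DerivedCategory.Q.map (r ≫ F ≫ i'⟦n⟧') ≫
      (DerivedCategory.Q.commShiftIso n).hom.app W)
    have h3 : DerivedCategory.Q.map (r ≫ F ≫ i'⟦n⟧') = 0 := by
      rw [← cancel_mono ((DerivedCategory.Q.commShiftIso n).hom.app W), h2, zero_comp]
    have h4 : F = i ≫ (r ≫ F ≫ i'⟦n⟧') ≫ r'⟦n⟧' := by
      rw [Category.assoc, Category.assoc, ← Functor.map_comp, hi', CategoryTheory.Functor.map_id, Category.comp_id,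
        ← Category.assoc, hi, Category.id_comp]
    rw [h4, Functor.map_comp, Functor.map_comp, h3, zero_comp, comp_zero]
  apply (IsKProjective.Qh_map_bijective S _).injective
  rw [Functor.map_zero, ← cancel_mono ((DerivedCategory.quotientCompQhIso _).hom.app _)]
  rw [DerivedCategory.quotientCompQhIso_hom_naturality, h1, comp_zero, zero_comp]

/-- A rigid two-term complex: every map from the degree `0` to the degree `1` part is homotopic to
zero. -/
theorem IsPartialTilting.exists_homotopy [HasDerivedCategory.{w} (ModuleCat.{u} R)]
    {W T : CochainComplex (ModuleCat.{u} R) ℤ} (hW : IsPartialTilting W) (hT : IsPerfect T)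
    (hT' : ∀ k : ℤ, k ≠ 0 → k ≠ 1 → IsZero (T.X k)) (r : W ⟶ T) (i : T ⟶ W) (hi : i ≫ r = 𝟙 T)
    (h : T.X 0 ⟶ T.X 1) : ∃ (α : T.X 0 ⟶ T.X 0) (β : T.X 1 ⟶ T.X 1),
      h = α ≫ T.d 0 1 + T.d 0 1 ≫ β := by
  let x : Cocycle T T 1 := Cocycle.mk (Cochain.single h 1) 2 rfl (by
    rw [Cochain.δ_single h 1 2 rfl (-1) 2 rfl rfl,
      (hT' 2 (by decide) (by decide)).eq_of_tgt (h ≫ T.d 1 2) 0,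
      (hT' (-1) (by decide) (by decide)).eq_of_src (T.d (-1) 0 ≫ h) 0]
    simp)
  have hx := hW.mem_coboundaries hT r i hi r i hi one_ne_zero x
  obtain ⟨β, hβ⟩ := (mem_coboundaries_iff x 0 rfl).1 hx
  have h1 := Cochain.congr_v hβ 0 1 rfl
  rw [δ_v 0 1 rfl β 0 1 rfl 0 1 rfl rfl] at h1
  refine ⟨β.v 0 0 rfl, - β.v 1 1 rfl, ?_⟩
  have h2 : (x : Cochain T T 1).v 0 1 rfl = h := Cochain.single_v h 1 rfl
  rw [h2] at h1
  rw [← h1]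
  simp

/-- A map from the degree `1` part of a two-term complex to a module that is orthogonal to the
complex vanishes if it is zero on the image of the differential. -/
theorem IsPartialTilting.eq_zero_of_comp_eq_zero [HasDerivedCategory.{w} (ModuleCat.{u} R)]
    {W T : CochainComplex (ModuleCat.{u} R) ℤ} (hW : IsPartialTilting W) (hT : IsPerfect T)
    (hT' : ∀ k : ℤ, k ≠ 0 → k ≠ 1 → IsZero (T.X k)) (r : W ⟶ T) (i : T ⟶ W) (hi : i ≫ r = 𝟙 T)
    {N : ModuleCat.{u} R} (r' : W ⟶ (singleFunctor _ 0).obj N) (i' : (singleFunctor _ 0).obj N ⟶ W)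
    (hi' : i' ≫ r' = 𝟙 _) (s : T.X 1 ⟶ N) (hs : T.d 0 1 ≫ s = 0) : s = 0 := by
  have hx := hW.mem_coboundaries hT r i hi r' i' hi' (n := -1) (by decide)
    (Cocycle.toSingleMk s (by decide) 0 rfl hs)
  obtain ⟨g, rfl⟩ := (Cocycle.toSingleMk_mem_coboundaries_iff s _ 0 rfl hs 2 rfl).1 hx
  rw [(hT' 2 (by decide) (by decide)).eq_of_tgt (T.d 1 2) 0, zero_comp]

theorem homotopyHomNonzero_iff {T P : CochainComplex (ModuleCat.{u} R) ℤ}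
    (hT' : ∀ k : ℤ, k ≠ 0 → k ≠ 1 → IsZero (T.X k)) {N : ModuleCat.{u} R}
    (e : P ≅ (singleFunctor _ 0).obj N) :
    HomotopyHomNonzero T P ↔ ¬ ∀ g : T.X 0 ⟶ N, ∃ s : T.X 1 ⟶ N, T.d 0 1 ≫ s = g := by
  have hd : T.d (-1) 0 = 0 := (hT' (-1) (by decide) (by decide)).eq_of_src _ _
  have key : ∀ g : T.X 0 ⟶ N, (∃ s : T.X 1 ⟶ N, T.d 0 1 ≫ s = g) ↔
      Cocycle.toSingleMk g (n := 0) rfl (-1) rfl (by rw [hd, zero_comp]) ∈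
        coboundaries T ((singleFunctor _ 0).obj N) 0 := fun g =>
    (Cocycle.toSingleMk_mem_coboundaries_iff g _ (-1) rfl (by rw [hd, zero_comp]) 1 rfl).symm
  let e' : P ≅ ((singleFunctor (ModuleCat.{u} R) 0).obj N)⟦(0 : ℤ)⟧ :=
    e ≪≫ ((shiftFunctorZero (CochainComplex (ModuleCat.{u} R) ℤ) ℤ).app _).symm
  have e'' := (HomotopyCategory.quotient (ModuleCat.{u} R) (ComplexShape.up ℤ)).mapIso e'
  rw [HomotopyHomNonzero, not_forall]
  constructor
  · rintro ⟨F, hF⟩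
    obtain ⟨y, hy⟩ := (CohomologyClass.toHom_bijective T ((singleFunctor _ 0).obj N) 0).2
      (F ≫ e''.hom)
    obtain ⟨x, rfl⟩ := y.mk_surjective
    obtain ⟨g, hg, rfl⟩ := Cocycle.toSingleMk_surjective x 0 rfl (-1) rfl
    refine ⟨g, fun h => hF ?_⟩
    rw [key, ← CohomologyClass.toHom_mk_eq_zero_iff, hy] at h
    rw [← cancel_mono e''.hom, h, zero_comp]
  · rintro ⟨g, hg⟩
    rw [key, ← CohomologyClass.toHom_mk_eq_zero_iff] at hg
    refine ⟨CohomologyClass.toHom (CohomologyClass.mk (Cocycle.toSingleMk g (n := 0) rfl (-1) rfl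
      (by rw [hd, zero_comp]))) ≫ e''.inv, fun h => hg ?_⟩
    rw [← cancel_mono e''.inv, h, zero_comp]

end TwoTerm

theorem CategoryTheory.Indecomposable.eq_bot_of_isCompl {R : Type u} [Ring R] {M : ModuleCat.{u} R}
    (hM : Indecomposable M) {N N' : Submodule R M} (h : IsCompl N N') : N = ⊥ ∨ N' = ⊥ := by
  have e : M ≅ ModuleCat.of R N ⊞ ModuleCat.of R N' :=
    (Submodule.prodEquivOfIsCompl N N' h).symm.toModuleIso ≪≫
      (ModuleCat.biprodIsoProd (ModuleCat.of R N) (ModuleCat.of R N')).symm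
  rcases hM.2 _ _ e with h1 | h1
  · left
    rw [← Submodule.subsingleton_iff_eq_bot]
    exact ModuleCat.subsingleton_of_isZero h1
  · right
    rw [← Submodule.subsingleton_iff_eq_bot]
    exact ModuleCat.subsingleton_of_isZero h1

/-- The action of a scalar on a module over an algebra. -/
noncomputable def scalarEnd {K : Type v} {R : Type u} [Field K] [Ring R] [Algebra K R] (M : Type w)
    [AddCommGroup M] [Module R M] (r : K) : Module.End R M where
  toFun x := algebraMap K R r • x
  map_add' := smul_add _
  map_smul' s x := by rw [RingHom.id_apply, ← mul_smul, Algebra.commutes, mul_smul]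

/-- An endomorphism of an indecomposable module over a finite dimensional algebra over an
algebraically closed field has only one eigenvalue. -/
theorem exists_pow_sub_scalarEnd_eq_zero {K : Type v} {R : Type u} [Field K] [IsAlgClosed K] [Ring R]
    [Algebra K R] [Module.Finite K R] {M : ModuleCat.{u} R} (hM : Indecomposable M)
    [Module.Finite R M] (φ : Module.End R M) :
    ∃ (r : K) (n : ℕ), (φ - scalarEnd M r) ^ (n + 1) = 0 := by
  let _ : Module K M := Module.compHom M (algebraMap K R)
  have : IsScalarTower K R M := ⟨fun r s x => by
    change (r • s) • x = algebraMap K R r • s • x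
    rw [Algebra.smul_def, mul_smul]⟩
  have : Module.Finite K M := Module.Finite.trans R M
  have : IsArtinianRing R := IsArtinianRing.of_finite K R
  have : IsNoetherianRing R := IsNoetherianRing.of_finite K R
  have : Nontrivial M := by
    by_contra h
    rw [not_nontrivial_iff_subsingleton] at h
    exact hM.1 (ModuleCat.isZero_of_subsingleton M)
  obtain ⟨r, hr⟩ := Module.End.exists_eigenvalue (φ.restrictScalars K)
  obtain ⟨x, hx⟩ := hr.exists_hasEigenvector
  have hx1 : (φ - scalarEnd M r : Module.End R M) x = 0 := by
    rw [LinearMap.sub_apply, sub_eq_zero]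
    exact hx.apply_eq_smul
  obtain ⟨n, hn⟩ := Filter.eventually_atTop.1
    (LinearMap.eventually_isCompl_ker_pow_range_pow (φ - scalarEnd M r))
  refine ⟨r, n, ?_⟩
  rcases hM.eq_bot_of_isCompl (hn (n + 1) (Nat.le_succ n)) with h | h
  · exfalso
    apply hx.2
    rw [← Submodule.mem_bot R, ← h, LinearMap.mem_ker, pow_succ, Module.End.mul_apply, hx1, map_zero]
  · exact LinearMap.range_eq_bot.1 h

namespace BrauerTree

open PowerSeries Classical Matrix

variable {V : Type v} [Finite V] {Γ : BrauerTree V} {K : Type u} [Field K]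

instance : Module.Finite K (Γ.Alg K) := by
  refine ⟨⟨(Set.Finite.toFinset (s := Set.range (Γ.e K) ∪
    {z | ∃ d k, 0 < k ∧ k ≤ Γ.len d ∧ z = Γ.path K d k}) ?_), ?_⟩⟩
  · refine (Set.finite_range _).union ?_
    have : {z | ∃ d k, 0 < k ∧ k ≤ Γ.len d ∧ z = Γ.path K d k} ⊆
        ⋃ d : Γ.Arrow, (Γ.path K d) '' (Set.Iic (Γ.len d)) := by
      rintro z ⟨d, k, -, h, rfl⟩
      exact Set.mem_iUnion.2 ⟨d, k, h, rfl⟩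
    exact (Set.finite_iUnion fun d => (Set.finite_Iic _).image _).subset this
  · rw [Set.Finite.coe_toFinset]
    exact pathSpan_eq_top

variable {ι κ μ : Type} [Fintype ι] [Fintype κ] [Fintype μ]
variable {src : ι → Γ.Edge} {snk : κ → Γ.Edge} {f : Matrix ι κ (V → K⟦X⟧)}

theorem pow_succ_mem_matLam {A : Matrix ι ι (V → K⟦X⟧)} (hA : A ∈ Γ.matLam K src src) (n : ℕ) :
    A ^ (n + 1) ∈ Γ.matLam K src src := by
  induction n with
  | zero => rwa [zero_add, pow_one]
  | succ n ih => rw [pow_succ]; exact mul_mem_matLam ih hA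

theorem X_pow_dvd_mul {A : Matrix ι κ (V → K⟦X⟧)} {B : Matrix κ μ (V → K⟦X⟧)} {m n : ℕ}
    (hA : ∀ c p q, X ^ m ∣ A p q c) (hB : ∀ c p q, X ^ n ∣ B p q c) (c : V) (p : ι) (q : μ) :
    X ^ (m + n) ∣ (A * B) p q c := by
  rw [Matrix.mul_apply, Finset.sum_apply]
  refine Finset.dvd_sum fun r _ => ?_
  rw [pow_add]
  exact mul_dvd_mul (hA c p r) (hB c r q)

theorem X_pow_dvd_pow {A : Matrix ι ι (V → K⟦X⟧)} {m : ℕ} (hA : ∀ c p q, X ^ m ∣ A p q c) (n : ℕ) :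
    ∀ c p q, X ^ (m * n) ∣ (A ^ n) p q c := by
  induction n with
  | zero => intro c p q; rw [mul_zero, pow_zero]; exact one_dvd _
  | succ n ih =>
    intro c p q
    rw [pow_succ, mul_add, mul_one]
    exact X_pow_dvd_mul ih hA c p q

/-- A radical endomorphism is nilpotent modulo `X`. -/
theorem exists_X_dvd_pow {A : Matrix ι ι (V → K⟦X⟧)} (hA : A ∈ Γ.matLam K src src)
    (hrad : ∀ p q, src p = src q → ∀ c, X ∣ A p q c) :
    ∃ n : ℕ, ∀ c p q, X ∣ (A ^ (n + 1)) p q c := by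
  have := Fintype.ofFinite V
  have key : ∀ (n : ℕ) (c : V) (p q : ι), ¬ X ∣ (A ^ n) p q c →
      Γ.rk c (src p) + n ≤ Γ.rk c (src q) := by
    intro n
    induction n with
    | zero =>
      intro c p q h
      rw [pow_zero] at h
      by_cases hpq : p = q
      · rw [hpq, add_zero]
      · rw [Matrix.one_apply_ne hpq] at h
        exact absurd (dvd_zero _) h
    | succ n ih =>
      intro c p q h
      rw [pow_succ, Matrix.mul_apply, Finset.sum_apply] at h
      obtain ⟨r, hr⟩ : ∃ r, ¬ X ∣ ((A ^ n) p r * A r q) c := by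
        by_contra h'
        push Not at h'
        exact h (Finset.dvd_sum fun r _ => h' r)
      rw [Pi.mul_apply] at hr
      have h1 := ih c p r fun h' => hr (Dvd.dvd.mul_right h' _)
      have h2 : ¬ X ∣ A r q c := fun h' => hr (Dvd.dvd.mul_left h' _)
      have h3 : src r ≠ src q := fun h' => h2 (hrad r q h' c)
      have h4 : Γ.Inc (src r) c ∧ Γ.Inc (src q) c := by
        by_contra h'
        exact h2 (by rw [(hA r q).1 c h']; exact dvd_zero _)
      have h5 : ¬ Γ.rk c (src q) < Γ.rk c (src r) := fun h' => h2 ((hA r q).2.1 c h')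
      have h6 : Γ.rk c (src r) ≠ Γ.rk c (src q) := fun h' => h3 (rk_inj h4.1 h4.2 h')
      omega
  refine ⟨∑ c, ∑ q, Γ.rk c (src q), fun c p q => ?_⟩
  by_contra h
  have h1 := key _ c p q h
  have h2 : Γ.rk c (src q) ≤ ∑ c, ∑ q, Γ.rk c (src q) :=
    (Finset.single_le_sum (f := fun q => Γ.rk c (src q)) (fun _ _ => Nat.zero_le _)
      (Finset.mem_univ q)).trans (Finset.single_le_sum (f := fun c => ∑ q, Γ.rk c (src q))
        (fun _ _ => Nat.zero_le _) (Finset.mem_univ c))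
  omega

theorem lin_eq_zero_of_X_pow_dvd (A : Γ.matLam K src snk) (hA : ∀ c p q, X ^ 3 ∣ A.1 p q c) :
    lin A = 0 := by
  have := Fintype.ofFinite V
  rw [lin_eq_zero_iff]
  refine exists_X_smul_matLam fun p q => ?_
  have h2 : ∀ c, X ^ 2 ∣ A.1 p q c := fun c => (pow_dvd_pow X (by decide)).trans (hA c p q)
  refine (exists_X_smul_iff (A.2 p q)).2 ⟨fun c => ?_, fun c _ => h2 c, fun _ c c' _ _ =>
    dvd_sub (h2 c) (h2 c')⟩
  exact (dvd_pow_self X (by decide)).trans (hA c p q)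

theorem lin_pow {A : Matrix ι ι (V → K⟦X⟧)} (hA : A ∈ Γ.matLam K src src) (n : ℕ) :
    lin ⟨A ^ (n + 1), pow_succ_mem_matLam hA n⟩ = (lin ⟨A, hA⟩ : Module.End _ _) ^ (n + 1) := by
  induction n with
  | zero =>
    refine Eq.trans ?_ (pow_one _).symm
    congr 2
    exact pow_one A
  | succ n ih =>
    refine Eq.trans ?_ (pow_succ' _ (n + 1)).symm
    rw [← ih, Module.End.mul_eq_comp, ← lin_mul]
    congr 2

/-- The endomorphism ring of the minimal presentation of an indecomposable module is local. -/
theorem exists_isEigenvalueFunction [IsAlgClosed K] (hf : f ∈ Γ.matLam K src snk) {M : Γ.Mod K}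
    (hM : Indecomposable M) (π : (∀ q, Γ.Ae K (snk q)) →ₗ[Γ.Alg K] M)
    (hπ : Function.Surjective π) (hfπ : LinearMap.range (lin ⟨f, hf⟩) = LinearMap.ker π)
    (hs₁ : IsSuperfluous (LinearMap.ker π)) (hs₀ : IsSuperfluous (LinearMap.ker (lin ⟨f, hf⟩))) :
    ∃ lam : ChainEnd src snk f → K, IsEigenvalueFunction lam := by
  have hfin : Module.Finite (Γ.Alg K) (∀ q, Γ.Ae K (snk q)) := by
    have : ∀ q, Module.Finite (Γ.Alg K) (Γ.Ae K (snk q)) := fun q =>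
      Module.Finite.span_of_finite _ (Set.finite_singleton _)
    infer_instance
  have hfinM : Module.Finite (Γ.Alg K) M := Module.Finite.of_surjective π hπ
  suffices h : ∀ z : ChainEnd src snk f, ∃ r : K, ∃ n : ℕ,
      (∀ c i j, X ∣ ((z.1.1 - PowerSeries.C r • matOne K src) ^ n) i j c) ∧
      ∀ c i j, X ∣ ((z.1.2 - PowerSeries.C r • matOne K snk) ^ n) i j c by
    choose lam hlam using h
    exact ⟨lam, hlam⟩
  rintro ⟨⟨a, b⟩, ha, hb, hab⟩
  dsimp only at ha hb hab ⊢
  have hker : LinearMap.ker π ≤ LinearMap.ker (π ∘ₗ lin ⟨b, hb⟩) := by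
    rw [← hfπ]
    rintro _ ⟨x, rfl⟩
    rw [LinearMap.mem_ker, LinearMap.comp_apply, ← LinearMap.mem_ker, ← hfπ]
    refine ⟨lin ⟨a, ha⟩ x, ?_⟩
    rw [← LinearMap.comp_apply, ← LinearMap.comp_apply, ← lin_mul, ← lin_mul]
    congr 3
  obtain ⟨φ, hφ⟩ : ∃ φ : Module.End (Γ.Alg K) M, φ ∘ₗ π = π ∘ₗ lin ⟨b, hb⟩ := by
    refine ⟨(LinearMap.ker π).liftQ (π ∘ₗ lin ⟨b, hb⟩) hker ∘ₗ
      (π.quotKerEquivOfSurjective hπ).symm.toLinearMap, ?_⟩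
    refine LinearMap.ext fun x => ?_
    have h : (π.quotKerEquivOfSurjective hπ).symm (π x) = (LinearMap.ker π).mkQ x := by
      rw [LinearEquiv.symm_apply_eq]
      rfl
    rw [LinearMap.comp_apply, LinearMap.comp_apply, LinearEquiv.coe_coe, h]
    rfl
  obtain ⟨r, n, hn⟩ := exists_pow_sub_scalarEnd_eq_zero (K := K) hM φ
  set α := a - PowerSeries.C r • matOne K src with hαdef
  set β := b - PowerSeries.C r • matOne K snk with hβdef
  have hα : α ∈ Γ.matLam K src src := sub_mem ha (Submodule.smul_mem _ _ matOne_mem)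
  have hβ : β ∈ Γ.matLam K snk snk := sub_mem hb (Submodule.smul_mem _ _ matOne_mem)
  have hαβ : α * f = f * β := by
    rw [hαdef, hβdef, Matrix.sub_mul, Matrix.mul_sub, Matrix.smul_mul, Matrix.mul_smul, matOne_mul hf,
      mul_matOne hf, hab]
  have hψ : (φ - scalarEnd M r) ∘ₗ π = π ∘ₗ lin ⟨β, hβ⟩ := by
    have h : lin ⟨β, hβ⟩ = lin ⟨b, hb⟩ -
        lin ⟨PowerSeries.C r • matOne K snk, Submodule.smul_mem _ _ matOne_mem⟩ := by
      rw [← map_sub]; rfl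
    rw [h, LinearMap.comp_sub, ← hφ, LinearMap.sub_comp]
    congr 1
    refine LinearMap.ext fun x => ?_
    change algebraMap K (Γ.Alg K) r • π x = π _
    rw [← map_smul]
    congr 1
    funext q
    apply Subtype.ext
    exact (lin_smul_one r x q).symm
  have hpow : ∀ m : ℕ, ((φ - scalarEnd M r) ^ m : Module.End _ _) ∘ₗ π =
      π ∘ₗ ((lin ⟨β, hβ⟩ : Module.End _ _) ^ m) := by
    intro m
    induction m with
    | zero => rfl
    | succ m ih =>
      rw [pow_succ, pow_succ, Module.End.mul_eq_comp, Module.End.mul_eq_comp, LinearMap.comp_assoc,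
        hψ, ← LinearMap.comp_assoc, ih, LinearMap.comp_assoc]
  have hβrad : LinearMap.range (lin ⟨β ^ (n + 1), pow_succ_mem_matLam hβ n⟩) ≤ LinearMap.ker π := by
    rintro _ ⟨x, rfl⟩
    have h := LinearMap.congr_fun (hpow (n + 1)) x
    rw [hn, ← lin_pow] at h
    exact h.symm
  obtain ⟨m, hm⟩ := exists_X_dvd_pow (pow_succ_mem_matLam hβ n) fun p q hpq c =>
    X_dvd_of_isSuperfluous _ hs₁ hβrad hpq c
  rw [← pow_mul] at hm
  obtain ⟨N, hN⟩ : ∃ N, (n + 1) * (m + 1) * 3 = N + 1 := Nat.exists_eq_succ_of_ne_zero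
    (Nat.mul_pos (Nat.mul_pos n.succ_pos m.succ_pos) three_pos).ne'
  have hβ3 : ∀ c p q, X ^ 3 ∣ (β ^ (N + 1)) p q c := by
    have h : ∀ c p q, X ^ 1 ∣ (β ^ ((n + 1) * (m + 1))) p q c := fun c p q => by
      rw [pow_one]; exact hm c p q
    have h' := X_pow_dvd_pow h 3
    rw [← pow_mul, hN] at h'
    exact h'
  have hcomm : ∀ k : ℕ, α ^ k * f = f * β ^ k := by
    intro k
    induction k with
    | zero => rw [pow_zero, pow_zero, Matrix.one_mul, Matrix.mul_one]
    | succ k ih =>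
      rw [pow_succ, pow_succ, Matrix.mul_assoc, hαβ, ← Matrix.mul_assoc, ih, Matrix.mul_assoc]
  have hαrad : LinearMap.range (lin ⟨α ^ (N + 1), pow_succ_mem_matLam hα N⟩) ≤
      LinearMap.ker (lin ⟨f, hf⟩) := by
    rintro _ ⟨x, rfl⟩
    rw [LinearMap.mem_ker, ← LinearMap.comp_apply, ← lin_mul]
    have h : lin ⟨α ^ (N + 1) * f, mul_mem_matLam (pow_succ_mem_matLam hα N) hf⟩ =
        lin ⟨f * β ^ (N + 1), mul_mem_matLam hf (pow_succ_mem_matLam hβ N)⟩ := by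
      congr 2
      exact hcomm _
    rw [h, lin_mul hf (pow_succ_mem_matLam hβ N), lin_eq_zero_of_X_pow_dvd ⟨β ^ (N + 1), _⟩ hβ3]
    rfl
  obtain ⟨k, hk⟩ := exists_X_dvd_pow (pow_succ_mem_matLam hα N) fun p q hpq c =>
    X_dvd_of_isSuperfluous _ hs₀ hαrad hpq c
  refine ⟨r, (N + 1) * (k + 1), ?_, ?_⟩
  · rw [pow_mul]
    exact hk
  · rw [pow_mul]
    intro c p q
    have h := X_pow_dvd_pow hβ3 (k + 1) c p q
    exact (dvd_pow_self X (by omega)).trans h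

end BrauerTree

section Nakayama

open PowerSeries

variable {K : Type u} [Field K]

theorem span_X_le_jacobson : Ideal.span {(X : K⟦X⟧)} ≤ Ideal.jacobson ⊥ := by
  rw [IsLocalRing.jacobson_eq_maximalIdeal _ bot_ne_top, Ideal.span_singleton_le_iff_mem,
    IsLocalRing.mem_maximalIdeal, mem_nonunits_iff, PowerSeries.isUnit_iff_constantCoeff]
  simp

variable {E₀ E₁ : Type*} [AddCommGroup E₀] [AddCommGroup E₁] [Module K⟦X⟧ E₀] [Module K⟦X⟧ E₁]

theorem le_of_forall_exists_add_X_smul [IsNoetherian K⟦X⟧ E₀] {N N' : Submodule K⟦X⟧ E₀}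
    (h : ∀ x ∈ N, ∃ y ∈ N', ∃ z ∈ N, x = y + (X : K⟦X⟧) • z) : N ≤ N' := by
  refine Submodule.le_of_le_smul_of_le_jacobson_bot (IsNoetherian.noetherian N)
    span_X_le_jacobson (fun x hx => ?_)
  obtain ⟨y, hy, z, hz, rfl⟩ := h x hx
  exact Submodule.add_mem_sup hy
    (Submodule.smul_mem_smul (Ideal.mem_span_singleton_self _) hz)

/-- A map of lattices that is injective modulo `X` is surjective modulo `X` if and only if the ranks
coincide. -/
theorem finrank_le_and_surjective_iff [Module.Finite K⟦X⟧ E₀] [Module.Finite K⟦X⟧ E₁]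
    [Module.IsTorsionFree K⟦X⟧ E₀] [Module.IsTorsionFree K⟦X⟧ E₁] (F : E₁ →ₗ[K⟦X⟧] E₀)
    (hF : ∀ s y, F s = (X : K⟦X⟧) • y → ∃ s', s = (X : K⟦X⟧) • s') :
    Module.finrank K⟦X⟧ E₁ ≤ Module.finrank K⟦X⟧ E₀ ∧
      ((∀ g, ∃ s y, g = F s + (X : K⟦X⟧) • y) ↔
        Module.finrank K⟦X⟧ E₁ = Module.finrank K⟦X⟧ E₀) := by
  have hX : (X : K⟦X⟧) ≠ 0 := PowerSeries.X_ne_zero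
  have hker : LinearMap.ker F ≤ ⊥ := by
    refine le_of_forall_exists_add_X_smul fun s hs => ⟨0, zero_mem _, ?_⟩
    obtain ⟨s', rfl⟩ := hF s 0 (by rw [smul_zero]; exact hs)
    refine ⟨s', ?_, (zero_add _).symm⟩
    rw [LinearMap.mem_ker, map_smul] at hs
    exact (smul_eq_zero.1 hs).resolve_left hX
  have hinj : Function.Injective F := LinearMap.ker_eq_bot.1 (le_bot_iff.1 hker)
  refine ⟨LinearMap.finrank_le_finrank_of_injective hinj, fun h => ?_, fun h g => ?_⟩
  · have hsurj : Function.Surjective F := by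
      rw [← LinearMap.range_eq_top, eq_top_iff]
      refine le_of_forall_exists_add_X_smul fun g _ => ?_
      obtain ⟨s, y, rfl⟩ := h g
      exact ⟨F s, ⟨s, rfl⟩, y, trivial, rfl⟩
    exact (LinearEquiv.ofBijective F ⟨hinj, hsurj⟩).finrank_eq
  · have : Module.Free K⟦X⟧ E₁ := Module.free_of_finite_type_torsion_free'
    let G : E₁ × K⟦X⟧ →ₗ[K⟦X⟧] E₀ := F.coprod (LinearMap.toSpanSingleton K⟦X⟧ E₀ g)
    have hG : ¬ Function.Injective G := by
      intro hG
      have h1 := LinearMap.finrank_le_finrank_of_injective hG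
      rw [Module.finrank_prod, Module.finrank_self] at h1
      omega
    rw [← LinearMap.ker_eq_bot, ← Ne, Submodule.ne_bot_iff] at hG
    obtain ⟨⟨s, r⟩, hsr, hne⟩ := hG
    have hsr' : F s + r • g = 0 := hsr
    have hr : r ≠ 0 := by
      rintro rfl
      rw [zero_smul, add_zero] at hsr'
      exact hne (by rw [hinj (hsr'.trans (map_zero F).symm)]; rfl)
    have key : ∀ (n : ℕ) (s : E₁), F s = (X ^ n : K⟦X⟧) • g → ∃ s', F s' = g := by
      intro n
      induction n with
      | zero => exact fun s hs => ⟨s, by rw [hs, pow_zero, one_smul]⟩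
      | succ n ih =>
        intro s hs
        rw [pow_succ', mul_smul] at hs
        obtain ⟨s', rfl⟩ := hF s _ hs
        rw [map_smul] at hs
        exact ih s' (smul_right_injective _ hX hs)
    obtain ⟨n, u, hu⟩ := IsDiscreteValuationRing.eq_unit_mul_pow_irreducible hr
      PowerSeries.X_irreducible
    obtain ⟨s', hs'⟩ := key n (-(↑u⁻¹ : K⟦X⟧) • s) (by
      rw [map_smul, eq_neg_of_add_eq_zero_left hsr', hu, smul_neg, neg_smul, neg_neg, smul_smul,
        ← mul_assoc, Units.inv_mul, one_mul])
    exact ⟨s', 0, by rw [hs', smul_zero, add_zero]⟩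

end Nakayama

namespace BrauerTree

open PowerSeries Classical Matrix

variable {V : Type v} [Finite V] {Γ : BrauerTree V} {K : Type u} [Field K]
variable {ι κ μ : Type} [Fintype ι] [Fintype κ] [Fintype μ]
variable {src : ι → Γ.Edge} {snk : κ → Γ.Edge} {f : Matrix ι κ (V → K⟦X⟧)}

instance : IsNoetherian K⟦X⟧ (Matrix ι κ (V → K⟦X⟧)) :=
  inferInstanceAs (IsNoetherian K⟦X⟧ (ι → κ → V → K⟦X⟧))

instance : Module.IsTorsionFree K⟦X⟧ (Matrix ι κ (V → K⟦X⟧)) :=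
  inferInstanceAs (Module.IsTorsionFree K⟦X⟧ (ι → κ → V → K⟦X⟧))

/-- Rigidity over the algebra lifts to the order. -/
theorem exists_eq_mul_sub_mul (hf : f ∈ Γ.matLam K src snk)
    (hR : ∀ h : (∀ p, Γ.Ae K (src p)) →ₗ[Γ.Alg K] (∀ q, Γ.Ae K (snk q)),
      ∃ (α : (∀ p, Γ.Ae K (src p)) →ₗ[Γ.Alg K] (∀ p, Γ.Ae K (src p)))
        (β : (∀ q, Γ.Ae K (snk q)) →ₗ[Γ.Alg K] (∀ q, Γ.Ae K (snk q))),
        h = lin ⟨f, hf⟩ ∘ₗ α + β ∘ₗ lin ⟨f, hf⟩) :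
    ∀ h ∈ Γ.matLam K src snk, ∃ a ∈ Γ.matLam K src src, ∃ b ∈ Γ.matLam K snk snk,
      h = a * f - f * b := by
  let N' : Submodule K⟦X⟧ (Matrix ι κ (V → K⟦X⟧)) :=
    { carrier := {h | ∃ a ∈ Γ.matLam K src src, ∃ b ∈ Γ.matLam K snk snk, h = a * f - f * b}
      zero_mem' := ⟨0, zero_mem _, 0, zero_mem _, by simp⟩
      add_mem' := by
        rintro _ _ ⟨a, ha, b, hb, rfl⟩ ⟨a', ha', b', hb', rfl⟩
        refine ⟨a + a', add_mem ha ha', b + b', add_mem hb hb', ?_⟩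
        rw [Matrix.add_mul, Matrix.mul_add]
        abel
      smul_mem' := by
        rintro r _ ⟨a, ha, b, hb, rfl⟩
        refine ⟨r • a, Submodule.smul_mem _ _ ha, r • b, Submodule.smul_mem _ _ hb, ?_⟩
        rw [Matrix.smul_mul, Matrix.mul_smul, smul_sub] }
  have hle : Γ.matLam K src snk ≤ N' := by
    refine le_of_forall_exists_add_X_smul fun h hh => ?_
    obtain ⟨α, β, hαβ⟩ := hR (lin ⟨h, hh⟩)
    obtain ⟨⟨a, ha⟩, rfl⟩ := lin_surjective α
    obtain ⟨⟨b, hb⟩, rfl⟩ := lin_surjective β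
    rw [← lin_mul, ← lin_mul, ← map_add, ← sub_eq_zero, ← map_sub, lin_eq_zero_iff] at hαβ
    obtain ⟨B, hB, e⟩ := hαβ
    refine ⟨a * f + f * b, ⟨a, ha, -b, neg_mem hb, by rw [Matrix.mul_neg, sub_neg_eq_add]⟩, B, hB, ?_⟩
    rw [← e]
    change h = a * f + f * b + (h - (a * f + f * b))
    abel
  exact fun h hh => hle hh

theorem src_ne_snk (hf : f ∈ Γ.matLam K src snk)
    (hrad : ∀ p q, src p = snk q → ∀ c, X ∣ f p q c)
    (hrig : ∀ h ∈ Γ.matLam K src snk, ∃ a ∈ Γ.matLam K src src, ∃ b ∈ Γ.matLam K snk snk,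
      h = a * f - f * b) (p : ι) (q : κ) : src p ≠ snk q := by
  have := Fintype.ofFinite V
  intro hpq
  have h1 : Γ.oneAt K (src p) ∈ Γ.Lam K (src p) (snk q) := by
    rw [← hpq]; exact oneAt_mem _
  obtain ⟨a, ha, b, hb, h⟩ := hrig _ (single_mem_matLam (src := src) (snk := snk) h1)
  obtain ⟨d, hd⟩ := exists_dart_edge (src p)
  have h2 := congrFun (congrFun (congrFun h p) q) d.fst
  rw [Matrix.single_apply_same, oneAt, if_pos (by rw [← hd]; exact inc_edge_fst d), Matrix.sub_apply,
    Pi.sub_apply, Matrix.mul_apply, Matrix.mul_apply, Finset.sum_apply, Finset.sum_apply] at h2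
  have h3 : X ∣ (1 : K⟦X⟧) := by
    rw [h2]
    refine dvd_sub (Finset.dvd_sum fun r _ => ?_) (Finset.dvd_sum fun r _ => ?_)
    · by_cases hr : src r = snk q
      · exact Dvd.dvd.mul_left (hrad r q hr _) _
      · have h4 := hf r q
        rw [← hpq] at h4
        exact X_dvd_mul_of_ne (fun e => hr (e.symm.trans hpq)) (ha p r) h4 _
    · by_cases hr : src p = snk r
      · exact Dvd.dvd.mul_right (hrad p r hr _) _
      · have h4 := hb r q
        rw [← hpq] at h4
        exact X_dvd_mul_of_ne hr (hf p r) h4 _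
  rw [PowerSeries.X_dvd_iff, map_one] at h3
  exact one_ne_zero h3

theorem exists_theta_ne_zero (hf : f ∈ Γ.matLam K src snk)
    (hs₀ : IsSuperfluous (LinearMap.ker (lin ⟨f, hf⟩))) (p : ι) :
    ∃ q, Γ.theta K (src p) (snk q) ⟨f p q, hf p q⟩ ≠ 0 := by
  have := Fintype.ofFinite V
  by_contra h
  push Not at h
  have hA := single_mem_matLam (src := src) (snk := src) (oneAt_mem (K := K) (src p))
  have h1 : LinearMap.range (lin ⟨_, hA⟩) ≤ LinearMap.ker (lin ⟨f, hf⟩) := by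
    rw [LinearMap.range_le_ker_iff, ← lin_mul, lin_eq_zero_iff]
    refine exists_X_smul_matLam fun p' q => ?_
    change ∃ y ∈ Γ.Lam K (src p') (snk q), (Matrix.single p p (Γ.oneAt K (src p)) * f) p' q =
      (X : K⟦X⟧) • y
    by_cases hp : p' = p
    · subst hp
      rw [Matrix.single_mul_apply_same, oneAt_mul (hf p' q)]
      exact (theta_eq_zero_iff ⟨f p' q, hf p' q⟩).1 (h q)
    · rw [Matrix.single_mul_apply_of_ne _ _ _ _ _ hp]
      exact ⟨0, zero_mem _, (smul_zero _).symm⟩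
  obtain ⟨d, hd⟩ := exists_dart_edge (src p)
  have h2 := X_dvd_of_isSuperfluous _ hs₀ h1 (rfl : src p = src p) d.fst
  change X ∣ (Matrix.single p p (Γ.oneAt K (src p)) p p) d.fst at h2
  rw [Matrix.single_apply_same, oneAt, if_pos (by rw [← hd]; exact inc_edge_fst d),
    PowerSeries.X_dvd_iff, map_one] at h2
  exact one_ne_zero h2

theorem finrank_matLam [Fintype V] (src : ι → Γ.Edge) (j : Γ.Edge) :
    Module.finrank K⟦X⟧ (Γ.matLam K src (fun _ : Unit => j)) =
      ∑ c ∈ Finset.univ.filter (fun c => Γ.Inc j c),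
        (Finset.univ.filter (fun p => Γ.Inc (src p) c)).card := by
  let S := Σ c : {c // Γ.Inc j c}, {p // Γ.Inc (src p) c.1}
  have hS : Module.finrank K⟦X⟧ (S → K⟦X⟧) = ∑ c ∈ Finset.univ.filter (fun c => Γ.Inc j c),
        (Finset.univ.filter (fun p => Γ.Inc (src p) c)).card := by
    rw [Module.finrank_fintype_fun_eq_card, Fintype.card_sigma]
    simp only [Fintype.card_subtype]
    exact (Finset.sum_subtype _ (fun c => by simp)
      (fun c => (Finset.univ.filter (fun p => Γ.Inc (src p) c)).card)).symm
  rw [← hS]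
  apply le_antisymm
  · let F : Γ.matLam K src (fun _ : Unit => j) →ₗ[K⟦X⟧] (S → K⟦X⟧) :=
      { toFun := fun A s => A.1 s.2.1 () s.1.1
        map_add' := fun _ _ => rfl
        map_smul' := fun _ _ => rfl }
    refine LinearMap.finrank_le_finrank_of_injective (f := F) ?_
    rw [injective_iff_map_eq_zero]
    intro A hA
    apply Subtype.ext
    ext1 p q
    funext c
    by_cases h : Γ.Inc (src p) c ∧ Γ.Inc j c
    · exact congrFun hA ⟨⟨c, h.2⟩, ⟨p, h.1⟩⟩
    · exact (A.2 p q).1 c h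
  · let G : (S → K⟦X⟧) → ι → V → K⟦X⟧ := fun g p c =>
      if h : Γ.Inc (src p) c ∧ Γ.Inc j c then X * g ⟨⟨c, h.2⟩, ⟨p, h.1⟩⟩ else 0
    have hG : ∀ g p c (h : Γ.Inc (src p) c ∧ Γ.Inc j c), G g p c = X * g ⟨⟨c, h.2⟩, ⟨p, h.1⟩⟩ :=
      fun g p c h => dif_pos h
    have hG' : ∀ g p c, ¬ (Γ.Inc (src p) c ∧ Γ.Inc j c) → G g p c = 0 := fun g p c h => dif_neg h
    have hd : ∀ g p c, X ∣ G g p c := by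
      intro g p c
      by_cases h : Γ.Inc (src p) c ∧ Γ.Inc j c
      · rw [hG g p c h]; exact dvd_mul_right _ _
      · rw [hG' g p c h]; exact dvd_zero _
    let F : (S → K⟦X⟧) →ₗ[K⟦X⟧] Γ.matLam K src (fun _ : Unit => j) :=
      { toFun := fun g => ⟨Matrix.of fun p _ => G g p, fun p _ =>
          ⟨hG' g p, fun c _ => hd g p c, fun _ c c' _ _ => dvd_sub (hd g p c) (hd g p c')⟩⟩
        map_add' := fun g g' => by
          apply Subtype.ext
          ext1 p q
          funext c
          change G (g + g') p c = G g p c + G g' p c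
          by_cases h : Γ.Inc (src p) c ∧ Γ.Inc j c
          · rw [hG _ p c h, hG _ p c h, hG _ p c h, Pi.add_apply, mul_add]
          · rw [hG' _ p c h, hG' _ p c h, hG' _ p c h, add_zero]
        map_smul' := fun r g => by
          apply Subtype.ext
          ext1 p q
          funext c
          change G (r • g) p c = r * G g p c
          by_cases h : Γ.Inc (src p) c ∧ Γ.Inc j c
          · rw [hG _ p c h, hG _ p c h, Pi.smul_apply, smul_eq_mul, mul_left_comm]
          · rw [hG' _ p c h, hG' _ p c h, mul_zero] }
    refine LinearMap.finrank_le_finrank_of_injective (f := F) ?_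
    rw [injective_iff_map_eq_zero]
    intro g hg
    funext s
    have h1 : G g s.2.1 s.1.1 = 0 :=
      congrFun (congrFun (congrFun (congrArg Subtype.val hg) s.2.1) ()) s.1.1
    rw [hG _ _ _ ⟨s.2.2, s.1.2⟩] at h1
    exact (mul_eq_zero.1 h1).resolve_left PowerSeries.X_ne_zero

/-- Suppose that no nonzero map to `A e_j` vanishes on the range of `f`. Then all maps to `A e_j`
factor through `f` if and only if certain numbers of sources and sinks coincide. -/
theorem card_le_and_factor_iff [Fintype V] (hf : f ∈ Γ.matLam K src snk) (j : Γ.Edge)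
    (hj : ∀ s : (∀ q, Γ.Ae K (snk q)) →ₗ[Γ.Alg K] Γ.Ae K j, s ∘ₗ lin ⟨f, hf⟩ = 0 → s = 0) :
    (∑ c ∈ Finset.univ.filter (fun c => Γ.Inc j c),
        (Finset.univ.filter (fun q => Γ.Inc (snk q) c)).card ≤
      ∑ c ∈ Finset.univ.filter (fun c => Γ.Inc j c),
        (Finset.univ.filter (fun p => Γ.Inc (src p) c)).card) ∧
    ((∀ g : (∀ p, Γ.Ae K (src p)) →ₗ[Γ.Alg K] Γ.Ae K j,
        ∃ s : (∀ q, Γ.Ae K (snk q)) →ₗ[Γ.Alg K] Γ.Ae K j, s ∘ₗ lin ⟨f, hf⟩ = g) ↔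
      ∑ c ∈ Finset.univ.filter (fun c => Γ.Inc j c),
        (Finset.univ.filter (fun q => Γ.Inc (snk q) c)).card =
      ∑ c ∈ Finset.univ.filter (fun c => Γ.Inc j c),
        (Finset.univ.filter (fun p => Γ.Inc (src p) c)).card) := by
  let F : Γ.matLam K snk (fun _ : Unit => j) →ₗ[K⟦X⟧] Γ.matLam K src (fun _ : Unit => j) :=
    { toFun := fun s => ⟨f * s.1, mul_mem_matLam hf s.2⟩
      map_add' := fun s s' => Subtype.ext (Matrix.mul_add _ _ _)
      map_smul' := fun r s => Subtype.ext (Matrix.mul_smul _ _ _) }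
  let E : (∀ _ : Unit, Γ.Ae K j) ≃ₗ[Γ.Alg K] Γ.Ae K j := LinearEquiv.funUnique Unit _ _
  have hlin : ∀ s, lin (F s) = lin s ∘ₗ lin ⟨f, hf⟩ := fun s => lin_mul hf s.2
  have key := finrank_le_and_surjective_iff F (fun s y hy => by
    have h1 : lin (F s) = 0 := (lin_eq_zero_iff _).2 ⟨y.1, y.2, by rw [hy]; rfl⟩
    rw [hlin] at h1
    have h2 := hj (E.toLinearMap ∘ₗ lin s) (by rw [LinearMap.comp_assoc, h1, LinearMap.comp_zero])
    have h3 : lin s = 0 := by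
      refine LinearMap.ext fun x => E.injective ?_
      exact (LinearMap.congr_fun h2 x).trans (map_zero E).symm
    obtain ⟨B, hB, h4⟩ := (lin_eq_zero_iff s).1 h3
    exact ⟨⟨B, hB⟩, Subtype.ext h4⟩)
  rw [finrank_matLam, finrank_matLam] at key
  refine ⟨key.1, Iff.trans ?_ key.2⟩
  constructor
  · intro h g
    obtain ⟨s, hs⟩ := h (E.toLinearMap ∘ₗ lin g)
    obtain ⟨s', hs'⟩ := lin_surjective (snk := fun _ : Unit => j) (E.symm.toLinearMap ∘ₗ s)
    have h1 : lin (g - F s') = 0 := by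
      rw [map_sub, hlin, hs', LinearMap.comp_assoc, hs, ← LinearMap.comp_assoc, sub_eq_zero]
      refine LinearMap.ext fun x => ?_
      exact (E.symm_apply_apply _).symm
    obtain ⟨B, hB, h2⟩ := (lin_eq_zero_iff _).1 h1
    refine ⟨s', ⟨B, hB⟩, ?_⟩
    rw [← sub_eq_iff_eq_add']
    exact Subtype.ext h2
  · intro h g
    obtain ⟨g', hg'⟩ := lin_surjective (snk := fun _ : Unit => j) (E.symm.toLinearMap ∘ₗ g)
    obtain ⟨s, y, hsy⟩ := h g'
    refine ⟨E.toLinearMap ∘ₗ lin s, ?_⟩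
    have h1 : lin (g' - F s) = 0 := (lin_eq_zero_iff _).2 ⟨y.1, y.2, by
      rw [hsy, add_sub_cancel_left]; rfl⟩
    rw [map_sub, sub_eq_zero, hlin, hg'] at h1
    rw [LinearMap.comp_assoc, ← h1]
    refine LinearMap.ext fun x => ?_
    exact E.apply_symm_apply _

end BrauerTree

namespace BrauerTree

open Classical

variable {V : Type v} [Finite V] {Γ : BrauerTree V}

theorem sgn_ne_zero (c : V) : Γ.sgn c ≠ 0 :=
  left_ne_zero_of_mul (sgn_mul_self c ▸ one_ne_zero)

variable (Γ) in
/-- The vertices of the tree that lie on the same side of the edge of `d` as `d.fst`. -/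
def side (d : Γ.Arrow) : Set V := {x | (Γ.graph.deleteEdges {d.edge}).Reachable d.fst x}

theorem fst_mem_side (d : Γ.Arrow) : d.fst ∈ Γ.side d := SimpleGraph.Reachable.refl _

theorem snd_notMem_side (d : Γ.Arrow) : d.snd ∉ Γ.side d :=
  SimpleGraph.isAcyclic_iff_forall_isBridge.1 Γ.isTree.isAcyclic d.edge_mem

theorem mem_side_of_mem {d d' : Γ.Arrow} (h : Γ.edge d' ≠ Γ.edge d) (h' : d'.fst ∈ Γ.side d) :
    d'.snd ∈ Γ.side d := by
  refine SimpleGraph.Reachable.trans h' (SimpleGraph.Adj.reachable ?_)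
  rw [SimpleGraph.deleteEdges_adj]
  exact ⟨d'.adj, fun h'' => h (Subtype.ext h'')⟩

theorem mem_side_iff {d d' : Γ.Arrow} (h : Γ.edge d' ≠ Γ.edge d) :
    d'.fst ∈ Γ.side d ↔ d'.snd ∈ Γ.side d :=
  ⟨mem_side_of_mem h, mem_side_of_mem (d' := d'.symm) (by rwa [edge_symm])⟩

theorem sum_filter_inc [Fintype V] (S : Set V) (d : Γ.Arrow) :
    ∑ x ∈ Finset.univ.filter (fun x => x ∈ S ∧ Γ.Inc (Γ.edge d) x), Γ.sgn x =
      (if d.fst ∈ S then Γ.sgn d.fst else 0) + if d.snd ∈ S then Γ.sgn d.snd else 0 := by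
  rw [Finset.sum_filter, ← Finset.sum_subset (Finset.subset_univ {d.fst, d.snd}),
    Finset.sum_pair d.fst_ne_snd]
  · congr 1
    · simp only [inc_edge_fst, and_true]
    · simp only [inc_edge_snd, and_true]
  · intro x _ hx
    refine if_neg fun h => hx ?_
    rw [Finset.mem_insert, Finset.mem_singleton]
    exact inc_edge_iff.1 h.2

theorem sum_side [Fintype V] (d : Γ.Arrow) (p : Γ.Edge) :
    ∑ x ∈ Finset.univ.filter (fun x => x ∈ Γ.side d ∧ Γ.Inc p x), Γ.sgn x =
      if p = Γ.edge d then Γ.sgn d.fst else 0 := by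
  by_cases hp : p = Γ.edge d
  · subst hp
    rw [sum_filter_inc, if_pos (fst_mem_side d), if_neg (snd_notMem_side d), if_pos rfl, add_zero]
  · obtain ⟨d', rfl⟩ := exists_dart_edge p
    rw [sum_filter_inc, if_neg hp]
    have h := mem_side_iff hp
    by_cases h' : d'.fst ∈ Γ.side d
    · rw [if_pos h', if_pos (h.1 h'), sgn_fst d']
      ring
    · rw [if_neg h', if_neg fun h'' => h' (h.2 h''), add_zero]

variable {ι κ : Type} [Fintype ι] [Fintype κ]

theorem sum_mul_card [Fintype V] (S : Set V) (src : ι → Γ.Edge) :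
    ∑ x ∈ Finset.univ.filter (fun x => x ∈ S),
        Γ.sgn x * ((Finset.univ.filter (fun p => Γ.Inc (src p) x)).card : ℤ) =
      ∑ p, ∑ x ∈ Finset.univ.filter (fun x => x ∈ S ∧ Γ.Inc (src p) x), Γ.sgn x := by
  have h : ∀ x, Γ.sgn x * ((Finset.univ.filter (fun p => Γ.Inc (src p) x)).card : ℤ) =
      ∑ p, if Γ.Inc (src p) x then Γ.sgn x else 0 := by
    intro x
    rw [← Finset.sum_filter, Finset.sum_const, nsmul_eq_mul, mul_comm]
  simp only [h]
  rw [Finset.sum_comm]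
  refine Finset.sum_congr rfl fun p _ => ?_
  rw [← Finset.sum_filter, Finset.filter_filter]

/-- The number of sources minus the number of sinks at a vertex of the tree. -/
noncomputable def excess (src : ι → Γ.Edge) (snk : κ → Γ.Edge) (c : V) : ℤ :=
  ((Finset.univ.filter (fun p => Γ.Inc (src p) c)).card : ℤ) -
    (Finset.univ.filter (fun q => Γ.Inc (snk q) c)).card

variable {src : ι → Γ.Edge} {snk : κ → Γ.Edge}

theorem sum_sgn_mul_excess [Fintype V] (src : ι → Γ.Edge) (snk : κ → Γ.Edge) :
    ∑ x, Γ.sgn x * excess src snk x = 0 := by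
  obtain ⟨S, hS⟩ : ∃ S : Set V, ∀ x, x ∈ S := ⟨Set.univ, Set.mem_univ⟩
  have h : ∀ p : Γ.Edge,
      ∑ x ∈ Finset.univ.filter (fun x => x ∈ S ∧ Γ.Inc p x), Γ.sgn x = 0 := by
    intro p
    obtain ⟨d, rfl⟩ := exists_dart_edge p
    rw [sum_filter_inc, if_pos (hS _), if_pos (hS _), sgn_fst d]
    ring
  have h1 := sum_mul_card S src
  have h2 := sum_mul_card S snk
  simp only [h, Finset.sum_const_zero] at h1 h2
  rw [Finset.filter_true_of_mem fun x _ => hS x] at h1 h2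
  simp only [excess, mul_sub, Finset.sum_sub_distrib, h1, h2, sub_self]

theorem sum_side_excess [Fintype V] (src : ι → Γ.Edge) (snk : κ → Γ.Edge) (d : Γ.Arrow) :
    ∑ x ∈ Finset.univ.filter (fun x => x ∈ Γ.side d), Γ.sgn x * excess src snk x =
      Γ.sgn d.fst * (((Finset.univ.filter (fun p => src p = Γ.edge d)).card : ℤ) -
        (Finset.univ.filter (fun q => snk q = Γ.edge d)).card) := by
  have h1 := sum_mul_card (Γ.side d) src
  have h2 := sum_mul_card (Γ.side d) snk
  simp only [sum_side, ← Finset.sum_filter, Finset.sum_const, nsmul_eq_mul] at h1 h2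
  simp only [excess, mul_sub, Finset.sum_sub_distrib, h1, h2]
  ring

/-- The excess is `1` at `c₀` and vanishes away from `c₀` and `c₁`. -/
structure IsTwoPoint (src : ι → Γ.Edge) (snk : κ → Γ.Edge) (c₀ c₁ : V) : Prop where
  ne : c₀ ≠ c₁
  eq_one : excess src snk c₀ = 1
  eq_zero : ∀ c, c ≠ c₀ → c ≠ c₁ → excess src snk c = 0

namespace IsTwoPoint

variable {c₀ c₁ : V}

theorem sgn_mul_excess (h : IsTwoPoint src snk c₀ c₁) :
    Γ.sgn c₁ * excess src snk c₁ = - Γ.sgn c₀ := by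
  have := Fintype.ofFinite V
  have h1 := sum_sgn_mul_excess src snk
  rw [← Finset.sum_subset (Finset.subset_univ {c₀, c₁}), Finset.sum_pair h.ne, h.eq_one] at h1
  · linarith
  · intro x _ hx
    rw [Finset.mem_insert, Finset.mem_singleton, not_or] at hx
    rw [h.eq_zero x hx.1 hx.2, mul_zero]

theorem sgn_mul_card (h : IsTwoPoint src snk c₀ c₁) (d : Γ.Arrow) :
    Γ.sgn d.fst * (((Finset.univ.filter (fun p => src p = Γ.edge d)).card : ℤ) -
        (Finset.univ.filter (fun q => snk q = Γ.edge d)).card) =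
      (if c₀ ∈ Γ.side d then Γ.sgn c₀ else 0) - if c₁ ∈ Γ.side d then Γ.sgn c₀ else 0 := by
  have := Fintype.ofFinite V
  rw [← sum_side_excess, Finset.sum_filter, ← Finset.sum_subset (Finset.subset_univ {c₀, c₁}),
    Finset.sum_pair h.ne, h.eq_one, h.sgn_mul_excess]
  · split_ifs <;> ring
  · intro x _ hx
    rw [Finset.mem_insert, Finset.mem_singleton, not_or] at hx
    rw [h.eq_zero x hx.1 hx.2, mul_zero, ite_self]

theorem card_of_inc (h : IsTwoPoint src snk c₀ c₁) {p : Γ.Edge} (hp : Γ.Inc p c₀) :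
    ((Finset.univ.filter (fun i => src i = p)).card : ℤ) -
      (Finset.univ.filter (fun q => snk q = p)).card = 0 ∨
    ((Finset.univ.filter (fun i => src i = p)).card : ℤ) -
      (Finset.univ.filter (fun q => snk q = p)).card = 1 := by
  obtain ⟨d, rfl, rfl⟩ := hp.exists_dart
  have h1 := h.sgn_mul_card d
  rw [if_pos (fst_mem_side d)] at h1
  have h0 := sgn_ne_zero (Γ := Γ) d.fst
  split_ifs at h1
  · left
    rw [sub_self] at h1
    exact (mul_eq_zero.1 h1).resolve_left h0
  · right
    apply mul_left_cancel₀ h0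
    rw [h1]
    ring

theorem card_of_adj (h : IsTwoPoint src snk c₀ c₁) {p q : Γ.Edge} {c : V} (hc : c ≠ c₀)
    (hp₀ : Γ.Inc p c₀) (hp : Γ.Inc p c)
    (hq : Γ.Inc q c) (hpq : q ≠ p) :
    ((Finset.univ.filter (fun i => src i = q)).card : ℤ) ≤
      (Finset.univ.filter (fun i => snk i = q)).card := by
  obtain ⟨d, rfl, rfl⟩ := hq.exists_dart
  have h1 := h.sgn_mul_card d
  have h3 : c₀ ∈ Γ.side d := by
    obtain ⟨d', hd', rfl⟩ := hp.exists_dart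
    have h4 : d'.snd = c₀ := by
      rcases inc_edge_iff.1 hp₀ with h' | h'
      · exact absurd (hd'.symm.trans h'.symm) hc
      · exact h'.symm
    rw [← h4]
    refine mem_side_of_mem hpq.symm ?_
    rw [hd']
    exact fst_mem_side d
  rw [if_pos h3] at h1
  have h0 := sgn_ne_zero (Γ := Γ) d.fst
  have h6 : Γ.sgn c₀ = Γ.sgn d.fst * (-1) := by rw [sgn_eq_neg hc hp hp₀, neg_mul_neg, mul_one]
  rw [h6] at h1
  split_ifs at h1
  · rw [sub_self] at h1
    exact (sub_eq_zero.1 ((mul_eq_zero.1 h1).resolve_left h0)).le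
  · rw [sub_zero] at h1
    have := mul_left_cancel₀ h0 h1
    omega

theorem excess_eq_of_inc (h : IsTwoPoint src snk c₀ c₁) {p : Γ.Edge} (hp₀ : Γ.Inc p c₀)
    (hp : Γ.Inc p c₁) :
    excess src snk c₁ = 1 := by
  have h1 := h.sgn_mul_excess
  rw [sgn_eq_neg h.ne hp₀ hp, neg_neg] at h1
  exact mul_left_cancel₀ (sgn_ne_zero c₁) (h1.trans (mul_one _).symm)

theorem not_inc_snk (h : IsTwoPoint src snk c₀ c₁)
    (hdis : ∀ p q, src p ≠ snk q) (q : κ) : ¬ Γ.Inc (snk q) c₀ := by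
  intro hq
  have h1 : (Finset.univ.filter (fun p => src p = snk q)).card = 0 := by
    rw [Finset.card_eq_zero, Finset.filter_eq_empty_iff]
    exact fun p _ => hdis p q
  have h2 : 0 < (Finset.univ.filter (fun q' => snk q' = snk q)).card :=
    Finset.card_pos.2 ⟨q, by simp⟩
  rcases h.card_of_inc hq with h3 | h3 <;> omega

theorem existsUnique_src (h : IsTwoPoint src snk c₀ c₁)
    (hdis : ∀ p q, src p ≠ snk q) : ∃! p, Γ.Inc (src p) c₀ := by
  have h1 := h.eq_one
  have h2 : (Finset.univ.filter (fun q => Γ.Inc (snk q) c₀)).card = 0 := by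
    rw [Finset.card_eq_zero, Finset.filter_eq_empty_iff]
    exact fun q _ => h.not_inc_snk hdis q
  rw [excess, h2, Nat.cast_zero, sub_zero] at h1
  obtain ⟨p, hp⟩ := Finset.card_eq_one.1 (by exact_mod_cast h1 :
    (Finset.univ.filter (fun p => Γ.Inc (src p) c₀)).card = 1)
  refine ⟨p, ?_, fun p' hp' => ?_⟩
  · have : p ∈ Finset.univ.filter (fun p => Γ.Inc (src p) c₀) := by rw [hp]; simp
    simpa using this
  · have : p' ∈ Finset.univ.filter (fun p => Γ.Inc (src p) c₀) := by simpa using hp'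
    rw [hp] at this
    simpa using this

/-- A source at a neighbour of `c₀` is the edge that joins it to `c₀`. -/
theorem src_eq_of_adj (h : IsTwoPoint src snk c₀ c₁)
    (hdis : ∀ p q, src p ≠ snk q) {p : Γ.Edge} {c : V} (hc : c ≠ c₀)
    (hp₀ : Γ.Inc p c₀) (hp : Γ.Inc p c)
    {i : ι} (hi : Γ.Inc (src i) c) : src i = p := by
  by_contra hne
  have h1 := h.card_of_adj hc hp₀ hp hi hne
  have h2 : (Finset.univ.filter (fun q => snk q = src i)).card = 0 := by
    rw [Finset.card_eq_zero, Finset.filter_eq_empty_iff]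
    exact fun q _ e => hdis i q e.symm
  have h3 : 0 < (Finset.univ.filter (fun i' => src i' = src i)).card :=
    Finset.card_pos.2 ⟨i, by simp⟩
  omega

/-- There is at most one sink at the other end of a source at `c₀`. -/
theorem snk_unique (h : IsTwoPoint src snk c₀ c₁)
    (hdis : ∀ p q, src p ≠ snk q) {i : ι} {c : V} (hc : c ≠ c₀)
    (hi₀ : Γ.Inc (src i) c₀) (hi : Γ.Inc (src i) c)
    {q q' : κ} (hq : Γ.Inc (snk q) c) (hq' : Γ.Inc (snk q') c) : q = q' := by
  have h1 : 0 ≤ excess src snk c := by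
    by_cases hc₁ : c = c₁
    · subst hc₁
      rw [h.excess_eq_of_inc hi₀ hi]
      exact zero_le_one
    · rw [h.eq_zero c hc hc₁]
  obtain ⟨p, hp, hpu⟩ := h.existsUnique_src hdis
  have h2 : (Finset.univ.filter (fun p => Γ.Inc (src p) c)).card ≤ 1 := by
    refine Finset.card_le_one.2 fun a ha b hb => ?_
    have key : ∀ a, Γ.Inc (src a) c → a = p := fun a ha => hpu a (by
      change Γ.Inc (src a) c₀
      rw [h.src_eq_of_adj hdis hc hi₀ hi ha]; exact hi₀)
    rw [key a (by simpa using ha), key b (by simpa using hb)]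
  have h3 : (Finset.univ.filter (fun q => Γ.Inc (snk q) c)).card ≤ 1 := by
    rw [excess] at h1
    omega
  exact Finset.card_le_one.1 h3 q (by simpa using hq) q' (by simpa using hq')

end IsTwoPoint

end BrauerTree

theorem IsSuperfluous.map_equiv {R : Type u} [Ring R] {M M' : Type*} [AddCommGroup M]
    [AddCommGroup M'] [Module R M] [Module R M'] {N : Submodule R M} (hN : IsSuperfluous N)
    (e : M ≃ₗ[R] M') : IsSuperfluous (N.map e.toLinearMap) := by
  intro L hL
  have h : N ⊔ L.comap e.toLinearMap = ⊤ := by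
    apply Submodule.map_injective_of_injective e.injective
    rw [Submodule.map_sup, Submodule.map_comap_eq_of_surjective e.surjective, hL, Submodule.map_top,
      LinearEquiv.range]
  rw [← Submodule.map_comap_eq_of_surjective e.surjective L, hN _ h, Submodule.map_top,
    LinearEquiv.range]

namespace BrauerTree

open PowerSeries Classical

variable {V : Type v} [Finite V] {Γ : BrauerTree V} {K : Type u} [Field K]

theorem exists_isTwoPoint {ι κ : Type} [Fintype ι] [Fintype κ] {src : ι → Γ.Edge}
    {snk : κ → Γ.Edge}
    (hN : ∀ c c', c ≠ c' → excess src snk c ≠ 0 → excess src snk c' ≠ 0 →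
      excess src snk c < 2 ∧ ∀ c'', c'' ≠ c → c'' ≠ c' → excess src snk c'' = 0)
    {c : V} (hc : 0 < excess src snk c) : ∃ c₁, IsTwoPoint src snk c c₁ := by
  have := Fintype.ofFinite V
  obtain ⟨c₁, hne, h₁⟩ : ∃ c₁, c ≠ c₁ ∧ excess src snk c₁ ≠ 0 := by
    by_contra! h
    have h1 := sum_sgn_mul_excess src snk
    rw [Finset.sum_eq_single c (fun c' _ hc' => by rw [h c' hc'.symm, mul_zero]) (by simp)] at h1
    exact mul_ne_zero (sgn_ne_zero c) hc.ne' h1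
  obtain ⟨h2, h3⟩ := hN c c₁ hne hc.ne' h₁
  exact ⟨c₁, hne, by omega, h3⟩

theorem OnPath.exists_inc {i j x : Γ.Edge} (h : Γ.OnPath i j x) :
    ∃ c, Γ.Inc i c ∧ Γ.Inc j c ∧ Γ.Inc x c := by
  obtain ⟨d, k, rfl, rfl, -, l, -, rfl⟩ := h
  refine ⟨d.fst, inc_edge_fst d, ?_, ?_⟩
  · rw [← iterate_fst d k]
    exact inc_edge_fst _
  · rw [← iterate_fst d l]
    exact inc_edge_fst _

theorem sum_card_eq [Fintype V] {ι : Type} [Fintype ι] (src : ι → Γ.Edge) (d : Γ.Arrow) :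
    ∑ c ∈ Finset.univ.filter (fun c => Γ.Inc (Γ.edge d) c),
        (Finset.univ.filter (fun p => Γ.Inc (src p) c)).card =
      (Finset.univ.filter (fun p => Γ.Inc (src p) d.fst)).card +
        (Finset.univ.filter (fun p => Γ.Inc (src p) d.snd)).card := by
  have h : Finset.univ.filter (fun c => Γ.Inc (Γ.edge d) c) = {d.fst, d.snd} := by
    ext c
    simp [inc_edge_iff]
  rw [h, Finset.sum_pair d.fst_ne_snd]

namespace Decomposition

variable {T : CochainComplex (Γ.Mod K) ℤ} (D : Γ.Decomposition K T)

/-- The combinatorial part of the main result: a degree-one source that is the only vertex of the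
diagram on a cycle through `j` exists if and only if there are more sources than sinks around `j`. -/
theorem sum_card_lt_iff [Fintype V] (hdis : ∀ p q, D.src p ≠ D.snk q)
    (hrow : ∀ p, ∃ q, D.component p q ≠ 0)
    (hcomp : ∀ p q, D.component p q ≠ 0 → ∃ c, Γ.Inc (D.src p) c ∧ Γ.Inc (D.snk q) c)
    (hN : ∀ c c', c ≠ c' → excess D.src D.snk c ≠ 0 → excess D.src D.snk c' ≠ 0 →
      excess D.src D.snk c < 2 ∧ ∀ c'', c'' ≠ c → c'' ≠ c' → excess D.src D.snk c'' = 0)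
    (j : Γ.Edge) :
    ∑ c ∈ Finset.univ.filter (fun c => Γ.Inc j c),
        (Finset.univ.filter (fun q => Γ.Inc (D.snk q) c)).card <
      ∑ c ∈ Finset.univ.filter (fun c => Γ.Inc j c),
        (Finset.univ.filter (fun p => Γ.Inc (D.src p) c)).card ↔
      ∃ (C : List Γ.Arrow) (i : Γ.Edge), Γ.IsACycle K C ∧ D.IsDegreeOneSource i ∧
        MemCycle i C ∧ MemCycle j C ∧ ∀ x, D.OnDiagram x → MemCycle x C → x = i := by
  have hsum : ∀ d : Γ.Arrow, Γ.edge d = j →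
      ((∑ c ∈ Finset.univ.filter (fun c => Γ.Inc j c),
        (Finset.univ.filter (fun q => Γ.Inc (D.snk q) c)).card <
      ∑ c ∈ Finset.univ.filter (fun c => Γ.Inc j c),
        (Finset.univ.filter (fun p => Γ.Inc (D.src p) c)).card) ↔
      0 < excess D.src D.snk d.fst + excess D.src D.snk d.snd) := by
    rintro d rfl
    rw [sum_card_eq, sum_card_eq, excess, excess]
    omega
  constructor
  · intro hlt
    obtain ⟨c₀, hj, hc₀⟩ : ∃ c₀, Γ.Inc j c₀ ∧ 0 < excess D.src D.snk c₀ := by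
      obtain ⟨d, rfl⟩ := exists_dart_edge j
      have h1 := (hsum d rfl).1 hlt
      rcases lt_or_ge 0 (excess D.src D.snk d.fst) with h2 | h2
      · exact ⟨_, inc_edge_fst d, h2⟩
      · exact ⟨_, inc_edge_snd d, by omega⟩
    obtain ⟨c₁, h⟩ := exists_isTwoPoint hN hc₀
    obtain ⟨p, hp, hpu⟩ := h.existsUnique_src hdis
    obtain ⟨d, rfl, hd⟩ := hj.exists_dart
    refine ⟨Γ.cycleList d, D.src p, isACycle_cycleList d, ⟨p, rfl, ?_⟩, memCycle_cycleList.2 hp,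
      memCycle_cycleList.2 hj, fun x hx hxC => ?_⟩
    · obtain ⟨q, hq⟩ := hrow p
      refine ⟨q, hq, fun q' hq' => ?_⟩
      obtain ⟨c, h1, h2⟩ := hcomp p q hq
      obtain ⟨c', h3, h4⟩ := hcomp p q' hq'
      have hc : c ≠ d.fst := fun e => h.not_inc_snk hdis q (e ▸ h2)
      have hc' : c' ≠ d.fst := fun e => h.not_inc_snk hdis q' (e ▸ h4)
      have hcc : c' = c := by
        obtain ⟨d', hd', hp'⟩ := hp.exists_dart
        rw [← hp'] at h1 h3
        rw [(inc_edge_iff.1 h1).resolve_left (hd' ▸ hc), (inc_edge_iff.1 h3).resolve_left (hd' ▸ hc')]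
      rw [hcc] at h4
      exact h.snk_unique hdis hc hp h1 h4 h2
    · rw [memCycle_cycleList] at hxC
      rcases hx with ⟨p', rfl⟩ | ⟨q, rfl⟩ | ⟨p', q, -, hpath⟩
      · rw [hpu p' hxC]
      · exact absurd hxC (h.not_inc_snk hdis q)
      · obtain ⟨c, h1, h2, h3⟩ := hpath.exists_inc
        have hc : c ≠ d.fst := fun e => h.not_inc_snk hdis q (e ▸ h2)
        have h4 := h.src_eq_of_adj hdis hc hxC h3 h1
        rw [← h4, hpu p' (by change Γ.Inc _ _; rw [h4]; exact hxC)]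
  · rintro ⟨C, i, hC, ⟨p, hpi, -⟩, hi, hj, huniq⟩
    obtain ⟨d₀, rfl⟩ := hC.exists_eq
    rw [memCycle_cycleList] at hi hj
    obtain ⟨d, hd, rfl⟩ := hj.exists_dart
    rw [hsum d rfl]
    rw [← hd] at hi hj
    have hno : (Finset.univ.filter (fun q => Γ.Inc (D.snk q) d.fst)).card = 0 := by
      rw [Finset.card_eq_zero, Finset.filter_eq_empty_iff]
      intro q _ hq
      have := huniq (D.snk q) (Or.inr (Or.inl ⟨q, rfl⟩)) (memCycle_cycleList.2 (hd ▸ hq))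
      exact hdis p q (hpi.trans this.symm)
    have hpos : 0 < (Finset.univ.filter (fun p => Γ.Inc (D.src p) d.fst)).card :=
      Finset.card_pos.2 ⟨p, by simpa [hpi] using hi⟩
    have hc₀ : 0 < excess D.src D.snk d.fst := by
      rw [excess, hno]
      omega
    obtain ⟨c₁, h⟩ := exists_isTwoPoint hN hc₀
    by_cases hc₁ : d.snd = c₁
    · rw [hc₁, h.excess_eq_of_inc (inc_edge_fst d) (hc₁ ▸ inc_edge_snd d)]
      omega
    · rw [h.eq_zero d.snd d.fst_ne_snd.symm hc₁]
      omega

end Decomposition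

end BrauerTree

open PowerSeries BrauerTree in
theorem hom_to_stalk0_nonzero_iff {K : Type u} [Field K] [IsAlgClosed K] {V : Type v} [Finite V]
    (Γ : BrauerTree V) [HasDerivedCategory.{w} (Γ.Mod K)]
    (M : Γ.Mod K) (hM : Indecomposable M) (hMproj : ¬ Module.Projective (Γ.Alg K) M)
    (T : CochainComplex (Γ.Mod K) ℤ) (hT : IsMinimalPresentation T M)
    (D : Γ.Decomposition K T)
    (P : CochainComplex (Γ.Mod K) ℤ) (j : Γ.Edge) (hP : Γ.IsStalkZero K P j)
    (hTP : IsPartialTilting (T ⊞ P)) :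
    HomotopyHomNonzero T P ↔
      ∃ (C : List Γ.Arrow) (i : Γ.Edge), Γ.IsACycle K C ∧ D.IsDegreeOneSource i ∧
        BrauerTree.MemCycle i C ∧ BrauerTree.MemCycle j C ∧
        ∀ x, D.OnDiagram x → BrauerTree.MemCycle x C → x = i := by
  have := Fintype.ofFinite V
  obtain ⟨e⟩ := hP
  obtain ⟨hperf, hzero, π, hπ, hrange, hs₁, hs₀⟩ := hT
  obtain ⟨⟨f, hf⟩, hlin⟩ := lin_surjective
    (D.iso₁.toLinearMap ∘ₗ (T.d 0 1).hom ∘ₗ D.iso₀.symm.toLinearMap)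
  have hcomponent : ∀ p q, D.component p q ≠ 0 ↔
      Γ.theta K (D.src p) (D.snk q) ⟨f p q, hf p q⟩ ≠ 0 := by
    intro p q
    refine not_congr (Iff.trans ?_ (component_eq_zero_iff ⟨f, hf⟩ p q))
    rw [hlin, Decomposition.component, LinearMap.comp_assoc, LinearMap.comp_assoc]
    congr!
  have hsup₀ : IsSuperfluous (LinearMap.ker (lin ⟨f, hf⟩)) := by
    have h : LinearMap.ker (lin ⟨f, hf⟩) =
        (LinearMap.ker (T.d 0 1).hom).map D.iso₀.toLinearMap := by
      rw [hlin, LinearEquiv.ker_comp, LinearMap.ker_comp, Submodule.comap_equiv_eq_map_symm,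
        LinearEquiv.symm_symm]
    rw [h]
    exact hs₀.map_equiv D.iso₀
  have hker₁ : LinearMap.ker (π.hom ∘ₗ D.iso₁.symm.toLinearMap) =
      (LinearMap.ker π.hom).map D.iso₁.toLinearMap := by
    rw [LinearMap.ker_comp, Submodule.comap_equiv_eq_map_symm, LinearEquiv.symm_symm]
  have hsup₁ : IsSuperfluous (LinearMap.ker (π.hom ∘ₗ D.iso₁.symm.toLinearMap)) := by
    rw [hker₁]
    exact hs₁.map_equiv D.iso₁
  have hrange' : LinearMap.range (lin ⟨f, hf⟩) =
      LinearMap.ker (π.hom ∘ₗ D.iso₁.symm.toLinearMap) := by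
    rw [hker₁, ← hrange, hlin, LinearMap.range_comp, LinearMap.range_comp_of_range_eq_top]
    exact LinearEquiv.range _
  have hfst : (biprod.inl : T ⟶ T ⊞ P) ≫ biprod.fst = 𝟙 T := biprod.inl_fst
  have hR := exists_eq_mul_sub_mul hf fun h => by
    obtain ⟨α, β, hαβ⟩ := hTP.exists_homotopy hperf hzero biprod.fst biprod.inl hfst
      (ModuleCat.ofHom (D.iso₁.symm.toLinearMap ∘ₗ h ∘ₗ D.iso₀.toLinearMap))
    refine ⟨D.iso₀.toLinearMap ∘ₗ α.hom ∘ₗ D.iso₀.symm.toLinearMap,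
      D.iso₁.toLinearMap ∘ₗ β.hom ∘ₗ D.iso₁.symm.toLinearMap, ?_⟩
    refine LinearMap.ext fun x => ?_
    have h1 := congrArg D.iso₁ (LinearMap.congr_fun (congrArg ModuleCat.Hom.hom hαβ) (D.iso₀.symm x))
    rw [hlin]
    simpa using h1
  have hrad : ∀ p q, D.src p = D.snk q → ∀ c, X ∣ f p q c := fun p q hpq c =>
    X_dvd_of_isSuperfluous ⟨f, hf⟩ hsup₁ hrange'.le hpq c
  have hdis := src_ne_snk hf hrad hR
  obtain ⟨lam, hlam⟩ := exists_isEigenvalueFunction hf hM _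
    (hπ.comp D.iso₁.symm.surjective) hrange' hsup₁ hsup₀
  have hN : ∀ c c', c ≠ c' → excess D.src D.snk c ≠ 0 → excess D.src D.snk c' ≠ 0 →
      excess D.src D.snk c < 2 ∧ ∀ c'', c'' ≠ c → c'' ≠ c' → excess D.src D.snk c'' = 0 := by
    intro c c' hcc hc hc'
    rw [excess, Ne, sub_eq_zero, Nat.cast_inj] at hc hc'
    obtain ⟨⟨h1, h2⟩, h3⟩ := card_le_of_rigid hf hdis hR lam hlam hcc hc hc'
    refine ⟨by rw [excess]; omega, fun c'' h h' => ?_⟩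
    rw [excess, h3 c'' h h', sub_self]
  have hj : ∀ s : (∀ q, Γ.Ae K (D.snk q)) →ₗ[Γ.Alg K] Γ.Ae K j, s ∘ₗ lin ⟨f, hf⟩ = 0 → s = 0 := by
    intro s hs
    have h1 := hTP.eq_zero_of_comp_eq_zero hperf hzero biprod.fst biprod.inl hfst
      (biprod.snd ≫ e.hom) (e.inv ≫ biprod.inr) (by simp)
      (ModuleCat.ofHom (s ∘ₗ D.iso₁.toLinearMap)) (by
        ext x
        have h2 := LinearMap.congr_fun hs (D.iso₀ x)
        rw [hlin] at h2
        simpa using h2)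
    refine LinearMap.ext fun x => ?_
    simpa using LinearMap.congr_fun (congrArg ModuleCat.Hom.hom h1) (D.iso₁.symm x)
  obtain ⟨hle, hiff⟩ := card_le_and_factor_iff hf j hj
  rw [homotopyHomNonzero_iff hzero e, ← D.sum_card_lt_iff hdis
    (fun p => (exists_theta_ne_zero hf hsup₀ p).imp fun q hq => (hcomponent p q).2 hq)
    (fun p q hpq => by
      by_contra! h
      refine (hcomponent p q).1 hpq ?_
      rw [theta_congr _ (zero_mem _) (funext fun c => (hf p q).1 c fun h' => h c h'.1 h'.2)]
      exact map_zero _) hN j, hle.lt_iff_ne, Ne, ← hiff]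
  refine not_congr ⟨fun h g => ?_, fun h g => ?_⟩
  · obtain ⟨s, hs⟩ := h (ModuleCat.ofHom (g ∘ₗ D.iso₀.toLinearMap))
    refine ⟨s.hom ∘ₗ D.iso₁.symm.toLinearMap, LinearMap.ext fun x => ?_⟩
    rw [hlin]
    simpa using LinearMap.congr_fun (congrArg ModuleCat.Hom.hom hs) (D.iso₀.symm x)
  · obtain ⟨s, hs⟩ := h (g.hom ∘ₗ D.iso₀.symm.toLinearMap)
    refine ⟨ModuleCat.ofHom (s ∘ₗ D.iso₁.toLinearMap), ?_⟩
    ext x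
    rw [hlin] at hs
    simpa using LinearMap.congr_fun hs (D.iso₀ x)
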